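/- arXiv:1003.5388 — 4 statements merged into one kernel-verified Lean document; each statement's English description precedes it below -/
import Mathlib

section
/- Let f : ℕ → ℤ be a completely multiplicative function taking values in {-1, 1}, and let c ∈ [-1, 1) be a real number. If the series ∑_p (c - f(p))/p over primes p converges, then the mean value of f exists and equals 0; that is, (1/x)·∑_{n ≤ x} f(n) → 0 as x → ∞. -/
namespace MV
open Finset
open scoped ArithmeticFunction.vonMangoldt ArithmeticFunction.Moebius

/-- swapping a sum over the hyperbola region -/
lemma sum_swap (N : ℕ) (φ : ℕ → ℕ → ℝ) :
    ∑ d ∈ Icc 1 N, ∑ n ∈ Icc 1 (N / d), φ d n =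
      ∑ m ∈ Icc 1 N, ∑ x ∈ m.divisorsAntidiagonal, φ x.1 x.2 := by
  rw [Finset.sum_sigma', Finset.sum_sigma']
  refine Finset.sum_bij' (fun y _ => ⟨y.1 * y.2, (y.1, y.2)⟩) (fun y _ => ⟨y.2.1, y.2.2⟩) ?_ ?_ ?_ ?_ ?_
  · rintro ⟨d, n⟩ h
    simp only [mem_sigma, mem_Icc, Nat.mem_divisorsAntidiagonal] at h ⊢
    obtain ⟨⟨h1, h2⟩, h3, h4⟩ := h
    have := (Nat.le_div_iff_mul_le (by omega)).1 h4
    have h5 : 1 ≤ d * n := Nat.mul_pos h1 h3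
    refine ⟨⟨h5, by linarith [mul_comm d n]⟩, trivial, by omega⟩
  · rintro ⟨m, ⟨d, n⟩⟩ h
    simp only [mem_sigma, mem_Icc, Nat.mem_divisorsAntidiagonal] at h ⊢
    obtain ⟨⟨h1, h2⟩, h3, h4⟩ := h
    have hd : 1 ≤ d := Nat.pos_of_ne_zero (by rintro rfl; simp at h3; omega)
    have hn : 1 ≤ n := Nat.pos_of_ne_zero (by rintro rfl; simp at h3; omega)
    refine ⟨⟨hd, by nlinarith⟩, hn, (Nat.le_div_iff_mul_le (by omega)).2 (by linarith [mul_comm d n])⟩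
  · rintro ⟨d, n⟩ h; rfl
  · rintro ⟨m, ⟨d, n⟩⟩ h
    simp only [mem_sigma, mem_Icc, Nat.mem_divisorsAntidiagonal] at h ⊢
    obtain ⟨_, h3, _⟩ := h
    subst h3; rfl
  · rintro ⟨d, n⟩ h; rfl

lemma sum_swap' (N : ℕ) (φ : ℕ → ℕ → ℝ) :
    ∑ d ∈ Icc 1 N, ∑ n ∈ Icc 1 (N / d), φ d n =
      ∑ n ∈ Icc 1 N, ∑ d ∈ Icc 1 (N / n), φ d n := by
  rw [sum_swap, sum_swap N (fun n d => φ d n)]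
  refine Finset.sum_congr rfl fun m _ => ?_
  conv_rhs => rw [← Nat.map_swap_divisorsAntidiagonal, Finset.sum_map]
  rfl

noncomputable def P (M : ℕ) : ℝ := ∑ n ∈ Icc 1 M, Λ n

lemma P_le (M : ℕ) : P M ≤ 6 * M := by
  have := Chebyshev.psi_le_const_mul_self (x := M) (by positivity)
  rw [Chebyshev.psi, Nat.floor_natCast] at this
  have h4 : Real.log 4 ≤ 2 := by
    rw [show (4:ℝ) = 2 ^ 2 by norm_num, Real.log_pow]
    have := Real.log_two_lt_d9; push_cast; linarith
  have : P M ≤ (Real.log 4 + 4) * M := by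
    have e : Icc 1 M = Ioc 0 M := rfl
    rw [P, e]; exact this
  have hM : (0:ℝ) ≤ M := by positivity
  nlinarith

lemma P_nonneg (M : ℕ) : 0 ≤ P M := Finset.sum_nonneg fun _ _ => ArithmeticFunction.vonMangoldt_nonneg

noncomputable def LF (M : ℕ) : ℝ := ∑ n ∈ Icc 1 M, Real.log n

lemma LF_succ (M : ℕ) : LF (M+1) = LF M + Real.log (M+1) := by
  simp [LF, Finset.sum_Icc_succ_top]

lemma log_succ_bounds {M : ℕ} (hM : 1 ≤ M) :
    1 / ((M:ℝ)+1) ≤ Real.log (M+1) - Real.log M ∧ Real.log (M+1) - Real.log M ≤ 1 / M := by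
  have h0 : (0:ℝ) < M := by exact_mod_cast hM
  have h1 : (0:ℝ) < (M:ℝ) + 1 := by positivity
  rw [← Real.log_div h1.ne' h0.ne']
  constructor
  · have := Real.one_sub_inv_le_log_of_pos (x := ((M:ℝ)+1)/M) (by positivity)
    have e : 1 - (((M:ℝ)+1)/M)⁻¹ = 1 / (M+1) := by field_simp; ring
    linarith
  · have := Real.log_le_sub_one_of_pos (x := ((M:ℝ)+1)/M) (by positivity)
    have e : ((M:ℝ)+1)/M - 1 = 1/M := by field_simp; ring
    linarith

lemma LF_bounds {M : ℕ} (hM : 1 ≤ M) :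
    M * Real.log M - M ≤ LF M ∧ LF M ≤ M * Real.log M - M + Real.log M + 1 := by
  induction M, hM using Nat.le_induction with
  | base => simp [LF]
  | succ M hM ih =>
    obtain ⟨h1, h2⟩ := log_succ_bounds hM
    have h0 : (0:ℝ) < M := by exact_mod_cast hM
    rw [LF_succ]
    push_cast
    have h3 : M * (Real.log (M+1) - Real.log M) ≤ 1 := by
      calc _ ≤ M * (1 / (M:ℝ)) := by gcongr
        _ = 1 := by field_simp
    have h4 : 1 ≤ (M+1) * (Real.log (M+1) - Real.log M) := by
      calc 1 = ((M:ℝ)+1) * (1 / (M+1)) := by field_simp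
        _ ≤ _ := by gcongr
    constructor <;> nlinarith [ih.1, ih.2]

lemma sum_P (M : ℕ) : ∑ n ∈ Icc 1 M, P (M / n) = LF M := by
  unfold P LF
  rw [sum_swap' M (fun _ m => Λ m)] 
  rw [← sum_swap' M (fun _ m => Λ m), sum_swap M (fun _ m => Λ m)]
  refine Finset.sum_congr rfl fun m _ => ?_
  rw [← ArithmeticFunction.vonMangoldt_sum, Nat.sum_divisorsAntidiagonal' (fun _ y => Λ y)]

lemma harm_bounds {M : ℕ} (hM : 1 ≤ M) :
    Real.log M + Real.eulerMascheroniConstant ≤ ∑ n ∈ Icc 1 M, (1:ℝ) / n ∧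
    ∑ n ∈ Icc 1 M, (1:ℝ) / n ≤ Real.log M + Real.eulerMascheroniConstant + 1 / M := by
  have h1 := Real.eulerMascheroniSeq_lt_eulerMascheroniConstant M
  have h2 := Real.eulerMascheroniConstant_lt_eulerMascheroniSeq' M
  have e : (harmonic M : ℝ) = ∑ n ∈ Icc 1 M, (1:ℝ) / n := by
    rw [harmonic_eq_sum_Icc]; push_cast; simp
  rw [Real.eulerMascheroniSeq, e] at h1
  rw [Real.eulerMascheroniSeq', if_neg (by omega), e] at h2
  have := log_succ_bounds hM
  constructor <;> linarith [this.2]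

noncomputable def kap : ℝ := Real.eulerMascheroniConstant + 1

noncomputable def h (N m : ℕ) : ℝ := P (N / m) - N / m + kap

lemma G_bound {N d : ℕ} (hd : 1 ≤ d) (hdN : d ≤ N) :
    |∑ n ∈ Icc 1 (N / d), h N (d * n)| ≤ 5 * (1 + Real.log (N / d)) := by
  set M := N / d with hMdef
  have hM : 1 ≤ M := (Nat.one_le_div_iff (by omega)).2 hdN
  set x : ℝ := (N:ℝ) / d with hx
  have hd0 : (0:ℝ) < d := by exact_mod_cast hd
  have hM0 : (1:ℝ) ≤ M := by exact_mod_cast hM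
  have hx1 : (M:ℝ) ≤ x := Nat.cast_div_le
  have hx2 : x ≤ M + 1 := by
    rw [hx, div_le_iff₀ hd0]
    have := Nat.lt_div_mul_add (a := N) (b := d) (by omega)
    rw [← hMdef] at this
    have : (N:ℝ) < M * d + d := by exact_mod_cast this
    nlinarith
  have e : ∑ n ∈ Icc 1 M, h N (d * n) = LF M - x * (∑ n ∈ Icc 1 M, (1:ℝ)/n) + kap * M := by
    unfold h
    rw [Finset.sum_add_distrib, Finset.sum_sub_distrib]
    congr 1
    · congr 1
      · rw [← sum_P]
        refine Finset.sum_congr rfl fun n _ => ?_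
        rw [hMdef, Nat.div_div_eq_div_mul]
      · rw [Finset.mul_sum]
        refine Finset.sum_congr rfl fun n _ => ?_
        rw [hx]; push_cast; rw [div_mul_div_comm, mul_one]
    · simp [mul_comm]
  rw [e]
  obtain ⟨a1, a2⟩ := LF_bounds hM
  obtain ⟨b1, b2⟩ := harm_bounds hM
  have g1 := Real.one_half_lt_eulerMascheroniConstant
  have g2 := Real.eulerMascheroniConstant_lt_two_thirds
  have l0 : 0 ≤ Real.log M := Real.log_nonneg hM0
  have l1 : Real.log M ≤ Real.log x := Real.log_le_log (by linarith) hx1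
  set H := ∑ n ∈ Icc 1 M, (1:ℝ)/n
  set g := Real.eulerMascheroniConstant
  have c1 : M * (Real.log M + g) ≤ x * H := by gcongr
  have c2 : x * H ≤ (M+1) * (Real.log M + g + 1 / M) := by gcongr
  have c3 : (M+1) * (Real.log M + g + 1 / M) = M * Real.log M + M * g + 1 + Real.log M + g + 1/M := by
    field_simp; ring
  have c4 : 1 / (M:ℝ) ≤ 1 := by rw [div_le_one (by linarith)]; exact hM0
  rw [abs_le]; unfold kap
  constructor <;> nlinarith

lemma TI (N : ℕ) (hN : 1 ≤ N) :
    ∑ d ∈ Icc 1 N, (μ d : ℝ) * Real.log (N / d) * ∑ n ∈ Icc 1 (N / d), h N (d * n) =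
      h N 1 * Real.log N + ∑ m ∈ Icc 1 N, Λ m * h N m := by
  simp_rw [Finset.mul_sum]
  rw [sum_swap N (fun d n => (μ d : ℝ) * Real.log (N / d) * h N (d * n))]
  have key : ∀ m ∈ Icc 1 N, ∑ x ∈ m.divisorsAntidiagonal,
      (μ x.1 : ℝ) * Real.log (N / x.1) * h N (x.1 * x.2) =
      (if m = 1 then h N 1 * Real.log N else 0) + Λ m * h N m := by
    intro m hm
    have hm1 : m ≠ 0 := by simp at hm; omega
    have : ∀ x ∈ m.divisorsAntidiagonal, (μ x.1 : ℝ) * Real.log (N / x.1) * h N (x.1 * x.2) =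
       ((μ x.1 : ℝ) * Real.log N - (μ x.1 : ℝ) * Real.log x.1) * h N m := by
      intro x hx
      obtain ⟨e, _⟩ := Nat.mem_divisorsAntidiagonal.1 hx
      have : x.1 ≠ 0 := by rintro h0; rw [h0] at e; simp at e; omega
      rw [e, Real.log_div (by positivity) (by exact_mod_cast this)]; ring
    rw [Finset.sum_congr rfl this, ← Finset.sum_mul,
      Nat.sum_divisorsAntidiagonal (fun y _ => (μ y : ℝ) * Real.log N - (μ y : ℝ) * Real.log y),
      Finset.sum_sub_distrib]
    have e1 := ArithmeticFunction.sum_moebius_mul_log_eq (n := m)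
    simp only [ArithmeticFunction.log_apply] at e1
    rw [e1, ← Finset.sum_mul]
    have e2 : (∑ i ∈ m.divisors, (μ i : ℝ)) = if m = 1 then 1 else 0 := by
      have := congrArg (fun z : ArithmeticFunction ℤ => (z m)) ArithmeticFunction.coe_zeta_mul_moebius
      simp only [ArithmeticFunction.coe_zeta_mul_apply, ArithmeticFunction.one_apply] at this
      exact_mod_cast this
    rw [e2]
    split_ifs with h1
    · subst h1; ring
    · ring
  rw [Finset.sum_congr rfl key, Finset.sum_add_distrib, Finset.sum_ite_eq' (Icc 1 N) 1, if_pos (by simp [hN])]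

lemma sum_rpow_half (N : ℕ) : ∑ d ∈ Icc 1 N, √((N:ℝ)/d) ≤ 2 * N := by
  have : ∀ M : ℕ, ∑ d ∈ Icc 1 M, 1 / √(d:ℝ) ≤ 2 * √M := by
    intro M
    induction M with
    | zero => simp
    | succ M ih =>
      rw [Finset.sum_Icc_succ_top (by omega)]
      push_cast
      have a := Real.sqrt_nonneg (M:ℝ)
      have b : 0 < √((M:ℝ)+1) := by positivity
      have e1 := Real.sq_sqrt (show (0:ℝ) ≤ M by positivity)
      have e2 := Real.sq_sqrt (show (0:ℝ) ≤ M + 1 by positivity)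
      have : 1 / √((M:ℝ)+1) ≤ 2 * √((M:ℝ)+1) - 2 * √M := by
        rw [div_le_iff₀ b]; nlinarith [sq_nonneg (√((M:ℝ)+1) - √M)]
      linarith
  have e : ∀ d ∈ Icc 1 N, √((N:ℝ)/d) = √N * (1 / √(d:ℝ)) := by
    intro d _; rw [Real.sqrt_div (by positivity)]; ring
  rw [Finset.sum_congr rfl e, ← Finset.mul_sum]
  calc _ ≤ √N * (2 * √(N:ℝ)) := by gcongr; exact this N
    _ = 2 * N := by nlinarith [Real.mul_self_sqrt (show (0:ℝ) ≤ N by positivity)]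

lemma log_mul_le {y : ℝ} (hy : 1 ≤ y) : Real.log y * (5 * (1 + Real.log y)) ≤ 100 * √y := by
  have h1 : Real.log y ≤ 4 * √(√y) := by
    have := Real.log_le_sub_one_of_pos (x := √(√y)) (by positivity)
    rw [Real.log_sqrt (by positivity), Real.log_sqrt (by positivity)] at this
    linarith
  have h2 : 1 ≤ √(√y) := by simpa using hy
  have e := Real.mul_self_sqrt (Real.sqrt_nonneg y)
  have := Real.log_nonneg hy
  calc _ ≤ (4 * √(√y)) * (5 * (√(√y) + 4 * √(√y))) := by gcongr
    _ = _ := by linear_combination 100 * e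

lemma TI_bound (N : ℕ) (hN : 1 ≤ N) :
    |h N 1 * Real.log N + ∑ m ∈ Icc 1 N, Λ m * h N m| ≤ 200 * N := by
  rw [← TI N hN]
  refine (Finset.abs_sum_le_sum_abs _ _).trans ?_
  have : ∀ d ∈ Icc 1 N, |(μ d : ℝ) * Real.log (N / d) * ∑ n ∈ Icc 1 (N / d), h N (d * n)| ≤ 100 * √((N:ℝ)/d) := by
    intro d hd
    rw [mem_Icc] at hd
    have hd0 : (0:ℝ) < d := by exact_mod_cast hd.1
    have hy : 1 ≤ (N:ℝ)/d := by rw [one_le_div hd0]; exact_mod_cast hd.2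
    rw [abs_mul, abs_mul, abs_of_nonneg (Real.log_nonneg hy)]
    have h1 : |(μ d : ℝ)| ≤ 1 := by exact_mod_cast ArithmeticFunction.abs_moebius_le_one
    calc _ ≤ 1 * Real.log (N/d) * (5 * (1 + Real.log (N / d))) := by
          gcongr
          · exact mul_nonneg zero_le_one (Real.log_nonneg hy)
          · exact Real.log_nonneg hy
          · exact G_bound hd.1 hd.2
      _ ≤ _ := by rw [one_mul]; exact log_mul_le hy
  refine (Finset.sum_le_sum this).trans ?_
  rw [← Finset.mul_sum]
  linarith [sum_rpow_half N]

lemma mertens (N : ℕ) : LF N ≤ ∑ m ∈ Icc 1 N, Λ m * ((N:ℝ) / m) ∧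
    ∑ m ∈ Icc 1 N, Λ m * ((N:ℝ) / m) ≤ LF N + 6 * N := by
  have e : LF N = ∑ m ∈ Icc 1 N, Λ m * ((N / m : ℕ) : ℝ) := by
    rw [← sum_P]; unfold P; rw [sum_swap' N (fun _ m => Λ m)]
    refine Finset.sum_congr rfl fun m _ => ?_
    simp [mul_comm]
  constructor
  · rw [e]
    gcongr with m hm
    exact Nat.cast_div_le
  · refine le_trans ?_ (add_le_add_right (P_le N) _)
    rw [e, P, ← Finset.sum_add_distrib]
    refine Finset.sum_le_sum fun m hm => ?_
    rw [mem_Icc] at hm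
    have hm0 : (0:ℝ) < m := by exact_mod_cast hm.1
    have : (N:ℝ) / m ≤ (N / m : ℕ) + 1 := by
      rw [div_le_iff₀ hm0]
      have := Nat.lt_div_mul_add (a := N) (b := m) (by omega)
      have : (N:ℝ) < (N / m : ℕ) * m + m := by exact_mod_cast this
      nlinarith
    nlinarith [ArithmeticFunction.vonMangoldt_nonneg (n := m)]

lemma sum_Lam_log (N : ℕ) : P N * Real.log N - 6 * N ≤ ∑ n ∈ Icc 1 N, Λ n * Real.log n ∧
    ∑ n ∈ Icc 1 N, Λ n * Real.log n ≤ P N * Real.log N := by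
  induction N with
  | zero => simp [P]
  | succ N ih =>
    rcases Nat.eq_zero_or_pos N with rfl | hN
    · simp [P]
    have e : P (N+1) = P N + Λ (N+1) := by simp [P, Finset.sum_Icc_succ_top]
    rw [Finset.sum_Icc_succ_top (by omega), e]
    obtain ⟨h1, h2⟩ := log_succ_bounds hN
    push_cast
    have h0 : (0:ℝ) < N := by exact_mod_cast hN
    have a : P N * (Real.log (N+1) - Real.log N) ≤ 6 := by
      calc _ ≤ (6 * N) * (1 / (N:ℝ)) := by
            gcongr
            · have : 0 ≤ 1 / ((N:ℝ)+1) := by positivity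
              linarith
            · exact P_le N
        _ = 6 := by field_simp
    have b : 0 ≤ P N * (Real.log (N+1) - Real.log N) := by
      have : 0 ≤ 1 / ((N:ℝ)+1) := by positivity
      exact mul_nonneg (P_nonneg N) (by linarith)
    constructor <;> nlinarith [ih.1, ih.2]

noncomputable def Lam2 (n : ℕ) : ℝ := Λ n * Real.log n + ∑ x ∈ n.divisorsAntidiagonal, Λ x.1 * Λ x.2

lemma Lam2_nonneg (n : ℕ) : 0 ≤ Lam2 n := by
  unfold Lam2
  have := fun n => ArithmeticFunction.vonMangoldt_nonneg (n := n)
  refine add_nonneg (mul_nonneg (this n) (Real.log_natCast_nonneg n)) (Finset.sum_nonneg fun x _ => mul_nonneg (this _) (this _))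

lemma selberg (N : ℕ) : |∑ n ∈ Icc 1 N, (Lam2 n - 2 * Real.log n)| ≤ 300 * N := by
  rcases Nat.eq_zero_or_pos N with rfl | hN
  · simp
  have h0 : (1:ℝ) ≤ N := by exact_mod_cast hN
  have e1 : ∑ n ∈ Icc 1 N, (Lam2 n - 2 * Real.log n) = ∑ n ∈ Icc 1 N, Λ n * Real.log n
      + ∑ d ∈ Icc 1 N, Λ d * P (N / d) - 2 * LF N := by
    unfold Lam2 LF P
    simp_rw [Finset.mul_sum]
    rw [Finset.sum_sub_distrib, Finset.sum_add_distrib, sum_swap N (fun d n => Λ d * Λ n)]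
  have e2 : ∑ m ∈ Icc 1 N, Λ m * h N m = ∑ d ∈ Icc 1 N, Λ d * P (N / d) -
      ∑ m ∈ Icc 1 N, Λ m * ((N:ℝ) / m) + kap * P N := by
    unfold h
    rw [show kap * P N = ∑ m ∈ Icc 1 N, Λ m * kap by rw [P, Finset.mul_sum]; simp [mul_comm],
      ← Finset.sum_sub_distrib, ← Finset.sum_add_distrib]
    exact Finset.sum_congr rfl fun _ _ => by ring
  have hT := TI_bound N hN
  rw [e2, h] at hT
  rw [e1]
  obtain ⟨a1, a2⟩ := mertens N
  obtain ⟨b1, b2⟩ := sum_Lam_log N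
  obtain ⟨c1, c2⟩ := LF_bounds hN
  have g1 := Real.one_half_lt_eulerMascheroniConstant
  have g2 := Real.eulerMascheroniConstant_lt_two_thirds
  have d1 := P_le N
  have d2 := P_nonneg N
  have d3 : Real.log N ≤ N := by linarith [Real.log_le_sub_one_of_pos (x := N) (by linarith)]
  have d4 : 0 ≤ Real.log N := Real.log_nonneg h0
  have k1 : 0 ≤ kap := by unfold kap; linarith
  have k2 : kap ≤ 2 := by unfold kap; linarith
  have k3 : kap * P N ≤ 2 * (6 * N) := by gcongr
  have k4 : kap * Real.log N ≤ 2 * N := by gcongr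
  have k5 : 0 ≤ kap * P N := by positivity
  have k6 : 0 ≤ kap * Real.log N := by positivity
  simp only [Nat.div_one, Nat.cast_one, div_one] at hT
  rw [abs_le] at hT ⊢
  constructor <;> nlinarith [hT.1, hT.2]
end MV

namespace MV
open Finset
open scoped ArithmeticFunction.vonMangoldt ArithmeticFunction.Moebius

lemma Lam2_sum (n : ℕ) (hn : n ≠ 0) : ∑ x ∈ n.divisorsAntidiagonal, Lam2 x.1 = Real.log n ^ 2 := by
  have e1 : ∑ x ∈ n.divisorsAntidiagonal, ∑ y ∈ x.1.divisorsAntidiagonal, Λ y.1 * Λ y.2 =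
      ∑ x ∈ n.divisorsAntidiagonal, Λ x.1 * Real.log x.2 := by
    have := congrArg (fun z : ArithmeticFunction ℝ => z n)
      (mul_assoc Λ Λ (ArithmeticFunction.zeta : ArithmeticFunction ℝ))
    rw [ArithmeticFunction.vonMangoldt_mul_zeta] at this
    simp only [ArithmeticFunction.coe_mul_zeta_apply] at this
    rw [Nat.sum_divisorsAntidiagonal (fun y _ => ∑ z ∈ y.divisorsAntidiagonal, Λ z.1 * Λ z.2)]
    simpa [ArithmeticFunction.mul_apply] using this
  unfold Lam2
  rw [Finset.sum_add_distrib, e1, ← Finset.sum_add_distrib]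
  have : ∀ x ∈ n.divisorsAntidiagonal, Λ x.1 * Real.log x.1 + Λ x.1 * Real.log x.2 = Λ x.1 * Real.log n := by
    intro x hx
    obtain ⟨e, _⟩ := Nat.mem_divisorsAntidiagonal.1 hx
    have h1 : x.1 ≠ 0 := by rintro h0; rw [h0] at e; simp at e; omega
    have h2 : x.2 ≠ 0 := by rintro h0; rw [h0] at e; simp at e; omega
    rw [← e]; push_cast
    rw [Real.log_mul (by exact_mod_cast h1) (by exact_mod_cast h2)]; ring
  rw [Finset.sum_congr rfl this, ← Finset.sum_mul,
    Nat.sum_divisorsAntidiagonal (fun y _ => Λ y), ArithmeticFunction.vonMangoldt_sum]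
  ring

noncomputable def S (g : ℕ → ℝ) (N : ℕ) : ℝ := ∑ n ∈ Icc 1 N, g n

lemma S_succ (g : ℕ → ℝ) (N : ℕ) : S g (N+1) = S g N + g (N+1) := by
  simp [S, Finset.sum_Icc_succ_top]

lemma S_abs_le (g : ℕ → ℝ) (hg : ∀ n, 1 ≤ n → |g n| ≤ 1) (N : ℕ) : |S g N| ≤ N := by
  refine (Finset.abs_sum_le_sum_abs _ _).trans ?_
  refine (Finset.sum_le_sum (fun n hn => hg n (mem_Icc.1 hn).1)).trans ?_
  simp

lemma sum_f_log_sq (g : ℕ → ℝ) (hmul : ∀ a b, 1 ≤ a → 1 ≤ b → g (a * b) = g a * g b) (N : ℕ) :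
    ∑ n ∈ Icc 1 N, g n * Real.log n ^ 2 = ∑ d ∈ Icc 1 N, g d * Lam2 d * S g (N / d) := by
  unfold S
  simp_rw [Finset.mul_sum]
  rw [sum_swap N (fun d n => g d * Lam2 d * g n)]
  refine Finset.sum_congr rfl fun m hm => ?_
  have hm1 : m ≠ 0 := by simp at hm; omega
  rw [← Lam2_sum m hm1, Finset.mul_sum]
  refine Finset.sum_congr rfl fun x hx => ?_
  obtain ⟨e, _⟩ := Nat.mem_divisorsAntidiagonal.1 hx
  have h1 : x.1 ≠ 0 := by rintro h0; rw [h0] at e; simp at e; omega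
  have h2 : x.2 ≠ 0 := by rintro h0; rw [h0] at e; simp at e; omega
  rw [← e, hmul _ _ (by omega) (by omega)]; ring

noncomputable def U (g : ℕ → ℝ) (k : ℕ) : ℝ := |S g k| - |S g (k - 1)|

lemma U_le (g : ℕ → ℝ) (hg : ∀ n, 1 ≤ n → |g n| ≤ 1) (k : ℕ) (hk : 1 ≤ k) : |U g k| ≤ 1 := by
  obtain ⟨k, rfl⟩ := Nat.exists_eq_add_of_le' hk
  unfold U
  refine (abs_abs_sub_abs_le_abs_sub _ _).trans ?_
  rw [Nat.add_sub_cancel, S_succ, add_sub_cancel_left]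
  exact hg _ hk

lemma sum_U (g : ℕ → ℝ) (M : ℕ) : ∑ k ∈ Icc 1 M, U g k = |S g M| := by
  induction M with
  | zero => simp [S]
  | succ M ih => rw [Finset.sum_Icc_succ_top (by omega), ih]; simp [U]

lemma sum_T (g : ℕ → ℝ) (α : ℕ → ℝ) (N : ℕ) :
    ∑ d ∈ Icc 1 N, α d * |S g (N / d)| = ∑ k ∈ Icc 1 N, U g k * ∑ d ∈ Icc 1 (N / k), α d := by
  simp_rw [← sum_U, Finset.mul_sum]
  rw [sum_swap' N (fun d n => α d * U g n)]
  simp_rw [mul_comm]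

lemma sum_U_div (g : ℕ → ℝ) (N : ℕ) :
    ∑ k ∈ Icc 1 N, U g k / k = ∑ k ∈ Icc 1 N, |S g k| / (k * (k + 1)) + |S g N| / (N + 1) := by
  induction N with
  | zero => simp [S]
  | succ N ih =>
    rw [Finset.sum_Icc_succ_top (by omega), ih, Finset.sum_Icc_succ_top (by omega)]
    simp only [U, Nat.add_sub_cancel]; push_cast; field_simp; ring

lemma sum_inv_le {N : ℕ} (hN : 1 ≤ N) : ∑ k ∈ Icc 1 N, (1:ℝ) / k ≤ 1 + Real.log N := by
  have e : (harmonic N : ℝ) = ∑ n ∈ Icc 1 N, (1:ℝ) / n := by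
    rw [harmonic_eq_sum_Icc]; push_cast; simp
  rw [← e]; exact harmonic_le_one_add_log N

lemma sum_TT (g : ℕ → ℝ) (hg : ∀ n, 1 ≤ n → |g n| ≤ 1) (N : ℕ) :
    ∑ d ∈ Icc 1 N, |S g (N / d)| ≤ N * ∑ k ∈ Icc 1 N, |S g k| / k ^ 2 + 2 * N := by
  have h1 := sum_T g (fun _ => 1) N
  simp only [one_mul, Finset.sum_const, Nat.card_Icc, Nat.add_sub_cancel, nsmul_eq_mul, mul_one] at h1
  rw [h1]
  have h2 : ∀ k ∈ Icc 1 N, U g k * ((N / k : ℕ) : ℝ) ≤ N * (U g k / k) + 1 := by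
    intro k hk
    have hk1 := (mem_Icc.1 hk).1
    have hu := abs_le.1 (U_le g hg k hk1)
    have hk0 : (0:ℝ) < k := by exact_mod_cast hk1
    have a1 : ((N / k : ℕ) : ℝ) ≤ (N:ℝ)/k := Nat.cast_div_le
    have a2 : (N:ℝ) / k ≤ (N / k : ℕ) + 1 := by
      rw [div_le_iff₀ hk0]
      have := Nat.lt_div_mul_add (a := N) (b := k) (by omega)
      have : (N:ℝ) < (N / k : ℕ) * k + k := by exact_mod_cast this
      nlinarith
    have : N * (U g k / k) = U g k * ((N:ℝ)/k) := by ring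
    rw [this]; nlinarith
  refine (Finset.sum_le_sum h2).trans ?_
  rw [Finset.sum_add_distrib, ← Finset.mul_sum, sum_U_div]
  have h3 : ∑ k ∈ Icc 1 N, |S g k| / ((k:ℝ) * (k + 1)) ≤ ∑ k ∈ Icc 1 N, |S g k| / k ^ 2 := by
    refine Finset.sum_le_sum fun k hk => ?_
    have hk0 : (0:ℝ) < k := by exact_mod_cast (mem_Icc.1 hk).1
    gcongr; nlinarith
  have h4 : |S g N| / (N + 1) ≤ 1 := by
    rw [div_le_one (by positivity)]; linarith [S_abs_le g hg N]
  have : (N:ℝ) * (∑ k ∈ Icc 1 N, |S g k| / ((k:ℝ) * (k + 1)) + |S g N| / (N + 1)) ≤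
     N * (∑ k ∈ Icc 1 N, |S g k| / k ^ 2 + 1) := by gcongr
  simp; linarith

lemma main_ineq (g : ℕ → ℝ) (hmul : ∀ a b, 1 ≤ a → 1 ≤ b → g (a * b) = g a * g b)
    (hg : ∀ n, 1 ≤ n → |g n| ≤ 1) (N : ℕ) (hN : 3 ≤ N) :
    |S g N| * Real.log N ≤ 2 * N * ∑ k ∈ Icc 1 N, |S g k| / k ^ 2 + 1000 * N := by
  have h3 : (3:ℝ) ≤ N := by exact_mod_cast hN
  have hl : 1 ≤ Real.log N := by
    rw [Real.le_log_iff_exp_le (by linarith)]; linarith [Real.exp_one_lt_d9]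
  set ℓ := Real.log N with hℓ
  have logle : ∀ n ∈ Icc 1 N, Real.log n ≤ ℓ := fun n hn => by
    have := mem_Icc.1 hn
    exact Real.log_le_log (by exact_mod_cast this.1) (by exact_mod_cast this.2)
  -- step (iii)
  have s1 : |S g N| * ℓ ^ 2 ≤ |∑ n ∈ Icc 1 N, g n * Real.log n ^ 2| + 2 * N * ℓ := by
    have e : S g N * ℓ ^ 2 = ∑ n ∈ Icc 1 N, g n * Real.log n ^ 2 +
        ∑ n ∈ Icc 1 N, g n * (ℓ ^ 2 - Real.log n ^ 2) := by
      rw [S, Finset.sum_mul, ← Finset.sum_add_distrib]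
      exact Finset.sum_congr rfl fun _ _ => by ring
    have b : |∑ n ∈ Icc 1 N, g n * (ℓ ^ 2 - Real.log n ^ 2)| ≤ 2 * N * ℓ := by
      refine (Finset.abs_sum_le_sum_abs _ _).trans ?_
      have : ∀ n ∈ Icc 1 N, |g n * (ℓ ^ 2 - Real.log n ^ 2)| ≤ 2 * ℓ * (ℓ - Real.log n) := by
        intro n hn
        have h1 := logle n hn
        have h0 := Real.log_natCast_nonneg n
        rw [abs_mul, abs_of_nonneg (a := ℓ ^ 2 - Real.log n ^ 2) (by nlinarith)]
        calc _ ≤ 1 * (ℓ ^ 2 - Real.log n ^ 2) := by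
              gcongr
              · nlinarith
              · exact hg n (mem_Icc.1 hn).1
          _ ≤ _ := by nlinarith
      refine (Finset.sum_le_sum this).trans ?_
      rw [← Finset.mul_sum, Finset.sum_sub_distrib]
      have := (LF_bounds (M := N) (by omega)).1
      unfold LF at this
      simp only [Finset.sum_const, Nat.card_Icc, Nat.add_sub_cancel, nsmul_eq_mul]
      nlinarith
    rw [← abs_of_nonneg (sq_nonneg ℓ), ← abs_mul, e]
    exact (abs_add_le _ _).trans (by linarith)
  have s2 : |∑ n ∈ Icc 1 N, g n * Real.log n ^ 2| ≤ ∑ d ∈ Icc 1 N, Lam2 d * |S g (N / d)| := by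
    rw [sum_f_log_sq g hmul]
    refine (Finset.abs_sum_le_sum_abs _ _).trans (Finset.sum_le_sum fun d hd => ?_)
    rw [abs_mul, abs_mul, abs_of_nonneg (Lam2_nonneg d)]
    have := hg d (mem_Icc.1 hd).1
    have h1 := Lam2_nonneg d
    calc _ ≤ 1 * Lam2 d * |S g (N / d)| := by gcongr
      _ = _ := by ring
  have s3 : ∑ d ∈ Icc 1 N, Lam2 d * |S g (N / d)| - ∑ d ∈ Icc 1 N, 2 * Real.log d * |S g (N / d)| ≤
      300 * N * (1 + ℓ) := by
    rw [← Finset.sum_sub_distrib]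
    simp_rw [← sub_mul]
    rw [sum_T g (fun d => Lam2 d - 2 * Real.log d)]
    have : ∀ k ∈ Icc 1 N, U g k * ∑ d ∈ Icc 1 (N / k), (Lam2 d - 2 * Real.log d) ≤ 300 * N * (1 / (k:ℝ)) := by
      intro k hk
      refine (le_abs_self _).trans ?_
      rw [abs_mul]
      calc _ ≤ 1 * (300 * ((N / k : ℕ):ℝ)) := by
            gcongr
            · exact U_le g hg k (mem_Icc.1 hk).1
            · exact selberg _
        _ ≤ 1 * (300 * ((N:ℝ) / k)) := by gcongr; exact Nat.cast_div_le
        _ = _ := by ring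
    refine (Finset.sum_le_sum this).trans ?_
    rw [← Finset.mul_sum]
    gcongr
    exact sum_inv_le (by omega)
  have s4 : ∑ d ∈ Icc 1 N, 2 * Real.log d * |S g (N / d)| ≤ 2 * ℓ * (N * ∑ k ∈ Icc 1 N, |S g k| / k ^ 2 + 2 * N) := by
    calc _ ≤ ∑ d ∈ Icc 1 N, 2 * ℓ * |S g (N / d)| := by
          refine Finset.sum_le_sum fun d hd => ?_
          gcongr; exact logle d hd
      _ ≤ _ := by
          rw [← Finset.mul_sum]; gcongr; exact sum_TT g hg N
  have : (|S g N| * ℓ) * ℓ ≤ (2 * N * ∑ k ∈ Icc 1 N, |S g k| / k ^ 2 + 1000 * N) * ℓ := by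
    nlinarith
  exact le_of_mul_le_mul_right this (by linarith)
end MV

namespace MV
open MeasureTheory Real FourierTransform

lemma integrable_cauchy {R : ℝ} (hR : 0 < R) : Integrable (fun t : ℝ => 1 / (R ^ 2 + t ^ 2)) := by
  have := (integrable_inv_one_add_sq.comp_div (R := R) hR.ne').const_mul (1 / R ^ 2)
  refine this.congr (Filter.Eventually.of_forall fun t => ?_)
  simp only []
  field_simp

lemma integrable_exp_abs {R : ℝ} (hR : 0 < R) :
    Integrable (fun v : ℝ => ((Real.exp (-R * |v|) : ℝ) : ℂ)) := by
  suffices hh : Integrable (fun v : ℝ => Real.exp (-R * |v|)) from hh.ofReal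
  rw [← integrableOn_univ, ← Set.Iic_union_Ioi (a := (0:ℝ))]
  refine IntegrableOn.union ?_ ?_
  · refine (integrableOn_exp_mul_Iic hR 0).congr_fun (fun x hx => ?_) measurableSet_Iic
    simp only [Set.mem_Iic] at hx
    simp only []
    rw [abs_of_nonpos hx]; ring_nf
  · refine (integrableOn_exp_mul_Ioi (neg_lt_zero.2 hR) 0).congr_fun (fun x hx => ?_) measurableSet_Ioi
    simp only [Set.mem_Ioi] at hx
    simp only []
    rw [abs_of_pos hx]

lemma fourier_exp_abs {R : ℝ} (hR : 0 < R) (w : ℝ) :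
    𝓕 (fun v : ℝ => ((Real.exp (-R * |v|) : ℝ) : ℂ)) w = ((2 * R / (R ^ 2 + (2 * π * w) ^ 2) : ℝ) : ℂ) := by
  rw [Real.fourier_real_eq_integral_exp_smul]
  have hInt : Integrable (fun v : ℝ => Complex.exp (↑(-2 * π * v * w) * Complex.I) •
      ((Real.exp (-R * |v|) : ℝ) : ℂ)) := by
    have := (Real.fourierIntegral_convergent_iff (f := (fun v : ℝ => ((Real.exp (-R * |v|) : ℝ) : ℂ))) (μ := volume) w).2 (integrable_exp_abs hR)
    refine this.congr (Filter.Eventually.of_forall fun v => ?_)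
    simp only [Circle.smul_def, Real.fourierChar_apply]
    congr 3
    simp; ring
  have hsplit : ∫ v : ℝ, Complex.exp (↑(-2 * π * v * w) * Complex.I) • ((Real.exp (-R * |v|) : ℝ) : ℂ)
     = (∫ v in Set.Iic (0:ℝ), Complex.exp (((R:ℂ) - 2 * π * w * Complex.I) * v)) +
       ∫ v in Set.Ioi (0:ℝ), Complex.exp ((-(R:ℂ) - 2 * π * w * Complex.I) * v) := by
    rw [← intervalIntegral.integral_Iic_add_Ioi (b := (0:ℝ)) hInt.integrableOn hInt.integrableOn]
    congr 1
    · refine setIntegral_congr_fun measurableSet_Iic fun v hv => ?_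
      simp only [Set.mem_Iic] at hv
      simp only [smul_eq_mul]
      rw [abs_of_nonpos hv, Complex.ofReal_exp, ← Complex.exp_add]
      congr 1; push_cast; ring
    · refine setIntegral_congr_fun measurableSet_Ioi fun v hv => ?_
      simp only [Set.mem_Ioi] at hv
      simp only [smul_eq_mul]
      rw [abs_of_pos hv, Complex.ofReal_exp, ← Complex.exp_add]
      congr 1; push_cast; ring
  rw [hsplit, integral_exp_mul_complex_Iic (by simpa using hR), integral_exp_mul_complex_Ioi (by simpa using hR)]
  have h1 : (R:ℂ) - 2 * π * w * Complex.I ≠ 0 := by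
    intro h; have := congrArg Complex.re h; simp at this; exact hR.ne' this
  have h2 : -(R:ℂ) - 2 * π * w * Complex.I ≠ 0 := by
    intro h; have := congrArg Complex.re h; simp at this; exact hR.ne' this
  have h3 : (R:ℂ) ^ 2 + (2 * π * w) ^ 2 ≠ 0 := by
    have : (0:ℝ) < R ^ 2 + (2 * π * w) ^ 2 := by positivity
    exact_mod_cast this.ne'
  push_cast
  simp only [mul_zero, Complex.exp_zero]
  rw [div_add_div _ _ h1 h2, div_eq_div_iff (mul_ne_zero h1 h2) h3]
  have := Complex.I_sq
  linear_combination (-8 * (R:ℂ) * π ^ 2 * w ^ 2) * this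

lemma integral_cauchy {R : ℝ} (hR : 0 < R) (v : ℝ) :
    ∫ t : ℝ, Complex.exp (-(t * v) * Complex.I) * ((1 / (R ^ 2 + t ^ 2) : ℝ) : ℂ) =
      ((π / R * Real.exp (-R * |v|) : ℝ) : ℂ) := by
  set g := (fun v : ℝ => ((Real.exp (-R * |v|) : ℝ) : ℂ)) with hg
  have hF : 𝓕 g = fun w : ℝ => ((2 * R / (R ^ 2 + (2 * π * w) ^ 2) : ℝ) : ℂ) := by
    ext w; exact fourier_exp_abs hR w
  have hFi : Integrable (𝓕 g) := by
    rw [hF]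
    suffices hh : Integrable (fun w : ℝ => 2 * R / (R ^ 2 + (2 * π * w) ^ 2)) from hh.ofReal
    have := ((integrable_cauchy hR).comp_mul_left' (R := 2 * π) (by positivity)).const_mul (2 * R)
    refine this.congr (Filter.Eventually.of_forall fun t => ?_)
    simp only []; rw [mul_one_div]
  have hc : Continuous g := by rw [hg]; fun_prop
  have inv := congrFun (hc.fourierInv_fourier_eq (integrable_exp_abs hR) hFi) (-v)
  rw [hF, Real.fourierInv_eq'] at inv
  have e := Measure.integral_comp_mul_left (fun t : ℝ => Complex.exp (-(t * v) * Complex.I) * ((1 / (R ^ 2 + t ^ 2) : ℝ) : ℂ)) (2 * π)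
  have e2 : ∫ w : ℝ, Complex.exp (↑(2 * π * inner ℝ w (-v)) * Complex.I) • ((2 * R / (R ^ 2 + (2 * π * w) ^ 2) : ℝ) : ℂ)
     = (2 * R) * ∫ w : ℝ, Complex.exp (-(((2 * π * w : ℝ):ℂ) * v) * Complex.I) * ((1 / (R ^ 2 + (2 * π * w) ^ 2) : ℝ) : ℂ) := by
    rw [← integral_const_mul]
    refine integral_congr_ae (Filter.Eventually.of_forall fun w => ?_)
    simp only [smul_eq_mul]
    have : (↑(2 * π * inner ℝ w (-v)) * Complex.I : ℂ) = -(((2 * π * w : ℝ):ℂ) * v) * Complex.I := by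
      simp; ring
    rw [this]; push_cast; ring
  rw [e2, e] at inv
  rw [abs_of_pos (by positivity)] at inv
  have hp : (0:ℝ) < 2 * π := by positivity
  rw [hg] at inv
  simp only [abs_neg, Complex.real_smul] at inv
  have hp' : (π:ℂ) ≠ 0 := by exact_mod_cast Real.pi_ne_zero
  have hR' : (R:ℂ) ≠ 0 := by exact_mod_cast hR.ne'
  generalize (∫ t : ℝ, Complex.exp (-(t * v) * Complex.I) * ((1 / (R ^ 2 + t ^ 2) : ℝ) : ℂ)) = X at inv ⊢
  rw [Complex.ofReal_mul, ← inv]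
  push_cast
  field_simp

/-- the generic exponential sum -/
noncomputable def E (b ℓ : ℕ → ℝ) (t : ℝ) : ℂ := ∑' n, (b n : ℂ) * Complex.exp (-(t * ℓ n) * Complex.I)

noncomputable def K (b ℓ : ℕ → ℝ) (R : ℝ) : ℝ := ∑' p : ℕ × ℕ, b p.1 * b p.2 * Real.exp (-R * |ℓ p.1 - ℓ p.2|)

lemma norm_term (b ℓ : ℕ → ℝ) (t : ℝ) (n : ℕ) : ‖(b n : ℂ) * Complex.exp (-(t * ℓ n) * Complex.I)‖ = |b n| := by
  rw [norm_mul, show (-(t * ℓ n : ℂ) * Complex.I) = ((-(t * ℓ n) : ℝ) : ℂ) * Complex.I by push_cast; ring, Complex.norm_exp_ofReal_mul_I]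
  simp

lemma E_cont (b ℓ : ℕ → ℝ) (hb : Summable fun n => |b n|) : Continuous (E b ℓ) := by
  unfold E
  refine continuous_tsum (u := fun n => |b n|) (fun n => by fun_prop) hb (fun n t => (norm_term b ℓ t n).le)

lemma E_bound (b ℓ : ℕ → ℝ) (hb : Summable fun n => |b n|) (t : ℝ) : ‖E b ℓ t‖ ≤ ∑' n, |b n| := by
  unfold E
  refine (norm_tsum_le_tsum_norm ?_).trans_eq ?_
  · simpa only [norm_term] using hb
  · simp only [norm_term]

lemma E_int (b ℓ : ℕ → ℝ) (hb : Summable fun n => |b n|) {R : ℝ} (hR : 0 < R) :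
    Integrable (fun t => ‖E b ℓ t‖ ^ 2 * (1 / (R ^ 2 + t ^ 2))) := by
  refine (integrable_cauchy hR).bdd_mul (c := (∑' n, |b n|) ^ 2) ?_ ?_
  · exact ((E_cont b ℓ hb).norm.pow 2).aestronglyMeasurable
  · refine Filter.Eventually.of_forall fun t => ?_
    rw [norm_pow, norm_norm]
    gcongr
    exact E_bound b ℓ hb t

lemma plancherel (b ℓ : ℕ → ℝ) (hb : Summable fun n => |b n|) {R : ℝ} (hR : 0 < R) :
    ∫ t, ‖E b ℓ t‖ ^ 2 * (1 / (R ^ 2 + t ^ 2)) = π / R * K b ℓ R := by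
  have hs : ∀ t, ((‖E b ℓ t‖ ^ 2 * (1 / (R ^ 2 + t ^ 2)) : ℝ) : ℂ) =
      ∑' p : ℕ × ℕ, (b p.1 * b p.2 : ℂ) * (Complex.exp (-(t * (ℓ p.1 - ℓ p.2 : ℝ)) * Complex.I) * ((1 / (R ^ 2 + t ^ 2) : ℝ) : ℂ)) := by
    intro t
    have h1 : ((‖E b ℓ t‖ ^ 2 : ℝ) : ℂ) = E b ℓ t * (starRingEnd ℂ) (E b ℓ t) := by
      rw [Complex.mul_conj, Complex.normSq_eq_norm_sq]
    have h2 : (starRingEnd ℂ) (E b ℓ t) = ∑' n, (starRingEnd ℂ) ((b n : ℂ) * Complex.exp (-(t * ℓ n) * Complex.I)) := by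
      unfold E; exact Complex.conj_tsum _
    rw [Complex.ofReal_mul, h1, h2, E, tsum_mul_tsum_of_summable_norm, ← tsum_mul_right]
    · refine tsum_congr fun p => ?_
      have h3 : (starRingEnd ℂ) ((b p.2 : ℂ) * Complex.exp (-(t * ℓ p.2) * Complex.I)) =
        (b p.2 : ℂ) * Complex.exp ((t * ℓ p.2) * Complex.I) := by
        rw [map_mul, ← Complex.exp_conj]; simp
      rw [h3]
      have h4 : Complex.exp (-(t * (ℓ p.1 - ℓ p.2 : ℝ)) * Complex.I) = Complex.exp (-(t * ℓ p.1) * Complex.I) * Complex.exp ((t * ℓ p.2) * Complex.I) := by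
        rw [← Complex.exp_add]; congr 1; push_cast; ring
      rw [h4]; ring
    · simpa only [norm_term] using hb
    · simpa only [RCLike.norm_conj, norm_term] using hb
  have hnorm : ∀ (p : ℕ × ℕ) (t : ℝ), ‖(b p.1 * b p.2 : ℂ) * (Complex.exp (-(t * (ℓ p.1 - ℓ p.2 : ℝ)) * Complex.I) * ((1 / (R ^ 2 + t ^ 2) : ℝ) : ℂ))‖ = |b p.1| * |b p.2| * (1 / (R ^ 2 + t ^ 2)) := by
    intro p t
    rw [norm_mul, norm_mul, norm_mul, show (-(t * (ℓ p.1 - ℓ p.2 : ℝ) : ℂ) * Complex.I) = ((-(t * (ℓ p.1 - ℓ p.2)) : ℝ) : ℂ) * Complex.I by push_cast; ring, Complex.norm_exp_ofReal_mul_I, Complex.norm_real, Complex.norm_real, Complex.norm_real, one_mul, Real.norm_of_nonneg (r := 1 / (R ^ 2 + t ^ 2)) (by positivity)]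
    rfl
  have hsum := hasSum_integral_of_summable_integral_norm (μ := volume) (F := fun (p : ℕ × ℕ) (t : ℝ) =>
    (b p.1 * b p.2 : ℂ) * (Complex.exp (-(t * (ℓ p.1 - ℓ p.2 : ℝ)) * Complex.I) * ((1 / (R ^ 2 + t ^ 2) : ℝ) : ℂ))) ?_ ?_
  · have e := hsum.tsum_eq
    simp_rw [← hs] at e
    rw [integral_complex_ofReal] at e
    have : ∀ p : ℕ × ℕ, ∫ t : ℝ, (b p.1 * b p.2 : ℂ) * (Complex.exp (-(t * (ℓ p.1 - ℓ p.2 : ℝ)) * Complex.I) * ((1 / (R ^ 2 + t ^ 2) : ℝ) : ℂ)) = ((π / R * (b p.1 * b p.2 * Real.exp (-R * |ℓ p.1 - ℓ p.2|)) : ℝ) : ℂ) := by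
      intro p
      rw [integral_const_mul, integral_cauchy hR]
      push_cast; ring
    simp_rw [this] at e
    rw [← Complex.ofReal_tsum, tsum_mul_left] at e
    exact (Complex.ofReal_injective e).symm
  · intro p
    refine ((integrable_cauchy hR).const_mul (|b p.1| * |b p.2|)).mono' ?_ ?_
    · refine Continuous.aestronglyMeasurable ?_
      have : Continuous (fun t : ℝ => 1 / (R ^ 2 + t ^ 2)) :=
        continuous_const.div (by fun_prop) (fun t => by positivity)
      fun_prop
    · exact Filter.Eventually.of_forall fun t => (hnorm p t).le
  · simp_rw [hnorm, integral_const_mul]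
    refine Summable.mul_right _ ?_
    exact hb.mul_of_nonneg hb (fun _ => abs_nonneg _) (fun _ => abs_nonneg _)

end MV

namespace MV
open Finset
open scoped ArithmeticFunction.vonMangoldt

lemma K_summable (b ℓ : ℕ → ℝ) (hb : Summable fun n => |b n|) {R : ℝ} (hR : 0 ≤ R) :
    Summable (fun p : ℕ × ℕ => b p.1 * b p.2 * Real.exp (-R * |ℓ p.1 - ℓ p.2|)) := by
  refine Summable.of_norm_bounded (g := fun p : ℕ × ℕ => |b p.1| * |b p.2|)
    (hb.mul_of_nonneg hb (fun _ => abs_nonneg _) (fun _ => abs_nonneg _)) fun p => ?_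
  rw [Real.norm_eq_abs, abs_mul, abs_mul, Real.abs_exp]
  refine mul_le_of_le_one_right (by positivity) ?_
  rw [Real.exp_le_one_iff]
  have := mul_nonneg hR (abs_nonneg (ℓ p.1 - ℓ p.2))
  linarith

lemma K_mono (b b' ℓ : ℕ → ℝ) (hbb : ∀ n, |b n| ≤ b' n) (hb : Summable b') {R R' : ℝ} (hR' : 0 ≤ R')
    (hR : R' ≤ R) : K b ℓ R ≤ K b' ℓ R' := by
  have hb0 : ∀ n, 0 ≤ b' n := fun n => (abs_nonneg _).trans (hbb n)
  have h1 : Summable fun n => |b' n| := by simpa only [abs_of_nonneg (hb0 _)] using hb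
  have h2 : Summable fun n => |b n| := Summable.of_nonneg_of_le (fun _ => abs_nonneg _) hbb hb
  refine Summable.tsum_le_tsum (fun p => ?_) (K_summable b ℓ h2 (hR'.trans hR)) (K_summable b' ℓ h1 hR')
  refine (le_abs_self _).trans ?_
  rw [abs_mul, abs_mul, Real.abs_exp]
  gcongr
  · exact mul_nonneg (hb0 _) (hb0 _)
  · exact hb0 _
  · exact hbb _
  · exact hbb _

noncomputable def w (s : ℝ) (k : ℕ) : ℝ := (k:ℝ) ^ (-s) - ((k:ℝ) + 1) ^ (-s)

lemma w_bounds {s : ℝ} (hs : 0 < s) {k : ℕ} (hk : 1 ≤ k) :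
    s * ((k:ℝ) + 1) ^ (-s - 1) ≤ w s k ∧ w s k ≤ s * (k:ℝ) ^ (-s - 1) := by
  have hk0 : (0:ℝ) < k := by exact_mod_cast hk
  have hk1 : (0:ℝ) < (k:ℝ) + 1 := by positivity
  obtain ⟨l1, l2⟩ := log_succ_bounds hk
  have e0 : (k:ℝ) ^ (-s) = ((k:ℝ) + 1) ^ (-s) * Real.exp (s * (Real.log (k+1) - Real.log k)) := by
    rw [Real.rpow_def_of_pos hk0, Real.rpow_def_of_pos hk1, ← Real.exp_add]; congr 1; ring
  have e1 : ((k:ℝ)+1) ^ (-s) = (k:ℝ) ^ (-s) * Real.exp (-s * (Real.log (k+1) - Real.log k)) := by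
    rw [Real.rpow_def_of_pos hk0, Real.rpow_def_of_pos hk1, ← Real.exp_add]; congr 1; ring
  have p0 : 0 < (k:ℝ) ^ (-s) := Real.rpow_pos_of_pos hk0 _
  have p1 : 0 < ((k:ℝ)+1) ^ (-s) := Real.rpow_pos_of_pos hk1 _
  unfold w
  constructor
  · rw [e0, Real.rpow_sub_one hk1.ne']
    have := Real.add_one_le_exp (s * (Real.log (k+1) - Real.log k))
    have h2 : s * (1 / ((k:ℝ)+1)) ≤ s * (Real.log (k+1) - Real.log k) := by gcongr
    calc s * (((k:ℝ)+1) ^ (-s) / (k+1)) = ((k:ℝ)+1) ^ (-s) * (s * (1 / ((k:ℝ)+1))) := by ring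
      _ ≤ ((k:ℝ)+1) ^ (-s) * (Real.exp (s * (Real.log (k+1) - Real.log k)) - 1) := by gcongr; linarith
      _ = _ := by ring
  · rw [e1, Real.rpow_sub_one hk0.ne']
    have := Real.add_one_le_exp (-s * (Real.log (k+1) - Real.log k))
    have h2 : s * (Real.log (k+1) - Real.log k) ≤ s * (1 / (k:ℝ)) := by gcongr
    calc _ = (k:ℝ) ^ (-s) * (1 - Real.exp (-s * (Real.log (k+1) - Real.log k))) := by ring
      _ ≤ (k:ℝ) ^ (-s) * (s * (1 / (k:ℝ))) := by gcongr; linarith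
      _ = _ := by ring

lemma w_nonneg {s : ℝ} (hs : 0 < s) {k : ℕ} (hk : 1 ≤ k) : 0 ≤ w s k :=
  le_trans (by positivity) (w_bounds hs hk).1

lemma w_hasSum {s : ℝ} (hs : 0 < s) {M : ℕ} (hM : 1 ≤ M) :
    HasSum (fun k => if M ≤ k then w s k else 0) ((M:ℝ) ^ (-s)) := by
  rw [hasSum_iff_tendsto_nat_of_nonneg]
  · have e : ∀ n, ∑ k ∈ range n, (if M ≤ k then w s k else 0) = (M:ℝ) ^ (-s) - ((max n M : ℕ):ℝ) ^ (-s) := by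
      intro n
      have : ∀ k, (if M ≤ k then w s k else 0) = ((max k M : ℕ):ℝ) ^ (-s) - ((max (k+1) M : ℕ):ℝ) ^ (-s) := by
        intro k
        split_ifs with h
        · rw [max_eq_left h, max_eq_left (by omega)]; simp [w]
        · rw [max_eq_right (by omega), max_eq_right (by omega)]; simp
      simp_rw [this]
      rw [Finset.sum_range_sub' (fun k => ((max k M : ℕ):ℝ) ^ (-s))]; simp
    simp_rw [e]
    have : Filter.Tendsto (fun n : ℕ => ((max n M : ℕ):ℝ) ^ (-s)) Filter.atTop (nhds 0) := by
      refine (tendsto_rpow_neg_atTop hs).comp (tendsto_natCast_atTop_atTop.comp ?_)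
      exact Filter.tendsto_atTop_mono (fun n => le_max_left n M) Filter.tendsto_id
    simpa using this.const_sub ((M:ℝ) ^ (-s))
  · intro k
    split_ifs with h
    · exact w_nonneg hs (by omega)
    · exact le_rfl

lemma Z_bounds {δ : ℝ} (hδ : 0 < δ) :
    1 / δ ≤ ∑' n : ℕ, (n:ℝ) ^ (-δ - 1) ∧ ∑' n : ℕ, (n:ℝ) ^ (-δ - 1) ≤ 1 + 1 / δ := by
  have hsm : Summable (fun n : ℕ => (n:ℝ) ^ (-δ - 1)) := Real.summable_nat_rpow.2 (by linarith)
  have hw := w_hasSum hδ (le_refl 1)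
  simp only [Nat.cast_one, Real.one_rpow] at hw
  have h0 : ((0:ℕ):ℝ) ^ (-δ - 1) = 0 := by rw [Nat.cast_zero, Real.zero_rpow (by linarith)]
  constructor
  · have : (1:ℝ) ≤ δ * ∑' n : ℕ, (n:ℝ) ^ (-δ - 1) := by
      rw [← tsum_mul_left]
      refine hw.tsum_eq.symm.le.trans ?_
      refine Summable.tsum_le_tsum (fun k => ?_) hw.summable (hsm.mul_left _)
      split_ifs with h
      · exact (w_bounds hδ h).2
      · positivity
    rw [div_le_iff₀ hδ]; linarith
  · rw [hsm.tsum_eq_zero_add, h0, zero_add]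
    have hsm1 := (summable_nat_add_iff 1).2 hsm
    rw [hsm1.tsum_eq_zero_add]
    have hsm2 := (summable_nat_add_iff 1).2 hsm1
    simp only [zero_add, Nat.cast_one, Real.one_rpow]
    have hw2 : HasSum (fun k => w δ (k+1)) 1 := by
      have := (hasSum_nat_add_iff' 1).2 hw
      simpa using this
    have : δ * ∑' n : ℕ, ((n + 1 + 1 : ℕ):ℝ) ^ (-δ - 1) ≤ 1 := by
      rw [← tsum_mul_left]
      refine le_trans ?_ hw2.tsum_eq.le
      refine Summable.tsum_le_tsum (fun k => ?_) (hsm2.mul_left _) hw2.summable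
      have := (w_bounds hδ (k := k+1) (by omega)).1
      push_cast at this ⊢
      exact this
    have : ∑' n : ℕ, ((n + 1 + 1 : ℕ):ℝ) ^ (-δ - 1) ≤ 1 / δ := by
      rw [le_div_iff₀ hδ]; linarith
    linarith

/-- coefficient after twisting -/
noncomputable def tw (a : ℕ → ℝ) (σ : ℝ) (n : ℕ) : ℝ := a n * (n:ℝ) ^ (-σ)

noncomputable def lg (n : ℕ) : ℝ := Real.log n

lemma kernel_eq {σ : ℝ} (hσ : 0 < σ) (a : ℕ → ℝ) (ha : a 0 = 0) (n m : ℕ) :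
    tw a σ n * tw a σ m * Real.exp (-σ * |lg n - lg m|) =
      a n * a m * ((max n m : ℕ):ℝ) ^ (-(2 * σ)) := by
  rcases Nat.eq_zero_or_pos n with rfl | hn
  · simp [tw, ha]
  rcases Nat.eq_zero_or_pos m with rfl | hm
  · simp [tw, ha]
  have hn0 : (0:ℝ) < n := by exact_mod_cast hn
  have hm0 : (0:ℝ) < m := by exact_mod_cast hm
  unfold tw lg
  rcases le_total n m with h | h
  · have hl : Real.log n ≤ Real.log m := Real.log_le_log hn0 (by exact_mod_cast h)
    rw [max_eq_right h, abs_of_nonpos (by linarith), Real.rpow_def_of_pos hn0, Real.rpow_def_of_pos hm0, Real.rpow_def_of_pos hm0]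
    have : Real.exp (Real.log m * -(2 * σ)) = Real.exp (Real.log n * -σ) * Real.exp (Real.log m * -σ) * Real.exp (-σ * -(Real.log n - Real.log m)) := by
      rw [← Real.exp_add, ← Real.exp_add]; congr 1; ring
    rw [this]; ring
  · have hl : Real.log m ≤ Real.log n := Real.log_le_log hm0 (by exact_mod_cast h)
    rw [max_eq_left h, abs_of_nonneg (by linarith), Real.rpow_def_of_pos hn0, Real.rpow_def_of_pos hm0, Real.rpow_def_of_pos hn0]
    have : Real.exp (Real.log n * -(2 * σ)) = Real.exp (Real.log n * -σ) * Real.exp (Real.log m * -σ) * Real.exp (-σ * (Real.log n - Real.log m)) := by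
      rw [← Real.exp_add, ← Real.exp_add]; congr 1; ring
    rw [this]; ring

lemma K_hasSum {σ : ℝ} (hσ : 0 < σ) (a : ℕ → ℝ) (ha : a 0 = 0) (hs : Summable fun n => |tw a σ n|) :
    HasSum (fun k => (S a k) ^ 2 * w (2 * σ) k) (K (tw a σ) lg σ) := by
  have h2σ : 0 < 2 * σ := by linarith
  set Φ : (ℕ × ℕ) → ℕ → ℝ := fun p k => a p.1 * a p.2 * (if max p.1 p.2 ≤ k then w (2 * σ) k else 0) with hΦ
  have hrow : ∀ p : ℕ × ℕ, HasSum (Φ p) (a p.1 * a p.2 * ((max p.1 p.2 : ℕ):ℝ) ^ (-(2 * σ))) := by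
    intro p
    by_cases h : 1 ≤ max p.1 p.2
    · exact (w_hasSum h2σ h).mul_left _
    · have h1 : p.1 = 0 := by omega
      have : Φ p = fun _ => 0 := by ext k; simp [hΦ, h1, ha]
      rw [this, h1, ha]; simpa using hasSum_zero
  have habs : ∀ p : ℕ × ℕ, HasSum (fun k => |Φ p k|) (|a p.1 * a p.2 * ((max p.1 p.2 : ℕ):ℝ) ^ (-(2 * σ))|) := by
    intro p
    by_cases h : 1 ≤ max p.1 p.2
    · have := (w_hasSum h2σ h).mul_left |a p.1 * a p.2|
      rw [abs_mul, abs_of_nonneg (a := ((max p.1 p.2 : ℕ):ℝ) ^ (-(2 * σ))) (by positivity)]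
      refine this.congr_fun ?_ |> fun h => h
      intro k
      simp only [hΦ, abs_mul]
      congr 1
      split_ifs with h'
      · exact (abs_of_nonneg (w_nonneg h2σ (h.trans h')))
      · simp
    · have h1 : p.1 = 0 := by omega
      have : (fun k => |Φ p k|) = fun _ => 0 := by ext k; simp [hΦ, h1, ha]
      rw [this, h1, ha]; simpa using hasSum_zero
  have hKs := K_summable (tw a σ) lg hs hσ.le
  simp_rw [kernel_eq hσ a ha] at hKs
  have hsumm : Summable (fun q : (ℕ × ℕ) × ℕ => Φ q.1 q.2) := by
    rw [← summable_abs_iff]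
    rw [summable_prod_of_nonneg (fun _ => abs_nonneg _)]
    refine ⟨fun p => (habs p).summable, ?_⟩
    simp_rw [(habs _).tsum_eq]
    exact hKs.abs
  have h1 : HasSum (fun q : (ℕ × ℕ) × ℕ => Φ q.1 q.2) (K (tw a σ) lg σ) := by
    have := hsumm.hasSum
    have e := this.prod_fiberwise hrow
    have : ∑' q : (ℕ × ℕ) × ℕ, Φ q.1 q.2 = K (tw a σ) lg σ := by
      rw [← e.tsum_eq]; unfold K; simp_rw [kernel_eq hσ a ha]
    rwa [← this]
  have h2 : HasSum (fun q : ℕ × (ℕ × ℕ) => Φ q.2 q.1) (K (tw a σ) lg σ) :=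
    ((Equiv.prodComm ℕ (ℕ × ℕ)).hasSum_iff (f := fun q : (ℕ × ℕ) × ℕ => Φ q.1 q.2)).2 h1
  refine h2.prod_fiberwise fun k => ?_
  have : S a k ^ 2 * w (2 * σ) k = ∑ p ∈ (Icc 1 k ×ˢ Icc 1 k), Φ p k := by
    rw [Finset.sum_product, sq, S, Finset.sum_mul_sum, Finset.sum_mul]
    refine Finset.sum_congr rfl fun n hn => ?_
    rw [Finset.sum_mul]
    refine Finset.sum_congr rfl fun m hm => ?_
    have := mem_Icc.1 hn; have := mem_Icc.1 hm
    simp only [hΦ]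
    rw [if_pos (by omega)]
  rw [this]
  refine hasSum_sum_of_ne_finset_zero fun p hp => ?_
  simp only [mem_product, mem_Icc, not_and_or] at hp
  simp only [hΦ]
  by_cases h1 : p.1 = 0
  · simp [h1, ha]
  by_cases h2 : p.2 = 0
  · simp [h2, ha]
  rw [if_neg (by omega), mul_zero]

end MV

namespace MV
open Finset

structure CM (g : ℕ → ℝ) : Prop where
  zero : g 0 = 0
  one : g 1 = 1
  mul : ∀ a b, g (a * b) = g a * g b
  le : ∀ n, |g n| ≤ 1

lemma tw_summable {g : ℕ → ℝ} (hg : CM g) {σ : ℝ} (hσ : 1 < σ) : Summable fun n => |tw g σ n| := by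
  have h : Summable fun n : ℕ => (n:ℝ) ^ (-σ) := Real.summable_nat_rpow.2 (by linarith)
  refine Summable.of_nonneg_of_le (fun n => abs_nonneg _) (fun n => ?_) h
  unfold tw
  have h0 : 0 ≤ (n:ℝ) ^ (-σ) := by positivity
  rw [abs_mul, abs_of_nonneg h0]
  exact mul_le_of_le_one_left h0 (hg.le n)

noncomputable def hom {g : ℕ → ℝ} (hg : CM g) (σ t : ℝ) : ℕ →*₀ ℂ where
  toFun n := (tw g σ n : ℂ) * Complex.exp (-(t * lg n) * Complex.I)
  map_zero' := by simp [tw, hg.zero]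
  map_one' := by simp [tw, hg.one, lg]
  map_mul' a b := by
    rcases Nat.eq_zero_or_pos a with rfl | ha
    · simp [tw, hg.zero]
    rcases Nat.eq_zero_or_pos b with rfl | hb
    · simp [tw, hg.zero]
    have ha' : (a:ℝ) ≠ 0 := by positivity
    have hb' : (b:ℝ) ≠ 0 := by positivity
    have e : lg (a * b) = lg a + lg b := by
      unfold lg; push_cast; exact Real.log_mul ha' hb'
    have e2 : tw g σ (a * b) = tw g σ a * tw g σ b := by
      unfold tw; push_cast
      rw [hg.mul, Real.mul_rpow (by positivity) (by positivity)]; ring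
    rw [e, e2]; push_cast
    rw [show (-(t * ((lg a:ℂ) + lg b)) * Complex.I) = -(t * lg a) * Complex.I + -(t * lg b) * Complex.I by ring, Complex.exp_add]
    ring

lemma hom_apply {g : ℕ → ℝ} (hg : CM g) (σ t : ℝ) (n : ℕ) :
  hom hg σ t n = (tw g σ n : ℂ) * Complex.exp (-(t * lg n) * Complex.I) := rfl

lemma hom_norm {g : ℕ → ℝ} (hg : CM g) (σ t : ℝ) (n : ℕ) : ‖hom hg σ t n‖ = |tw g σ n| := by
  rw [hom_apply, norm_term]

lemma hom_re {g : ℕ → ℝ} (hg : CM g) (σ t : ℝ) (n : ℕ) :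
    (hom hg σ t n).re = g n * Real.cos (t * lg n) * (n:ℝ) ^ (-σ) := by
  rw [hom_apply, Complex.re_ofReal_mul,
    show (-(t * (lg n:ℂ)) * Complex.I) = ((-(t * lg n) : ℝ) : ℂ) * Complex.I by push_cast; ring,
    Complex.exp_ofReal_mul_I_re, Real.cos_neg]
  unfold tw; ring

noncomputable def C0 : ℝ := ∑' p : Nat.Primes, (p:ℝ) ^ (-2 : ℝ)

lemma prime_tw_le {g : ℕ → ℝ} (hg : CM g) {σ : ℝ} (hσ : 1 < σ) (p : Nat.Primes) :
    |tw g σ p| ≤ (p:ℝ) ^ (-1:ℝ) := by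
  have h1 : (1:ℝ) ≤ p := by exact_mod_cast p.2.one_lt.le
  unfold tw
  rw [abs_mul, abs_of_nonneg (by positivity : 0 ≤ ((p:ℕ):ℝ) ^ (-σ))]
  calc _ ≤ 1 * ((p:ℕ):ℝ) ^ (-σ) := by gcongr; exact hg.le _
    _ ≤ _ := by rw [one_mul]; exact Real.rpow_le_rpow_of_exponent_le h1 (by linarith)

lemma key {g : ℕ → ℝ} (hg : CM g) {σ : ℝ} (hσ : 1 < σ) (t : ℝ) :
    Real.exp (-C0 + ∑' p : Nat.Primes, g p * Real.cos (t * lg p) * (p:ℝ) ^ (-σ)) ≤ ‖E (tw g σ) lg t‖ ∧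
    ‖E (tw g σ) lg t‖ ≤ Real.exp (C0 + ∑' p : Nat.Primes, g p * Real.cos (t * lg p) * (p:ℝ) ^ (-σ)) := by
  set h := hom hg σ t with hh
  have hsum : Summable (‖h ·‖) := by
    simp only [hh, hom_norm]; exact tw_summable hg hσ
  have hE : E (tw g σ) lg t = ∑' n, h n := by
    unfold E; rfl
  rw [hE, ← EulerProduct.exp_tsum_primes_log_eq_tsum hsum, Complex.norm_exp, Real.exp_le_exp, Real.exp_le_exp]
  have s1 : Summable fun p : Nat.Primes => -Complex.log (1 - h p) :=
    hsum.of_norm.clog_one_sub.neg.subtype Nat.Prime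
  have s2 : Summable fun p : Nat.Primes => h p := hsum.of_norm.subtype Nat.Prime
  have s3 : Summable fun p : Nat.Primes => (p:ℝ) ^ (-2:ℝ) :=
    (Real.summable_nat_rpow.2 (by norm_num : (-2:ℝ) < -1)).subtype Nat.Prime
  have bd : ∀ p : Nat.Primes, ‖-Complex.log (1 - h p) - h p‖ ≤ (p:ℝ) ^ (-2:ℝ) := by
    intro p
    have h2 : (2:ℝ) ≤ p := by exact_mod_cast p.2.two_le
    have hn : ‖h p‖ ≤ (p:ℝ) ^ (-1:ℝ) := by rw [hh, hom_norm]; exact prime_tw_le hg hσ p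
    have hhalf : ‖h p‖ ≤ 1/2 := by
      refine hn.trans ?_
      rw [Real.rpow_neg_one, one_div]
      exact inv_anti₀ (by norm_num) h2
    have := Complex.norm_log_one_add_sub_self_le (z := - h p) (by rw [norm_neg]; linarith)
    have e : ‖-Complex.log (1 - h p) - h p‖ = ‖Complex.log (1 + -h p) - -h p‖ := by
      rw [← norm_neg]; congr 1; rw [← sub_eq_add_neg]; ring
    rw [e]
    refine this.trans ?_
    rw [norm_neg]
    have i1 : (1 - ‖h p‖)⁻¹ ≤ 2 := by
      rw [inv_le_comm₀ (by linarith) (by norm_num)]; linarith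
    have e2 : (p:ℝ) ^ (-2:ℝ) = ((p:ℝ) ^ (-1:ℝ)) ^ 2 := by
      rw [← Real.rpow_natCast, ← Real.rpow_mul (by positivity)]; norm_num
    rw [e2]
    have : ‖h p‖ ^ 2 ≤ ((p:ℝ) ^ (-1:ℝ)) ^ 2 := by gcongr
    have : ‖h p‖ ^ 2 * (1 - ‖h p‖)⁻¹ ≤ ‖h p‖ ^ 2 * 2 := by gcongr
    linarith
  have main : |(∑' p : Nat.Primes, -Complex.log (1 - h p)).re - ∑' p : Nat.Primes, g p * Real.cos (t * lg p) * (p:ℝ) ^ (-σ)| ≤ C0 := by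
    have e : ∑' p : Nat.Primes, g p * Real.cos (t * lg p) * (p:ℝ) ^ (-σ) = (∑' p : Nat.Primes, h p).re := by
      rw [Complex.re_tsum s2]
      simp only [hh, hom_re]
    rw [e, ← Complex.sub_re, ← s1.tsum_sub s2]
    refine (Complex.abs_re_le_norm _).trans ?_
    have sn : Summable fun p : Nat.Primes => ‖-Complex.log (1 - h p) - h p‖ :=
      Summable.of_nonneg_of_le (fun _ => norm_nonneg _) bd s3
    exact (norm_tsum_le_tsum_norm sn).trans (sn.tsum_le_tsum bd s3)
  have := abs_le.1 main
  constructor <;> linarith [this.1, this.2]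

noncomputable def u (n : ℕ) : ℝ := if n = 0 then 0 else 1

lemma u_CM : CM u := by
  refine ⟨by simp [u], by simp [u], fun a b => ?_, fun n => ?_⟩
  · by_cases ha : a = 0 <;> by_cases hb : b = 0 <;> simp [u, ha, hb]
  · unfold u; split_ifs <;> simp

lemma tw_u {σ : ℝ} (hσ : 0 < σ) (n : ℕ) : tw u σ n = (n:ℝ) ^ (-σ) := by
  unfold tw u
  split_ifs with h
  · subst h; simp [Real.zero_rpow (by linarith : -σ ≠ 0)]
  · simp

lemma E_u_zero {δ : ℝ} (hδ : 0 < δ) : ‖E (tw u (1 + δ)) lg 0‖ = ∑' n : ℕ, (n:ℝ) ^ (-δ - 1) := by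
  have : E (tw u (1 + δ)) lg 0 = ((∑' n : ℕ, (n:ℝ) ^ (-δ - 1) : ℝ) : ℂ) := by
    unfold E
    rw [Complex.ofReal_tsum]
    refine tsum_congr fun n => ?_
    rw [tw_u (by linarith)]
    simp
    rw [sub_eq_add_neg]
  rw [this, Complex.norm_real, Real.norm_of_nonneg]
  exact tsum_nonneg fun n => by positivity

lemma E_u_zeta {δ : ℝ} (hδ : 0 < δ) (t : ℝ) : E (tw u (1 + δ)) lg t = riemannZeta (1 + δ + t * Complex.I) := by
  rw [zeta_eq_tsum_one_div_nat_cpow (by simp; exact hδ)]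
  unfold E
  refine tsum_congr fun n => ?_
  rcases Nat.eq_zero_or_pos n with rfl | hn
  · have : (1 + (δ:ℂ) + t * Complex.I) ≠ 0 := by
      intro h
      have := congrArg Complex.re h
      simp at this; linarith
    simp [tw, u, Complex.zero_cpow this]
  · have hn' : (n:ℂ) ≠ 0 := by exact_mod_cast hn.ne'
    rw [tw_u (by linarith), one_div, ← Complex.cpow_neg, Complex.ofReal_cpow (by positivity),
      Complex.ofReal_natCast, Complex.cpow_def_of_ne_zero hn', Complex.cpow_def_of_ne_zero hn', ← Complex.exp_add]
    congr 1
    unfold lg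
    rw [← Complex.natCast_log]
    push_cast; ring

lemma prime_summable {g : ℕ → ℝ} (hg : CM g) {σ : ℝ} (hσ : 1 < σ) (t : ℝ) :
    Summable fun p : Nat.Primes => g p * Real.cos (t * lg p) * (p:ℝ) ^ (-σ) := by
  have s2 : Summable fun p : Nat.Primes => (p:ℝ) ^ (-σ) :=
    (Real.summable_nat_rpow.2 (by linarith : (-σ:ℝ) < -1)).subtype Nat.Prime
  refine Summable.of_norm_bounded s2 fun p => ?_
  rw [Real.norm_eq_abs, abs_mul, abs_mul, abs_of_nonneg (by positivity : 0 ≤ ((p:ℕ):ℝ) ^ (-σ))]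
  refine mul_le_of_le_one_left (by positivity) ?_
  exact mul_le_one₀ (hg.le _) (abs_nonneg _) (Real.abs_cos_le_one _)

noncomputable def dterm (g : ℕ → ℝ) (δ t : ℝ) (p : ℕ) : ℝ := (1 - g p * Real.cos (t * lg p)) * (p:ℝ) ^ (-(1 + δ))

lemma dterm_nonneg {g : ℕ → ℝ} (hg : CM g) (δ t : ℝ) (p : ℕ) : 0 ≤ dterm g δ t p := by
  unfold dterm
  have : |g p * Real.cos (t * lg p)| ≤ 1 := by
    rw [abs_mul]; exact mul_le_one₀ (hg.le _) (abs_nonneg _) (Real.abs_cos_le_one _)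
  have := (abs_le.1 this).2
  have : 0 ≤ (1 - g p * Real.cos (t * lg p)) := by linarith
  positivity

lemma dterm_hasSum {g : ℕ → ℝ} (hg : CM g) {δ : ℝ} (hδ : 0 < δ) (t : ℝ) :
    HasSum (fun p : Nat.Primes => dterm g δ t p)
      (∑' p : Nat.Primes, u p * Real.cos (0 * lg p) * (p:ℝ) ^ (-(1+δ)) - ∑' p : Nat.Primes, g p * Real.cos (t * lg p) * (p:ℝ) ^ (-(1+δ))) := by
  have := (prime_summable u_CM (by linarith : 1 < 1 + δ) 0).hasSum.sub (prime_summable hg (by linarith : 1 < 1 + δ) t).hasSum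
  refine this.congr_fun ?_ |> fun h => h
  intro p
  have : u p = 1 := by simp [u, p.2.ne_zero]
  rw [this]; unfold dterm; simp; ring

lemma key2 {g : ℕ → ℝ} (hg : CM g) {δ : ℝ} (hδ : 0 < δ) (t : ℝ) :
    ‖E (tw g (1 + δ)) lg t‖ ≤ Real.exp (2 * C0 - ∑' p : Nat.Primes, dterm g δ t p) * ∑' n : ℕ, (n:ℝ) ^ (-δ - 1) := by
  have h1 := (key u_CM (by linarith : 1 < 1 + δ) 0).1
  rw [E_u_zero hδ] at h1
  have h2 := (key hg (by linarith : 1 < 1 + δ) t).2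
  rw [(dterm_hasSum hg hδ t).tsum_eq]
  refine h2.trans (le_trans (le_of_eq ?_) (mul_le_mul_of_nonneg_left h1 (Real.exp_pos _).le))
  rw [← Real.exp_add]; congr 1; ring

lemma key3 {g : ℕ → ℝ} (hg : CM g) {δ : ℝ} (hδ : 0 < δ) (t : ℝ) :
    Real.exp (-2 * C0 - ∑' p : Nat.Primes, dterm g δ t p) * ∑' n : ℕ, (n:ℝ) ^ (-δ - 1) ≤ ‖E (tw g (1 + δ)) lg t‖ := by
  have h1 := (key u_CM (by linarith : 1 < 1 + δ) 0).2
  rw [E_u_zero hδ] at h1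
  have h2 := (key hg (by linarith : 1 < 1 + δ) t).1
  rw [(dterm_hasSum hg hδ t).tsum_eq]
  refine le_trans (le_trans (mul_le_mul_of_nonneg_left h1 (Real.exp_pos _).le) (le_of_eq ?_)) h2
  rw [← Real.exp_add]; congr 1; ring

end MV

namespace MV
open Finset Filter Topology

/-- zeta pole argument -/
lemma cos_not_summable {t : ℝ} (ht : t ≠ 0) : ¬ Summable fun p : Nat.Primes => dterm u 0 t p := by
  intro hs
  set B := ∑' p : Nat.Primes, dterm u 0 t p
  have h1 : ∀ δ : ℝ, 0 < δ → Real.exp (-2 * C0 - B) * (1 / δ) ≤ ‖riemannZeta (1 + δ + t * Complex.I)‖ := by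
    intro δ hδ
    rw [← E_u_zeta hδ]
    refine le_trans ?_ (key3 u_CM hδ t)
    have hD : ∑' p : Nat.Primes, dterm u δ t p ≤ B := by
      refine (dterm_hasSum u_CM hδ t).summable.tsum_le_tsum (fun p => ?_) hs
      unfold dterm
      have hp : (1:ℝ) ≤ p := by exact_mod_cast p.2.one_lt.le
      have h0 := dterm_nonneg u_CM 0 t p
      unfold dterm at h0
      have hp2 : 0 < ((p:ℕ):ℝ) ^ (-(1 + 0) : ℝ) := by positivity
      have h3 : 0 ≤ 1 - u p * Real.cos (t * lg p) := nonneg_of_mul_nonneg_left h0 hp2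
      refine mul_le_mul_of_nonneg_left ?_ h3
      exact Real.rpow_le_rpow_of_exponent_le hp (by linarith)
    have hZ := (Z_bounds hδ).1
    gcongr
  have hc : ContinuousAt riemannZeta (1 + t * Complex.I) := by
    refine (differentiableAt_riemannZeta ?_).continuousAt
    intro h
    have := congrArg Complex.im h
    simp at this; exact ht this
  have hc2 : Tendsto (fun δ : ℝ => ‖riemannZeta (1 + δ + t * Complex.I)‖) (𝓝[>] 0) (𝓝 ‖riemannZeta (1 + t * Complex.I)‖) := by
    have h3 : Tendsto (fun δ : ℝ => (1 + δ + t * Complex.I : ℂ)) (𝓝[>] 0) (𝓝 (1 + t * Complex.I)) := by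
      have : Continuous (fun δ : ℝ => (1 + δ + t * Complex.I : ℂ)) := by fun_prop
      have := this.tendsto 0
      simp only [Complex.ofReal_zero, add_zero] at this
      exact this.mono_left nhdsWithin_le_nhds
    exact (hc.tendsto.comp h3).norm
  have hinf : Tendsto (fun δ : ℝ => Real.exp (-2 * C0 - B) * (1 / δ)) (𝓝[>] 0) atTop := by
    simp only [one_div]
    exact tendsto_inv_nhdsGT_zero.const_mul_atTop (Real.exp_pos _)
  have hinf2 : Tendsto (fun δ : ℝ => ‖riemannZeta (1 + δ + t * Complex.I)‖) (𝓝[>] 0) atTop := by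
    refine tendsto_atTop_mono' _ ?_ hinf
    filter_upwards [self_mem_nhdsWithin] with δ hδ using h1 δ hδ
  exact not_tendsto_nhds_of_tendsto_atTop hinf2 _ hc2

lemma dterm_not_summable {g : ℕ → ℝ} (hg : CM g) (h0 : ¬ Summable fun p : Nat.Primes => (1 - g p) / p) (t : ℝ) :
    ¬ Summable fun p : Nat.Primes => dterm g 0 t p := by
  by_cases ht : t = 0
  · subst ht
    convert h0 using 3 with p
    unfold dterm
    simp [Real.rpow_neg_one, div_eq_mul_inv]
  · intro hs
    refine cos_not_summable (t := 2 * t) (by simpa using ht) ?_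
    refine Summable.of_nonneg_of_le (fun p => dterm_nonneg u_CM _ _ _) (fun p => ?_) (hs.mul_left 4)
    unfold dterm
    rw [← mul_assoc]
    refine mul_le_mul_of_nonneg_right ?_ (by positivity)
    have hu : u p = 1 := by simp [u, p.2.ne_zero]
    rw [hu, one_mul, mul_assoc, Real.cos_two_mul]
    have h1 := hg.le p
    have h2 : g p * Real.cos (t * lg p) ≤ |Real.cos (t * lg p)| := by
      refine (le_abs_self _).trans ?_
      rw [abs_mul]; exact mul_le_of_le_one_left (abs_nonneg _) h1
    have h3 := Real.abs_cos_le_one (t * lg p)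
    have h4 := sq_abs (Real.cos (t * lg p))
    nlinarith [abs_nonneg (Real.cos (t * lg p))]

lemma F_small {g : ℕ → ℝ} (hg : CM g) (h0 : ¬ Summable fun p : Nat.Primes => (1 - g p) / p)
    {ε : ℝ} (hε : 0 < ε) (R : ℝ) :
    ∀ᶠ δ in 𝓝[>] (0:ℝ), ∀ t, |t| ≤ R → ‖E (tw g (1 + δ)) lg t‖ ≤ ε / δ := by
  have key : ∀ᶠ δ in 𝓝 (0:ℝ), ∀ t ∈ Set.Icc (-R) R, (0 < δ → δ ≤ 1 → ‖E (tw g (1 + δ)) lg t‖ ≤ ε / δ) := by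
    refine isCompact_Icc.eventually_forall_of_forall_eventually fun t _ => ?_
    obtain ⟨M, hM⟩ : ∃ M : ℝ, Real.exp (2 * C0 - M) * 2 ≤ ε := by
      refine ⟨2 * C0 - Real.log (ε / 2), ?_⟩
      rw [show 2 * C0 - (2 * C0 - Real.log (ε / 2)) = Real.log (ε/2) by ring, Real.exp_log (by positivity)]
      linarith
    obtain ⟨s, hs⟩ : ∃ s : Finset Nat.Primes, M < ∑ p ∈ s, dterm g 0 t p := by
      by_contra! hcon
      exact dterm_not_summable hg h0 t (summable_of_sum_le (fun p => dterm_nonneg hg _ _ _) hcon)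
    have hcont : Continuous fun z : ℝ × ℝ => ∑ p ∈ s, dterm g z.1 z.2 p := by
      refine continuous_finsetSum _ fun p _ => ?_
      unfold dterm
      have hp : ((p:ℕ):ℝ) ≠ 0 := by exact_mod_cast p.2.ne_zero
      refine Continuous.mul (by fun_prop) ?_
      exact Continuous.rpow continuous_const (by fun_prop) (fun _ => Or.inl hp)
    have hev := hcont.continuousAt (x := ((0:ℝ), t)) |>.eventually (lt_mem_nhds hs)
    filter_upwards [hev] with z hz hz0 hz1
    refine (key2 hg hz0 z.2).trans ?_
    have hle : M ≤ ∑' p : Nat.Primes, dterm g z.1 z.2 p :=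
      hz.le.trans ((dterm_hasSum hg hz0 z.2).summable.sum_le_tsum s (fun p _ => dterm_nonneg hg _ _ _))
    have hZ := (Z_bounds hz0).2
    have hZ2 : 1 + 1 / z.1 ≤ 2 / z.1 := by
      rw [show 2 / z.1 = 1 / z.1 + 1 / z.1 by ring]
      have : 1 ≤ 1 / z.1 := by rw [le_div_iff₀ hz0]; linarith
      linarith
    calc _ ≤ Real.exp (2 * C0 - M) * (2 / z.1) := by
            gcongr; exact hZ.trans hZ2
      _ = (Real.exp (2 * C0 - M) * 2) / z.1 := by ring
      _ ≤ _ := by gcongr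
  have k3 : ∀ᶠ δ in 𝓝[>] (0:ℝ), δ ≤ 1 := by
    refine Filter.Eventually.filter_mono nhdsWithin_le_nhds ?_
    exact (gt_mem_nhds (by norm_num : (0:ℝ) < 1)).mono fun _ h => le_of_lt h
  filter_upwards [self_mem_nhdsWithin, nhdsWithin_le_nhds key, k3] with δ h1 h2 h3 t ht
  exact h2 t (abs_le.1 ht) h1 h3

lemma not_summable_of_conv (f : ℕ → ℝ) (c : ℝ) (hc : c < 1) (hf : ∀ n, 1 ≤ n → f n ≤ 1)
    (hconv : ∃ L : ℝ, Filter.Tendsto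
      (fun N : ℕ => ∑ p ∈ N.primesBelow, (c - f p) / p) Filter.atTop (nhds L)) :
    ¬ Summable fun p : Nat.Primes => (1 - f p) / p := by
  intro hs
  obtain ⟨L, hL⟩ := hconv
  obtain ⟨B, hB⟩ := hL.bddBelow_range
  have hs2 : Summable (Set.indicator {p : ℕ | p.Prime} fun n : ℕ => (1 - f n) / n) :=
    summable_subtype_iff_indicator.1 hs
  refine not_summable_one_div_on_primes ?_
  refine summable_of_sum_range_le (c := (∑' n, Set.indicator {p : ℕ | p.Prime} (fun n : ℕ => (1 - f n) / n) n - B) / (1 - c)) (fun n => Set.indicator_nonneg (fun p _ => by positivity) _) fun N => ?_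
  have conv : ∀ h : ℕ → ℝ, ∑ i ∈ range N, Set.indicator {p : ℕ | p.Prime} h i = ∑ p ∈ N.primesBelow, h p := by
    intro h
    rw [Nat.primesBelow, Finset.sum_filter]
    refine Finset.sum_congr rfl fun i _ => ?_
    simp [Set.indicator_apply]
  rw [conv, le_div_iff₀ (by linarith)]
  have h1 : ∑ p ∈ N.primesBelow, (1 - f p) / p ≤ ∑' n, Set.indicator {p : ℕ | p.Prime} (fun n : ℕ => (1 - f n) / n) n := by
    rw [← conv]
    refine hs2.sum_le_tsum _ fun n _ => Set.indicator_nonneg (fun p hp => ?_) _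
    have := hf p (Nat.Prime.one_lt hp).le
    exact div_nonneg (by linarith) (by positivity)
  have h2 : B ≤ ∑ p ∈ N.primesBelow, (c - f p) / p := hB (Set.mem_range_self N)
  have h3 : (∑ p ∈ N.primesBelow, (1:ℝ) / p) * (1 - c) = ∑ p ∈ N.primesBelow, (1 - f p) / p - ∑ p ∈ N.primesBelow, (c - f p) / p := by
    rw [Finset.sum_mul, ← Finset.sum_sub_distrib]
    refine Finset.sum_congr rfl fun i _ => by ring
  linarith
end MV

namespace MV
open Finset Filter Topology
open scoped ArithmeticFunction.vonMangoldt

lemma log_tw_summable {σ : ℝ} (hσ : 1 < σ) : Summable fun n : ℕ => tw lg σ n := by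
  obtain ⟨δ, rfl⟩ : ∃ δ, σ = 1 + δ := ⟨σ - 1, by ring⟩
  have hδ : 0 < δ := by linarith
  have h : Summable fun n : ℕ => (2 / δ) * (n:ℝ) ^ (-(1 + δ / 2)) :=
    (Real.summable_nat_rpow.2 (by linarith)).mul_left _
  refine Summable.of_nonneg_of_le (fun n => ?_) (fun n => ?_) h
  · unfold tw lg; exact mul_nonneg (Real.log_natCast_nonneg n) (by positivity)
  · unfold tw lg
    rcases Nat.eq_zero_or_pos n with rfl | hn
    · simp; positivity
    have hn' : (0:ℝ) < n := by positivity
    calc Real.log n * (n:ℝ) ^ (-(1+δ)) ≤ ((n:ℝ) ^ (δ/2) / (δ/2)) * (n:ℝ) ^ (-(1+δ)) := by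
          gcongr; exact Real.log_le_rpow_div hn'.le (by positivity)
      _ = (2/δ) * ((n:ℝ) ^ (δ/2) * (n:ℝ) ^ (-(1+δ))) := by field_simp
      _ = _ := by rw [← Real.rpow_add hn']; congr 2; ring

lemma tw_abs_le {a b : ℕ → ℝ} (h : ∀ n, |a n| ≤ b n) (σ : ℝ) (n : ℕ) : |tw a σ n| ≤ tw b σ n := by
  unfold tw
  have h0 : 0 ≤ (n:ℝ) ^ (-σ) := by positivity
  rw [abs_mul, abs_of_nonneg h0]
  exact mul_le_mul_of_nonneg_right (h n) h0

lemma tw_summable_of_le {a : ℕ → ℝ} (h : ∀ n, |a n| ≤ lg n) {σ : ℝ} (hσ : 1 < σ) : Summable fun n => |tw a σ n| :=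
  Summable.of_nonneg_of_le (fun _ => abs_nonneg _) (tw_abs_le h σ) (log_tw_summable hσ)

lemma Lam_le (n : ℕ) : |Λ n| ≤ lg n := by
  rw [abs_of_nonneg ArithmeticFunction.vonMangoldt_nonneg]
  exact ArithmeticFunction.vonMangoldt_le_log

lemma mulbd {g b : ℕ → ℝ} (hg : CM g) {h : ℕ → ℝ} (hb : ∀ n, |b n| ≤ h n) (n : ℕ) : |g n * b n| ≤ h n := by
  rw [abs_mul]
  exact (mul_le_of_le_one_left (abs_nonneg _) (hg.le n)).trans (hb n)

lemma term_eq (a : ℕ → ℝ) (ha : a 0 = 0) {σ : ℝ} (hσ : 0 < σ) (t : ℝ) (n : ℕ) :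
    LSeries.term (fun n => (a n : ℂ)) (σ + t * Complex.I) n = (tw a σ n : ℂ) * Complex.exp (-(t * lg n) * Complex.I) := by
  rcases Nat.eq_zero_or_pos n with rfl | hn
  · simp [tw, ha]
  · have hn' : (n:ℂ) ≠ 0 := by exact_mod_cast hn.ne'
    rw [LSeries.term_of_ne_zero hn.ne', div_eq_mul_inv, ← Complex.cpow_neg]
    unfold tw
    push_cast
    rw [Complex.ofReal_cpow (by positivity), mul_assoc,
      Complex.ofReal_natCast, Complex.cpow_def_of_ne_zero hn', Complex.cpow_def_of_ne_zero hn', ← Complex.exp_add]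
    congr 2
    unfold lg
    rw [← Complex.natCast_log]
    push_cast; ring

lemma E_eq_LSeries (a : ℕ → ℝ) (ha : a 0 = 0) {σ : ℝ} (hσ : 0 < σ) (t : ℝ) :
    E (tw a σ) lg t = LSeries (fun n => (a n : ℂ)) (σ + t * Complex.I) := by
  unfold E LSeries
  exact tsum_congr fun n => (term_eq a ha hσ t n).symm

lemma LSummable (a : ℕ → ℝ) (ha : a 0 = 0) {σ : ℝ} (hσ : 0 < σ) (t : ℝ) (hs : Summable fun n => |tw a σ n|) :
    LSeriesSummable (fun n => (a n : ℂ)) (σ + t * Complex.I) := by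
  refine Summable.of_norm ?_
  refine hs.congr fun n => ?_
  rw [term_eq a ha hσ, norm_term]

lemma E_mul {g : ℕ → ℝ} (hg : CM g) {σ : ℝ} (hσ : 1 < σ) (t : ℝ) :
    E (tw (fun n => g n * lg n) σ) lg t = E (tw (fun n => g n * Λ n) σ) lg t * E (tw g σ) lg t := by
  have h1 : 0 < σ := by linarith
  rw [E_eq_LSeries _ (by simp [hg.zero]) h1, E_eq_LSeries _ (by simp [hg.zero]) h1, E_eq_LSeries _ hg.zero h1,
    ← LSeries_convolution' (LSummable _ (by simp [hg.zero]) h1 t (tw_summable_of_le (mulbd hg Lam_le) hσ))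
      (LSummable _ hg.zero h1 t (tw_summable hg hσ))]
  refine LSeries_congr (fun {n} hn => ?_) _
  rw [LSeries.convolution_def]
  have : lg n = ∑ p ∈ n.divisorsAntidiagonal, Λ p.1 := by
    unfold lg
    rw [← ArithmeticFunction.vonMangoldt_sum, Nat.sum_divisorsAntidiagonal (f := fun i _ => Λ i)]
  rw [this, Finset.mul_sum]
  push_cast
  refine Finset.sum_congr rfl fun p hp => ?_
  have := (Nat.mem_divisorsAntidiagonal.1 hp).1
  rw [← this, hg.mul]; push_cast; ring

lemma K_split {g : ℕ → ℝ} (hg : CM g) {δ ε R : ℝ} (hδ : 0 < δ) (hδ1 : δ ≤ 1) (hε : 0 < ε) (hR : 2 ≤ R)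
    (hF : ∀ t, |t| ≤ R → ‖E (tw g (1 + δ)) lg t‖ ≤ ε / δ) :
    K (tw (fun n => g n * lg n) (1 + δ)) lg (1 + δ) ≤ (ε / δ) ^ 2 * K (tw (fun n => Λ n) (1+δ)) lg (1+δ)
      + 4 / R * K (tw lg (1 + δ)) lg (1+δ) := by
  have hσ : 1 < 1 + δ := by linarith
  have hσ0 : 0 < 1 + δ := by linarith
  have hR0 : 0 < R := by linarith
  set σ := 1 + δ with hσd
  set a : ℕ → ℝ := fun n => g n * lg n with had
  have hlg : ∀ n, |lg n| ≤ lg n := fun n => by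
    rw [abs_of_nonneg]; exact Real.log_natCast_nonneg n
  have hba : ∀ n, |a n| ≤ lg n := mulbd hg hlg
  have hsa := tw_summable_of_le hba hσ
  have hsL := tw_summable_of_le (mulbd hg Lam_le) hσ
  have p1 := plancherel (tw a σ) lg hsa hσ0
  have p2 := plancherel (tw a σ) lg hsa hR0
  have p3 := plancherel (tw (fun n => g n * Λ n) σ) lg hsL hσ0
  have hpt : ∀ t : ℝ, ‖E (tw a σ) lg t‖ ^ 2 * (1 / (σ ^ 2 + t ^ 2)) ≤
      (ε / δ) ^ 2 * (‖E (tw (fun n => g n * Λ n) σ) lg t‖ ^ 2 * (1 / (σ ^ 2 + t ^ 2))) + 2 * (‖E (tw a σ) lg t‖ ^ 2 * (1 / (R ^ 2 + t ^ 2))) := by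
    intro t
    by_cases ht : |t| ≤ R
    · have h1 := hF t ht
      have h2 : ‖E (tw a σ) lg t‖ ^ 2 ≤ (ε / δ) ^ 2 * ‖E (tw (fun n => g n * Λ n) σ) lg t‖ ^ 2 := by
        rw [had, E_mul hg hσ, norm_mul, mul_pow, mul_comm]
        gcongr
      have h3 : 0 ≤ 1 / (σ ^ 2 + t ^ 2) := by positivity
      have h4 : 0 ≤ 2 * (‖E (tw a σ) lg t‖ ^ 2 * (1 / (R ^ 2 + t ^ 2))) := by positivity
      have := mul_le_mul_of_nonneg_right h2 h3
      linarith
    · push Not at ht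
      have h1 : R ^ 2 ≤ t ^ 2 := by
        rw [← sq_abs t]; gcongr
      have h2 : 1 / (σ ^ 2 + t ^ 2) ≤ 2 * (1 / (R ^ 2 + t ^ 2)) := by
        rw [mul_one_div, div_le_div_iff₀ (by positivity) (by positivity)]
        nlinarith [sq_nonneg σ]
      have h4 : 0 ≤ (ε / δ) ^ 2 * (‖E (tw (fun n => g n * Λ n) σ) lg t‖ ^ 2 * (1 / (σ ^ 2 + t ^ 2))) := by positivity
      have := mul_le_mul_of_nonneg_left h2 (sq_nonneg ‖E (tw a σ) lg t‖)
      linarith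
  have hInt := MeasureTheory.integral_mono (E_int (tw a σ) lg hsa hσ0)
    (((E_int _ lg hsL hσ0).const_mul ((ε/δ)^2)).add ((E_int (tw a σ) lg hsa hR0).const_mul 2)) hpt
  simp only [Pi.add_apply] at hInt
  rw [MeasureTheory.integral_add ((E_int _ lg hsL hσ0).const_mul ((ε/δ)^2)) ((E_int (tw a σ) lg hsa hR0).const_mul 2),
    MeasureTheory.integral_const_mul, MeasureTheory.integral_const_mul, p1, p2, p3] at hInt
  have k1 : K (tw (fun n => g n * Λ n) σ) lg σ ≤ K (tw (fun n => Λ n) σ) lg σ := by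
    refine K_mono _ _ _ (tw_abs_le (mulbd hg fun n => ?_) σ) ?_ hσ0.le le_rfl
    · rw [abs_of_nonneg ArithmeticFunction.vonMangoldt_nonneg]
    · exact (tw_summable_of_le Lam_le hσ).of_abs
  have k2 : K (tw a σ) lg R ≤ K (tw lg σ) lg σ :=
    K_mono _ _ _ (tw_abs_le hba σ) (log_tw_summable hσ) hσ0.le (by linarith)
  have hmul := mul_le_mul_of_nonneg_left hInt (by positivity : 0 ≤ σ / Real.pi)
  have hpi := Real.pi_pos
  have e1 : σ / Real.pi * (Real.pi / σ * K (tw a σ) lg σ) = K (tw a σ) lg σ := by field_simp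
  have e2 : σ / Real.pi * ((ε / δ) ^ 2 * (Real.pi / σ * K (tw (fun n => g n * Λ n) σ) lg σ) + 2 * (Real.pi / R * K (tw a σ) lg R))
     = (ε / δ) ^ 2 * K (tw (fun n => g n * Λ n) σ) lg σ + 2 * σ / R * K (tw a σ) lg R := by field_simp
  rw [e1, e2] at hmul
  have k3 : 0 ≤ K (tw lg σ) lg σ := by
    unfold K
    refine tsum_nonneg fun p => ?_
    have : ∀ n, 0 ≤ tw lg σ n := fun n => (abs_nonneg _).trans (tw_abs_le hlg σ n)
    exact mul_nonneg (mul_nonneg (this _) (this _)) (Real.exp_pos _).le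
  calc _ ≤ _ := hmul
    _ ≤ (ε / δ) ^ 2 * K (tw (fun n => Λ n) σ) lg σ + 2 * σ / R * K (tw lg σ) lg σ := by gcongr
    _ ≤ _ := by gcongr; linarith
end MV

namespace MV
open Finset Filter Topology
open scoped ArithmeticFunction.vonMangoldt

lemma inv_ge_one {δ : ℝ} (hδ : 0 < δ) (hδ1 : δ ≤ 1) : 1 ≤ 1 / δ := by
  rw [le_div_iff₀ hδ]; linarith

lemma K_Lam {δ : ℝ} (hδ : 0 < δ) (hδ1 : δ ≤ 1) : K (tw (fun n => Λ n) (1+δ)) lg (1+δ) ≤ 216 / δ := by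
  have hσ : 1 < 1 + δ := by linarith
  have hs := K_hasSum (by linarith : 0 < 1 + δ) (fun n => Λ n) (by simp) (tw_summable_of_le Lam_le hσ)
  have hZs : Summable fun k : ℕ => (k:ℝ) ^ (-(2*δ) - 1) := Real.summable_nat_rpow.2 (by linarith)
  have hle : ∀ k : ℕ, (S (fun n => Λ n) k) ^ 2 * w (2 * (1 + δ)) k ≤ 144 * (k:ℝ) ^ (-(2*δ) - 1) := by
    intro k
    rcases Nat.eq_zero_or_pos k with rfl | hk
    · simp [S]; positivity
    have hk' : (0:ℝ) < k := by positivity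
    have h1 : S (fun n => Λ n) k ≤ 6 * k := P_le k
    have h0 : 0 ≤ S (fun n => Λ n) k := P_nonneg k
    have h2 := (w_bounds (by linarith : 0 < 2 * (1 + δ)) hk).2
    have h3 := w_nonneg (by linarith : 0 < 2 * (1 + δ)) hk
    calc _ ≤ (6 * (k:ℝ)) ^ 2 * (2 * (1 + δ) * (k:ℝ) ^ (-(2 * (1 + δ)) - 1)) := by gcongr
      _ = 72 * (1 + δ) * ((k:ℝ) ^ (2:ℝ) * (k:ℝ) ^ (-(2 * (1 + δ)) - 1)) := by
          rw [Real.rpow_two]; ring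
      _ = 72 * (1 + δ) * (k:ℝ) ^ (-(2*δ) - 1) := by rw [← Real.rpow_add hk']; congr 2; ring
      _ ≤ _ := by gcongr; linarith
  have := hs.summable.tsum_le_tsum hle (hZs.mul_left 144)
  rw [hs.tsum_eq, tsum_mul_left] at this
  have hz := (Z_bounds (by linarith : 0 < 2 * δ)).2
  have e : 1 / (2 * δ) = (1/δ) / 2 := by field_simp
  have := inv_ge_one hδ hδ1
  rw [show 216 / δ = 216 * (1 / δ) by ring]
  rw [e] at hz
  linarith

lemma K_lg {δ : ℝ} (hδ : 0 < δ) (hδ1 : δ ≤ 1) : K (tw lg (1+δ)) lg (1+δ) ≤ 32 / δ ^ 3 := by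
  have hσ : 1 < 1 + δ := by linarith
  have hs := K_hasSum (by linarith : 0 < 1 + δ) lg (by simp [lg]) (log_tw_summable hσ).abs
  have hZs : Summable fun k : ℕ => (k:ℝ) ^ (-δ - 1) := Real.summable_nat_rpow.2 (by linarith)
  have hle : ∀ k : ℕ, (S lg k) ^ 2 * w (2 * (1 + δ)) k ≤ 16 / δ ^ 2 * (k:ℝ) ^ (-δ - 1) := by
    intro k
    rcases Nat.eq_zero_or_pos k with rfl | hk
    · simp [S]; positivity
    have hk' : (0:ℝ) < k := by positivity
    have h0 : 0 ≤ S lg k := Finset.sum_nonneg fun n _ => Real.log_natCast_nonneg n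
    have h1 : S lg k ≤ k * (((k:ℝ) ^ (δ/2)) / (δ/2)) := by
      have : S lg k ≤ ∑ n ∈ Icc 1 k, Real.log k := by
        refine Finset.sum_le_sum fun n hn => ?_
        rw [Finset.mem_Icc] at hn
        unfold lg
        have : (0:ℝ) < n := by exact_mod_cast hn.1
        exact Real.log_le_log this (by exact_mod_cast hn.2)
      refine this.trans ?_
      simp only [sum_const, Nat.card_Icc, add_tsub_cancel_right, nsmul_eq_mul]
      gcongr
      exact Real.log_le_rpow_div hk'.le (by positivity)
    have h2 := (w_bounds (by linarith : 0 < 2 * (1 + δ)) hk).2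
    have h3 := w_nonneg (by linarith : 0 < 2 * (1 + δ)) hk
    calc _ ≤ (k * (((k:ℝ) ^ (δ/2)) / (δ/2))) ^ 2 * (2 * (1 + δ) * (k:ℝ) ^ (-(2 * (1 + δ)) - 1)) := by gcongr
      _ = 8 * (1 + δ) / δ^2 * (((k:ℝ) ^ (2:ℝ) * ((k:ℝ) ^ (δ/2) * (k:ℝ) ^ (δ/2))) * (k:ℝ) ^ (-(2 * (1 + δ)) - 1)) := by
          rw [Real.rpow_two]; field_simp; ring
      _ = 8 * (1 + δ) / δ^2 * (k:ℝ) ^ (-δ - 1) := by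
          rw [← Real.rpow_add hk', ← Real.rpow_add hk', ← Real.rpow_add hk']; congr 2; ring
      _ ≤ _ := by gcongr; linarith
  have := hs.summable.tsum_le_tsum hle (hZs.mul_left _)
  rw [hs.tsum_eq, tsum_mul_left] at this
  have hz := (Z_bounds hδ).2
  have h1 := inv_ge_one hδ hδ1
  refine this.trans ?_
  calc _ ≤ 16 / δ ^ 2 * (1/δ + 1/δ) := by gcongr; linarith
    _ = _ := by field_simp; norm_num

lemma K_small {g : ℕ → ℝ} (hg : CM g) (h0 : ¬ Summable fun p : Nat.Primes => (1 - g p) / p)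
    {η : ℝ} (hη : 0 < η) :
    ∀ᶠ δ in 𝓝[>] (0:ℝ), K (tw (fun n => g n * lg n) (1 + δ)) lg (1 + δ) ≤ η / δ ^ 3 := by
  set R := 2 + 256 / η with hR
  set ε := Real.sqrt (η / 432) with hε
  have hε2 : ε ^ 2 = η / 432 := Real.sq_sqrt (by positivity)
  have hε0 : 0 < ε := Real.sqrt_pos.2 (by positivity)
  have k3 : ∀ᶠ δ in 𝓝[>] (0:ℝ), δ ≤ 1 := by
    refine Filter.Eventually.filter_mono nhdsWithin_le_nhds ?_
    exact (gt_mem_nhds (by norm_num : (0:ℝ) < 1)).mono fun _ h => le_of_lt h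
  have hR2 : 2 ≤ R := by
    have : 0 < 256 / η := by positivity
    linarith
  filter_upwards [self_mem_nhdsWithin, F_small hg h0 hε0 R, k3] with δ hδ hF hδ1
  have hδ : 0 < δ := hδ
  refine (K_split hg hδ hδ1 hε0 hR2 hF).trans ?_
  have hR0 : 0 < R := by linarith
  have h4 : 4 / R ≤ η / 64 := by
    rw [div_le_div_iff₀ hR0 (by norm_num), hR, mul_add, mul_div_cancel₀ _ hη.ne']
    linarith
  calc _ ≤ (ε / δ) ^ 2 * (216 / δ) + η / 64 * (32 / δ ^ 3) := by
        have := K_lg hδ hδ1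
        refine add_le_add (mul_le_mul_of_nonneg_left (K_Lam hδ hδ1) (by positivity)) ?_
        exact (mul_le_mul_of_nonneg_left this (by positivity)).trans
          (mul_le_mul_of_nonneg_right h4 (by positivity))
    _ = _ := by rw [div_pow, hε2]; field_simp; norm_num

lemma A_small {g : ℕ → ℝ} (hg : CM g) (h0 : ¬ Summable fun p : Nat.Primes => (1 - g p) / p)
    {η : ℝ} (hη : 0 < η) :
    ∀ᶠ N : ℕ in atTop, ∑ k ∈ Icc 1 N, (S (fun n => g n * lg n) k) ^ 2 / (k:ℝ) ^ 3 ≤ η * Real.log N ^ 3 := by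
  have hlog : Tendsto (fun N : ℕ => Real.log N) atTop atTop := Real.tendsto_log_atTop.comp tendsto_natCast_atTop_atTop
  have hδt : Tendsto (fun N : ℕ => (Real.log N)⁻¹) atTop (𝓝[>] 0) :=
    tendsto_inv_atTop_nhdsGT_zero.comp hlog
  filter_upwards [hδt.eventually (K_small hg h0 (by positivity : 0 < η / 288)), hlog.eventually_ge_atTop 1] with N hN hL
  set L := Real.log N with hLd
  have hL0 : 0 < L := by linarith
  have hδ : 0 < L⁻¹ := by positivity
  have hδ1 : L⁻¹ ≤ 1 := inv_le_one_of_one_le₀ hL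
  have hlg : ∀ n, |lg n| ≤ lg n := fun n => by
    rw [abs_of_nonneg]; exact Real.log_natCast_nonneg n
  have hs := K_hasSum (by linarith : 0 < 1 + L⁻¹) (fun n => g n * lg n) (by simp [lg])
    (tw_summable_of_le (mulbd hg hlg) (by linarith))
  have hnn : ∀ k ∉ Icc 1 N, 0 ≤ (S (fun n => g n * lg n) k) ^ 2 * w (2 * (1 + L⁻¹)) k := by
    intro k _
    rcases Nat.eq_zero_or_pos k with rfl | hk
    · simp [S]
    · have := w_nonneg (by linarith : 0 < 2 * (1 + L⁻¹)) hk
      positivity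
  have h1 := hs.summable.sum_le_tsum (Icc 1 N) hnn
  rw [hs.tsum_eq] at h1
  have h2 : ∑ k ∈ Icc 1 N, (S (fun n => g n * lg n) k) ^ 2 / (k:ℝ) ^ 3 ≤
      288 * ∑ k ∈ Icc 1 N, (S (fun n => g n * lg n) k) ^ 2 * w (2 * (1 + L⁻¹)) k := by
    rw [Finset.mul_sum]
    refine Finset.sum_le_sum fun k hk => ?_
    rw [Finset.mem_Icc] at hk
    have hk' : (0:ℝ) < k := by exact_mod_cast hk.1
    have hk1 : (1:ℝ) ≤ k := by exact_mod_cast hk.1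
    have hkN : (k:ℝ) ≤ N := by exact_mod_cast hk.2
    have hw := (w_bounds (by linarith : 0 < 2 * (1 + L⁻¹)) hk.1).1
    have hw2 : 1 / (k:ℝ) ^ 3 ≤ 288 * w (2 * (1 + L⁻¹)) k := by
      have a1 : (2 * (k:ℝ)) ^ (-(2 * (1 + L⁻¹)) - 1) ≤ ((k:ℝ)+1) ^ (-(2 * (1 + L⁻¹)) - 1) :=
        Real.rpow_le_rpow_of_nonpos (by positivity) (by linarith) (by linarith)
      have a2 : (2:ℝ) ^ (-5:ℝ) ≤ (2:ℝ) ^ (-(2 * (1 + L⁻¹)) - 1) :=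
        Real.rpow_le_rpow_of_exponent_le (by norm_num) (by linarith)
      have a3 : (k:ℝ) ^ (-(2 * (1 + L⁻¹)) - 1) = (k:ℝ) ^ (-3:ℝ) * (k:ℝ) ^ (-(2 * L⁻¹)) := by
        rw [← Real.rpow_add hk']; congr 1; ring
      have a4 : Real.exp (-2) ≤ (k:ℝ) ^ (-(2 * L⁻¹)) := by
        rw [Real.rpow_def_of_pos hk', Real.exp_le_exp]
        have : Real.log k ≤ L := Real.log_le_log hk' hkN
        have : Real.log k * L⁻¹ ≤ 1 := by
          rw [← div_eq_mul_inv, div_le_one hL0]; exact this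
        nlinarith
      have a5 : (1:ℝ)/9 ≤ Real.exp (-2) := by
        rw [Real.exp_neg, ← one_div]
        refine one_div_le_one_div_of_le (Real.exp_pos _) ?_
        rw [show (2:ℝ) = 1 + 1 by norm_num, Real.exp_add]
        have := Real.exp_one_lt_d9
        have := Real.exp_pos 1
        nlinarith
      have a6 : (k:ℝ) ^ (-3:ℝ) = 1 / (k:ℝ) ^ 3 := by
        rw [Real.rpow_neg hk'.le, one_div]; norm_cast
      have a7 : (2:ℝ) ^ (-5:ℝ) = 1 / 32 := by
        rw [Real.rpow_neg (by norm_num)]; norm_num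
      have a8 : (1/32) * (1 / (k:ℝ) ^ 3 * (1/9)) ≤ (2 * (k:ℝ)) ^ (-(2 * (1 + L⁻¹)) - 1) := by
        rw [Real.mul_rpow (by norm_num) hk'.le, a3, a6]
        gcongr
        · rw [← a7]; exact a2
        · exact a5.trans a4
      have a9 : (2 * (k:ℝ)) ^ (-(2 * (1 + L⁻¹)) - 1) ≤ w (2 * (1 + L⁻¹)) k := by
        refine le_trans ?_ hw
        have : 0 ≤ ((k:ℝ)+1) ^ (-(2 * (1 + L⁻¹)) - 1) := by positivity
        nlinarith
      have a10 : 0 ≤ 1 / (k:ℝ)^3 := by positivity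
      linarith
    rw [div_eq_mul_one_div]
    calc _ ≤ (S (fun n => g n * lg n) k) ^ 2 * (288 * w (2 * (1 + L⁻¹)) k) := by gcongr
      _ = _ := by ring
  calc _ ≤ _ := h2
    _ ≤ 288 * (η / 288 / L⁻¹ ^ 3) := by gcongr; exact h1.trans hN
    _ = _ := by field_simp
end MV

namespace MV
open Finset Filter Topology

lemma S_log {g : ℕ → ℝ} (hg : CM g) {k : ℕ} (hk : 1 ≤ k) :
    |S g k| * Real.log k ≤ |S (fun n => g n * lg n) k| + k := by
  have hlk : 0 ≤ Real.log k := Real.log_natCast_nonneg k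
  have e : S g k * Real.log k - S (fun n => g n * lg n) k = ∑ n ∈ Icc 1 k, g n * (Real.log k - lg n) := by
    unfold S
    rw [Finset.sum_mul, ← Finset.sum_sub_distrib]
    exact Finset.sum_congr rfl fun n _ => by ring
  have h1 : |∑ n ∈ Icc 1 k, g n * (Real.log k - lg n)| ≤ ∑ n ∈ Icc 1 k, (Real.log k - lg n) := by
    refine (Finset.abs_sum_le_sum_abs _ _).trans (Finset.sum_le_sum fun n hn => ?_)
    rw [Finset.mem_Icc] at hn
    have hn0 : (0:ℝ) < n := by exact_mod_cast hn.1
    have : 0 ≤ Real.log k - lg n := by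
      unfold lg
      exact sub_nonneg.2 (Real.log_le_log hn0 (by exact_mod_cast hn.2))
    rw [abs_mul, abs_of_nonneg this]
    exact mul_le_of_le_one_left this (hg.le n)
  have h2 : ∑ n ∈ Icc 1 k, (Real.log k - lg n) = k * Real.log k - LF k := by
    rw [Finset.sum_sub_distrib]; simp [LF, lg]
  have h3 := (LF_bounds hk).1
  have h4 : |S g k * Real.log k| ≤ |S g k * Real.log k - S (fun n => g n * lg n) k| + |S (fun n => g n * lg n) k| := by
    have := abs_add_le (S g k * Real.log k - S (fun n => g n * lg n) k) (S (fun n => g n * lg n) k)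
    simpa using this
  rw [abs_mul, abs_of_nonneg hlk, e] at h4
  linarith

lemma final_sum {g : ℕ → ℝ} (hg : CM g) (h0 : ¬ Summable fun p : Nat.Primes => (1 - g p) / p)
    {θ : ℝ} (hθ : 0 < θ) (hθ1 : θ ≤ 1) :
    ∀ᶠ N : ℕ in atTop, ∑ k ∈ Icc 1 N, |S g k| / (k:ℝ) ^ 2 ≤ 200 * θ * Real.log N := by
  have hlog : Tendsto (fun N : ℕ => Real.log N) atTop atTop := Real.tendsto_log_atTop.comp tendsto_natCast_atTop_atTop
  filter_upwards [A_small hg h0 (by positivity : 0 < θ ^ 4), hlog.eventually_ge_atTop 1,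
    hlog.eventually_ge_atTop (4 / θ ^ 4), eventually_ge_atTop 1] with N hA hL1 hL2 hN
  set L := Real.log N with hL
  have hL0 : 0 < L := by linarith
  have hθL : 4 ≤ θ ^ 4 * L := by
    rw [div_le_iff₀ (by positivity)] at hL2; linarith
  have hθL' : 4 ≤ θ * L := by
    have : θ ^ 4 ≤ θ := by
      calc θ ^ 4 ≤ θ ^ 1 := pow_le_pow_of_le_one hθ.le hθ1 (by norm_num)
        _ = θ := pow_one _
    nlinarith
  -- pointwise bound
  have hpt : ∀ k ∈ Icc 1 N, |S g k| / (k:ℝ) ^ 2 ≤ (if (k:ℝ) ≤ Real.exp (θ * L) then 1 / (k:ℝ) else 0)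
      + (1 / (θ ^ 3 * L ^ 2)) * ((S (fun n => g n * lg n) k) ^ 2 / (k:ℝ) ^ 3)
      + (1 / (θ ^ 3 * L ^ 2) + θ / 2) * (1 / (k:ℝ)) := by
    intro k hk
    rw [Finset.mem_Icc] at hk
    have hk' : (0:ℝ) < k := by exact_mod_cast hk.1
    have hS := S_abs_le g (fun n _ => hg.le n) k
    set x := |S g k| / k with hx
    have hx1 : x ≤ 1 := (div_le_one hk').2 hS
    have hx0 : 0 ≤ x := by positivity
    set A := |S (fun n => g n * lg n) k| / k with hAd
    have hA0 : 0 ≤ A := by positivity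
    have e1 : |S g k| / (k:ℝ) ^ 2 = x * (1 / k) := by rw [hx]; field_simp
    have e2 : (S (fun n => g n * lg n) k) ^ 2 / (k:ℝ) ^ 3 = A ^ 2 * (1 / k) := by
      rw [hAd, div_pow, sq_abs]; field_simp
    have hlogk : x * Real.log k ≤ A + 1 := by
      have := S_log hg hk.1
      rw [hx, hAd, div_mul_eq_mul_div, div_add_one hk'.ne']
      gcongr
    rw [e1, e2]
    have hq : 0 < 1 / (θ ^ 3 * L ^ 2) := by positivity
    have hki : 0 < 1 / (k:ℝ) := by positivity
    split_ifs with hc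
    · have : 0 ≤ 1 / (θ ^ 3 * L ^ 2) * (A ^ 2 * (1 / ↑k)) := by positivity
      have : 0 ≤ (1 / (θ ^ 3 * L ^ 2) + θ / 2) * (1 / (k:ℝ)) := by positivity
      nlinarith
    · push Not at hc
      have hlk : θ * L ≤ Real.log k := by
        rw [Real.le_log_iff_exp_le hk']; exact hc.le
      have h5 : x * (θ * L) ≤ A + 1 := le_trans (by gcongr) hlogk
      -- x ≤ q (A^2+1) + θ/2
      have h6 : x ≤ 1 / (θ ^ 3 * L ^ 2) * (A ^ 2 + 1) + θ / 2 := by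
        have h7 : x * (θ * L) ≤ (1 / (θ ^ 3 * L ^ 2) * (A ^ 2 + 1) + θ / 2) * (θ * L) := by
          refine h5.trans ?_
          have e3 : (1 / (θ ^ 3 * L ^ 2) * (A ^ 2 + 1) + θ / 2) * (θ * L) = (A ^ 2 + 1) / (θ ^ 2 * L) + (θ ^ 2 * L) / 2 := by
            field_simp
          rw [e3]
          set T := θ ^ 2 * L with hT
          have hT0 : 0 < T := by positivity
          rw [← sub_nonneg]
          have e4 : (A ^ 2 + 1) / T + T / 2 - (A + 1) = ((A - T / 2) ^ 2 + (1 - T / 2) ^ 2) / T := by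
            field_simp; ring
          rw [e4]; positivity
        exact le_of_mul_le_mul_right h7 (by positivity)
      have := mul_le_mul_of_nonneg_right h6 hki.le
      linarith
  refine (Finset.sum_le_sum hpt).trans ?_
  rw [Finset.sum_add_distrib, Finset.sum_add_distrib, ← Finset.mul_sum, ← Finset.mul_sum]
  have b1 : ∑ k ∈ Icc 1 N, (if (k:ℝ) ≤ Real.exp (θ * L) then 1 / (k:ℝ) else 0) ≤ 1 + θ * L := by
    rw [← Finset.sum_filter]
    have hfl : 1 ≤ ⌊Real.exp (θ * L)⌋₊ := by
      rw [Nat.one_le_floor_iff]; exact Real.one_le_exp (by positivity)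
    refine le_trans (Finset.sum_le_sum_of_subset_of_nonneg (t := Icc 1 ⌊Real.exp (θ * L)⌋₊) ?_ ?_) ((sum_inv_le hfl).trans ?_)
    · intro k hk
      rw [Finset.mem_filter, Finset.mem_Icc] at hk
      rw [Finset.mem_Icc]
      exact ⟨hk.1.1, Nat.le_floor hk.2⟩
    · intros; positivity
    · have : Real.log (⌊Real.exp (θ * L)⌋₊ : ℝ) ≤ θ * L := by
        rw [Real.log_le_iff_le_exp (by exact_mod_cast hfl)]
        exact Nat.floor_le (Real.exp_pos _).le
      linarith
  have b2 := sum_inv_le hN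
  have b3 : 1 / (θ ^ 3 * L ^ 2) * ∑ k ∈ Icc 1 N, (S (fun n => g n * lg n) k) ^ 2 / (k:ℝ) ^ 3 ≤ θ * L := by
    calc _ ≤ 1 / (θ ^ 3 * L ^ 2) * (θ ^ 4 * L ^ 3) := by gcongr
      _ = _ := by field_simp
  have b4 : 1 / (θ ^ 3 * L ^ 2) ≤ θ := by
    rw [div_le_iff₀ (by positivity)]
    nlinarith
  have b5 : (1 / (θ ^ 3 * L ^ 2) + θ / 2) * ∑ k ∈ Icc 1 N, 1 / (k:ℝ) ≤ (θ + θ / 2) * (1 + L) := by gcongr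
  nlinarith

theorem mean_zero {g : ℕ → ℝ} (hg : CM g) (h0 : ¬ Summable fun p : Nat.Primes => (1 - g p) / p) :
    Tendsto (fun N : ℕ => S g N / N) atTop (𝓝 0) := by
  have hlog : Tendsto (fun N : ℕ => Real.log N) atTop atTop := Real.tendsto_log_atTop.comp tendsto_natCast_atTop_atTop
  rw [Metric.tendsto_atTop']
  have : ∀ ε : ℝ, 0 < ε → ∀ᶠ N : ℕ in atTop, dist (S g N / N) 0 < ε := by
    intro ε hε
    set θ := min 1 (ε / 500) with hθ
    have hθ0 : 0 < θ := lt_min one_pos (by positivity)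
    have hθε : 500 * θ ≤ ε := by
      have := min_le_right 1 (ε / 500)
      linarith
    filter_upwards [final_sum hg h0 hθ0 (min_le_left _ _), hlog.eventually_ge_atTop 1,
      hlog.eventually_ge_atTop (1000 / θ), eventually_ge_atTop 3] with N h1 hL1 hL2 hN
    have hm := main_ineq g (fun a b _ _ => hg.mul a b) (fun n _ => hg.le n) N hN
    have hN0 : (0:ℝ) < N := by positivity
    rw [div_le_iff₀ hθ0] at hL2
    rw [dist_zero_right, Real.norm_eq_abs, abs_div, abs_of_pos hN0, div_lt_iff₀ hN0]
    have hL0 : 0 < Real.log N := by linarith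
    have h2 : |S g N| * Real.log N ≤ (401 * θ * N) * Real.log N := by
      refine hm.trans ?_
      calc _ ≤ 2 * N * (200 * θ * Real.log N) + (Real.log N * θ) * N := by gcongr
        _ = _ := by ring
    have h3 := le_of_mul_le_mul_right h2 hL0
    have : 0 < θ * N := by positivity
    nlinarith
  intro ε hε
  obtain ⟨M, hM⟩ := eventually_atTop.1 (this ε hε)
  exact ⟨M, fun n hn => hM n hn.le⟩
end MV

/-- If `f` is completely multiplicative with values in `{-1, 1}`, `c ∈ [-1, 1)`, and
`∑_p (c - f p)/p` converges, then the mean value of `f` exists and equals `0`. -/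
theorem stmt_2 (f : ℕ → ℤ)
    (hf1 : f 1 = 1)
    (hfmul : ∀ a b : ℕ, f (a * b) = f a * f b)
    (hfpm : ∀ n : ℕ, 1 ≤ n → f n = 1 ∨ f n = -1)
    (c : ℝ) (hc : c ∈ Set.Ico (-1 : ℝ) 1)
    (hconv : ∃ L : ℝ, Filter.Tendsto
      (fun N : ℕ => ∑ p ∈ N.primesBelow, (c - (f p : ℝ)) / p) Filter.atTop (nhds L)) :
    Filter.Tendsto (fun N : ℕ => (∑ n ∈ Finset.Icc 1 N, (f n : ℝ)) / N)
      Filter.atTop (nhds 0) := by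
  set g : ℕ → ℝ := fun n => if n = 0 then 0 else (f n : ℝ) with hgd
  have hgn : ∀ n, n ≠ 0 → g n = f n := fun n hn => by simp [hgd, hn]
  have hg : MV.CM g := by
    refine ⟨by simp [hgd], by simp [hgd, hf1], fun a b => ?_, fun n => ?_⟩
    · by_cases ha : a = 0
      · simp [hgd, ha]
      by_cases hb : b = 0
      · simp [hgd, hb]
      rw [hgn _ (mul_ne_zero ha hb), hgn a ha, hgn b hb, hfmul]; push_cast; rfl
    · by_cases hn : n = 0
      · simp [hgd, hn]
      rw [hgn n hn]
      rcases hfpm n (Nat.one_le_iff_ne_zero.2 hn) with h | h <;> simp [h]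
  have h0 : ¬ Summable fun p : Nat.Primes => (1 - g p) / p := by
    have := MV.not_summable_of_conv (fun n => (f n : ℝ)) c hc.2 (fun n hn => by
      rcases hfpm n hn with h | h <;> simp [h]) hconv
    intro hs
    refine this (hs.congr fun p => ?_)
    rw [hgn p p.2.ne_zero]
  refine (MV.mean_zero hg h0).congr fun N => ?_
  congr 1
  unfold MV.S
  refine Finset.sum_congr rfl fun n hn => ?_
  rw [Finset.mem_Icc] at hn
  exact hgn n (by omega)
end

section
/- Let f : ℕ → ℤ be a completely multiplicative function taking values in {-1, 1}, and let c ∈ (0, 1] be a real number. If the series ∑_p (c - f(p))/p over primes p converges, then the partial sums of f are unbounded: lim sup_{N→∞} |∑_{n=1}^{N} f(n)| = ∞. -/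
theorem abel_bound (a b : ℕ → ℝ) (C : ℝ) (hC : ∀ n, |∑ i ∈ Finset.range n, a i| ≤ C)
    (hb : Antitone b) (hb0 : ∀ n, 0 ≤ b n) (n : ℕ) :
    |∑ i ∈ Finset.range n, a i * b i| ≤ C * b 0 := by
  have key : ∀ n, |∑ i ∈ Finset.range n, a i * b i - (∑ i ∈ Finset.range n, a i) * b n|
      ≤ C * (b 0 - b n) := by
    intro n
    induction n with
    | zero => simp
    | succ n ih =>
      have h1 : ∑ i ∈ Finset.range (n+1), a i * b i - (∑ i ∈ Finset.range (n+1), a i) * b (n+1)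
          = (∑ i ∈ Finset.range n, a i * b i - (∑ i ∈ Finset.range n, a i) * b n)
            + (∑ i ∈ Finset.range (n+1), a i) * (b n - b (n+1)) := by
        simp only [Finset.sum_range_succ]; ring
      have h2 : 0 ≤ b n - b (n+1) := sub_nonneg.2 (hb (Nat.le_succ n))
      rw [h1]
      refine (abs_add_le _ _).trans ?_
      rw [abs_mul, abs_of_nonneg h2]
      have := mul_le_mul_of_nonneg_right (hC (n+1)) h2
      linarith
  have h := key n
  have h3 : |(∑ i ∈ Finset.range n, a i) * b n| ≤ C * b n := by
    rw [abs_mul, abs_of_nonneg (hb0 n)]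
    exact mul_le_mul_of_nonneg_right (hC n) (hb0 n)
  have := abs_add_le (∑ i ∈ Finset.range n, a i * b i - (∑ i ∈ Finset.range n, a i) * b n)
    ((∑ i ∈ Finset.range n, a i) * b n)
  rw [sub_add_cancel] at this
  linarith

theorem weight_antitone (s : ℝ) (hs : 0 ≤ s) :
    Antitone (fun n : ℕ => ((max n 1 : ℕ) : ℝ) ^ (-s)) := by
  intro m n h
  have h1 : (0 : ℝ) < ((max m 1 : ℕ) : ℝ) := by
    have : 0 < max m 1 := by omega
    exact_mod_cast this
  refine Real.rpow_le_rpow_of_nonpos h1 ?_ (by linarith)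
  exact_mod_cast max_le_max_right 1 h

theorem dirichlet_bound (f : ℕ → ℤ)
    (hf1 : f 1 = 1)
    (hfmul : ∀ a b : ℕ, f (a * b) = f a * f b)
    (hfpm : ∀ n : ℕ, 1 ≤ n → f n = 1 ∨ f n = -1)
    (c : ℝ) (hc : 0 < c) (B C : ℝ)
    (hB : ∀ N : ℕ, |∑ p ∈ N.primesBelow, (c - (f p : ℝ)) / p| ≤ B)
    (hC : ∀ N : ℕ, |((∑ n ∈ Finset.Icc 1 N, f n : ℤ) : ℝ)| ≤ C)
    (d : ℝ) (hd : 0 < d) (P : ℕ) :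
    Real.exp (c * ∑ p ∈ P.primesBelow, (p : ℝ) ^ (-(1 + d)) - B) ≤ C := by
  let g : ℕ →*₀ ℝ :=
    { toFun := fun n => if n = 0 then 0 else (f n : ℝ) * (n : ℝ) ^ (-(1 + d))
      map_zero' := by simp
      map_one' := by simp [hf1]
      map_mul' := by
        intro x y
        by_cases hx : x = 0
        · simp [hx]
        by_cases hy : y = 0
        · simp [hy]
        simp only [hx, hy, mul_eq_zero, or_self, if_false, hfmul]
        push_cast
        rw [Real.mul_rpow (by positivity) (by positivity)]
        ring }
  have hg : ∀ n : ℕ, n ≠ 0 → g n = (f n : ℝ) * (n : ℝ) ^ (-(1 + d)) := by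
    intro n hn
    change (if n = 0 then 0 else (f n : ℝ) * (n : ℝ) ^ (-(1 + d))) = _
    simp [hn]
  have habs : ∀ n : ℕ, n ≠ 0 → |(f n : ℝ)| = 1 := by
    intro n hn
    rcases hfpm n (Nat.one_le_iff_ne_zero.2 hn) with h | h <;> simp [h]
  have hsum : Summable (fun n => ‖g n‖) := by
    refine Summable.of_nonneg_of_le (fun n => norm_nonneg _) (fun n => ?_)
      (Real.summable_nat_rpow.2 (by linarith : -(1 + d) < -1))
    by_cases hn : n = 0
    · subst hn
      rw [map_zero, norm_zero]; positivity
    · rw [hg n hn, Real.norm_eq_abs, abs_mul, habs n hn, one_mul, abs_of_nonneg (by positivity)]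
  have hE := EulerProduct.eulerProduct_completely_multiplicative hsum
  -- upper bound for the Dirichlet series
  have hup : ∑' n, g n ≤ C := by
    refine le_of_tendsto' hsum.of_norm.hasSum.tendsto_sum_nat (fun N => ?_)
    have h := abel_bound (fun n => if n = 0 then 0 else (f n : ℝ))
      (fun n : ℕ => ((max n 1 : ℕ) : ℝ) ^ (-(1 + d))) C ?_
      (weight_antitone _ (by linarith)) (fun n => by positivity) N
    · refine le_trans (le_of_eq ?_) ((le_abs_self _).trans (h.trans ?_))
      · refine Finset.sum_congr rfl (fun n _ => ?_)
        by_cases hn : n = 0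
        · simp [hn]
        · have : max n 1 = n := by omega
          rw [hg n hn]; simp only [this, hn, if_false]
      · simp
    · intro n
      rcases n with _ | n
      · simpa using hC 0
      · rw [Finset.sum_range_succ']
        convert hC n using 2
        push_cast
        have h7 : Finset.Ico 1 (n+1) = Finset.Icc 1 n := by ext; simp
        rw [← h7, Finset.range_eq_Ico,
          ← Finset.sum_Ico_add' (fun k => (f k : ℝ)) 0 n 1]
        simp
  refine le_trans ?_ hup
  refine ge_of_tendsto hE ?_
  filter_upwards [Filter.eventually_ge_atTop P] with N hN
  have hprod : Real.exp (∑ p ∈ N.primesBelow, g p) ≤ ∏ p ∈ N.primesBelow, (1 - g p)⁻¹ := by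
    rw [Real.exp_sum]
    refine Finset.prod_le_prod (fun p _ => (Real.exp_pos _).le) (fun p hp => ?_)
    have hp' := Nat.prime_of_mem_primesBelow hp
    have hlt : ‖g p‖ < 1 := hsum.of_norm.norm_lt_one (f := g.toMonoidHom) hp'.one_lt
    have hlt' : g p < 1 := (le_abs_self _).trans_lt hlt
    have h1 := Real.one_sub_le_exp_neg (g p)
    rw [le_inv_comm₀ (Real.exp_pos _) (by linarith), ← Real.exp_neg]
    exact h1
  refine le_trans (Real.exp_le_exp.2 ?_) hprod
  have h := abel_bound (fun p => if p.Prime then (c - (f p : ℝ)) / p else 0)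
      (fun n : ℕ => ((max n 1 : ℕ) : ℝ) ^ (-d)) B ?_
      (weight_antitone _ hd.le) (fun n => by positivity) N
  · have h2 : ∑ i ∈ Finset.range N, (if i.Prime then (c - (f i : ℝ)) / i else 0)
        * ((max i 1 : ℕ) : ℝ) ^ (-d)
        = c * ∑ p ∈ N.primesBelow, (p : ℝ) ^ (-(1 + d)) - ∑ p ∈ N.primesBelow, g p := by
      rw [Finset.mul_sum, ← Finset.sum_sub_distrib, Nat.primesBelow, Finset.sum_filter]
      refine Finset.sum_congr rfl (fun p _ => ?_)
      by_cases hp : p.Prime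
      · have hp0 : (0:ℝ) < p := by exact_mod_cast hp.pos
        have : max p 1 = p := by have := hp.pos; omega
        rw [hg p hp.ne_zero, this]
        simp only [hp, if_true]
        rw [neg_add, Real.rpow_add hp0, Real.rpow_neg_one]
        ring
      · simp [hp]
    rw [h2] at h
    have h3 := (le_abs_self _).trans h
    have h4 : ∑ p ∈ P.primesBelow, (p : ℝ) ^ (-(1 + d)) ≤
        ∑ p ∈ N.primesBelow, (p : ℝ) ^ (-(1 + d)) := by
      refine Finset.sum_le_sum_of_subset_of_nonneg ?_ (fun p _ _ => by positivity)
      intro p hp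
      rw [Nat.mem_primesBelow] at hp ⊢
      exact ⟨hp.1.trans_le hN, hp.2⟩
    have h5 := mul_le_mul_of_nonneg_left h4 hc.le
    have h6 : ((max 0 1 : ℕ) : ℝ) ^ (-d) = 1 := by simp
    rw [h6, mul_one] at h3
    linarith
  · intro n
    have := hB n
    rwa [Nat.primesBelow, Finset.sum_filter] at this

/-- If `f` is completely multiplicative with values in `{-1, 1}`, `c ∈ (0, 1]`, and
`∑_p (c - f p)/p` converges, then the partial sums of `f` are unbounded. -/
theorem stmt_4 (f : ℕ → ℤ)
    (hf1 : f 1 = 1)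
    (hfmul : ∀ a b : ℕ, f (a * b) = f a * f b)
    (hfpm : ∀ n : ℕ, 1 ≤ n → f n = 1 ∨ f n = -1)
    (c : ℝ) (hc : c ∈ Set.Ioc (0 : ℝ) 1)
    (hconv : ∃ L : ℝ, Filter.Tendsto
      (fun N : ℕ => ∑ p ∈ N.primesBelow, (c - (f p : ℝ)) / p) Filter.atTop (nhds L)) :
    ∀ C : ℝ, ∃ N : ℕ, C < |((∑ n ∈ Finset.Icc 1 N, f n : ℤ) : ℝ)| := by
  intro C
  by_contra! hC
  obtain ⟨L, hL⟩ := hconv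
  obtain ⟨B, hB⟩ := (Metric.isBounded_range_of_tendsto _ hL).exists_norm_le
  have hB' : ∀ N : ℕ, |∑ p ∈ N.primesBelow, (c - (f p : ℝ)) / p| ≤ B :=
    fun N => hB _ ⟨N, rfl⟩
  have hlim : ∀ P : ℕ, Real.exp (c * ∑ p ∈ P.primesBelow, 1 / (p : ℝ) - B) ≤ C := by
    intro P
    have ht : Filter.Tendsto
        (fun d : ℝ => Real.exp (c * ∑ p ∈ P.primesBelow, (p : ℝ) ^ (-(1 + d)) - B))
        (nhdsWithin 0 (Set.Ioi 0))
        (nhds (Real.exp (c * ∑ p ∈ P.primesBelow, 1 / (p : ℝ) - B))) := by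
      have hcont : ContinuousAt
          (fun d : ℝ => Real.exp (c * ∑ p ∈ P.primesBelow, (p : ℝ) ^ (-(1 + d)) - B)) 0 := by
        refine Real.continuous_exp.continuousAt.comp ?_
        refine ContinuousAt.sub (ContinuousAt.mul continuousAt_const ?_) continuousAt_const
        refine tendsto_finsetSum _ (fun p hp => ?_)
        have hp0 : (p : ℝ) ≠ 0 := by
          exact_mod_cast (Nat.prime_of_mem_primesBelow hp).ne_zero
        exact ContinuousAt.rpow continuousAt_const (by fun_prop) (Or.inl hp0)
      have h := hcont.tendsto.mono_left (nhdsWithin_le_nhds (s := Set.Ioi 0))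
      simpa [Real.rpow_neg_one] using h
    refine le_of_tendsto ht ?_
    filter_upwards [self_mem_nhdsWithin] with d hd
    exact dirichlet_bound f hf1 hfmul hfpm c hc.1 B C hB' hC d hd P
  refine not_summable_one_div_on_primes ?_
  refine summable_of_sum_range_le (c := (C + B) / c) (fun n => ?_) (fun n => ?_)
  · exact Set.indicator_nonneg (fun _ _ => by positivity) _
  · have h := hlim n
    have h1 := Real.add_one_le_exp (c * ∑ p ∈ n.primesBelow, 1 / (p : ℝ) - B)
    have h2 : ∑ i ∈ Finset.range n, Set.indicator {p : ℕ | p.Prime} (fun n : ℕ => (1 : ℝ) / n) i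
        = ∑ p ∈ n.primesBelow, 1 / (p : ℝ) := by
      rw [Nat.primesBelow, Finset.sum_filter]
      refine Finset.sum_congr rfl (fun p _ => ?_)
      simp [Set.indicator_apply]
    rw [h2, le_div_iff₀ hc.1]
    linarith
end

section
/- Let f : ℕ → ℤ be a completely multiplicative function taking values in {-1, 1}, and let c ∈ [-1, 0) be a real number. If the series ∑_p (c - f(p))/p over primes p converges, then the partial sums of μ·f are unbounded: lim sup_{N→∞} |∑_{n=1}^{N} μ(n) f(n)| = ∞, where μ is the Möbius function. -/
open Finset Filter Topology

lemma abel_bound_s5 (a g : ℕ → ℝ) (B : ℝ) (ha : ∀ N, |∑ i ∈ range N, a i| ≤ B)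
    (hg : Antitone g) (hg0 : ∀ n, 0 ≤ g n) (N : ℕ) :
    |∑ i ∈ range N, a i * g i| ≤ B * g 0 := by
  have key : ∀ N, |∑ i ∈ range N, a i * g i - (∑ i ∈ range N, a i) * g N| ≤ B * (g 0 - g N) := by
    intro N
    induction N with
    | zero => simp
    | succ n ih =>
      have h1 : ∑ i ∈ range (n+1), a i * g i - (∑ i ∈ range (n+1), a i) * g (n+1)
          = (∑ i ∈ range n, a i * g i - (∑ i ∈ range n, a i) * g n)
            + (∑ i ∈ range (n+1), a i) * (g n - g (n+1)) := by
        rw [sum_range_succ, sum_range_succ]; ring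
      rw [h1]
      have h2 : 0 ≤ g n - g (n+1) := sub_nonneg.2 (hg (Nat.le_succ n))
      have h3 := abs_add_le (∑ i ∈ range n, a i * g i - (∑ i ∈ range n, a i) * g n)
        ((∑ i ∈ range (n+1), a i) * (g n - g (n+1)))
      have h4 : |(∑ i ∈ range (n+1), a i) * (g n - g (n+1))| ≤ B * (g n - g (n+1)) := by
        rw [abs_mul, abs_of_nonneg h2]
        exact mul_le_mul_of_nonneg_right (ha _) h2
      linarith
  have h1 := key N
  have h2 : |(∑ i ∈ range N, a i) * g N| ≤ B * g N := by
    rw [abs_mul, abs_of_nonneg (hg0 N)]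
    exact mul_le_mul_of_nonneg_right (ha _) (hg0 N)
  have h3 := abs_add_le (∑ i ∈ range N, a i * g i - (∑ i ∈ range N, a i) * g N)
        ((∑ i ∈ range N, a i) * g N)
  rw [sub_add_cancel] at h3
  linarith

lemma exp_le_one_sub (x : ℝ) (hx : x ≤ 1/2) : Real.exp (-x - 2 * x^2) ≤ 1 - x := by
  have hy : 0 < 1 + x + 2*x^2 := by nlinarith [sq_nonneg (x + 1), sq_nonneg (x+1/4)]
  have h1 : 1 + x + 2*x^2 ≤ Real.exp (x + 2*x^2) := by
    have := Real.add_one_le_exp (x + 2*x^2); linarith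
  have h2 : -x - 2*x^2 = -(x + 2*x^2) := by ring
  rw [h2, Real.exp_neg]
  have h3 : (Real.exp (x + 2*x^2))⁻¹ ≤ (1 + x + 2*x^2)⁻¹ := inv_anti₀ hy h1
  refine h3.trans ?_
  rw [inv_le_iff_one_le_mul₀ hy]
  nlinarith [mul_nonneg (sq_nonneg x) (by linarith : (0:ℝ) ≤ 1 - 2*x)]

/-- the weight `max(n,1)^(-t)` -/
noncomputable def wt (t : ℝ) (n : ℕ) : ℝ := ((max n 1 : ℕ) : ℝ) ^ (-t)

lemma wt_pos (t : ℝ) (n : ℕ) : 0 < wt t n := by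
  unfold wt
  apply Real.rpow_pos_of_pos
  exact_mod_cast (by omega : 0 < max n 1)

lemma wt_anti (t : ℝ) (ht : 0 ≤ t) : Antitone (wt t) := by
  intro a b hab
  unfold wt
  apply Real.rpow_le_rpow_of_nonpos
  · exact_mod_cast (by omega : 0 < max a 1)
  · exact_mod_cast (by omega : max a 1 ≤ max b 1)
  · linarith

lemma wt_zero (t : ℝ) : wt t 0 = 1 := by simp [wt]
lemma wt_one (t : ℝ) : wt t 1 = 1 := by simp [wt]

lemma wt_of_pos (t : ℝ) (n : ℕ) (hn : 1 ≤ n) : wt t n = (n : ℝ) ^ (-t) := by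
  simp [wt, max_eq_left hn]

lemma wt_mul (t : ℝ) (a b : ℕ) (ha : 1 ≤ a) (hb : 1 ≤ b) : wt t (a * b) = wt t a * wt t b := by
  rw [wt_of_pos _ _ ha, wt_of_pos _ _ hb, wt_of_pos _ _ (Nat.mul_pos ha hb), Nat.cast_mul,
    Real.mul_rpow (by positivity) (by positivity)]

lemma wt_le_inv (s : ℝ) (hs : 1 ≤ s) (n : ℕ) (hn : 1 ≤ n) : wt s n ≤ (n : ℝ)⁻¹ := by
  rw [wt_of_pos _ _ hn, ← Real.rpow_neg_one]
  apply Real.rpow_le_rpow_of_exponent_le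
  · exact_mod_cast hn
  · linarith

lemma wt_split (s : ℝ) (n : ℕ) (hn : 1 ≤ n) : wt s n = (n : ℝ)⁻¹ * wt (s-1) n := by
  rw [wt_of_pos _ _ hn, wt_of_pos _ _ hn, ← Real.rpow_neg_one,
    ← Real.rpow_add (by exact_mod_cast hn)]
  congr 1; ring

open ArithmeticFunction in
lemma euler_limit (f : ℕ → ℤ) (hf1 : f 1 = 1)
    (hfmul : ∀ a b : ℕ, f (a * b) = f a * f b)
    (hfpm : ∀ n : ℕ, 1 ≤ n → f n = 1 ∨ f n = -1) (s : ℝ) (hs : 1 < s) :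
    ∃ F : ℝ, Tendsto (fun N : ℕ => ∏ p ∈ N.primesBelow, (1 - (f p : ℝ) * wt s p)) atTop (𝓝 F) ∧
      Tendsto (fun N : ℕ => ∑ n ∈ range N, (((moebius n * f n : ℤ) : ℝ) * wt s n)) atTop (𝓝 F) := by
  set h : ℕ → ℝ := fun n => (((moebius n * f n : ℤ) : ℝ) * wt s n) with hh
  have h0 : h 0 = 0 := by simp [hh]
  have h1 : h 1 = 1 := by simp [hh, hf1, wt_one]
  have hsum : Summable (fun n => ‖h n‖) := by
    refine Summable.of_nonneg_of_le (fun _ => norm_nonneg _) ?_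
      (Real.summable_nat_rpow.2 (by linarith : -s < -1))
    intro n
    rcases Nat.eq_zero_or_pos n with rfl | hn
    · rw [h0, norm_zero]; positivity
    · rw [← wt_of_pos _ _ hn, hh]
      simp only [norm_mul, Real.norm_eq_abs, abs_of_pos (wt_pos s n)]
      have hfa : |f n| = 1 := by rcases hfpm n hn with h | h <;> simp [h]
      have : |((moebius n * f n : ℤ) : ℝ)| ≤ 1 := by
        have h2 : |moebius n * f n| ≤ 1 := by
          rw [abs_mul, hfa, mul_one]; exact abs_moebius_le_one
        exact_mod_cast h2
      exact mul_le_of_le_one_left (wt_pos s n).le this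
  have hmul : ∀ {m n : ℕ}, m.Coprime n → h (m * n) = h m * h n := by
    intro m n hmn
    rcases Nat.eq_zero_or_pos m with rfl | hm
    · simp [h0]
    rcases Nat.eq_zero_or_pos n with rfl | hn
    · simp [h0]
    simp only [hh]
    rw [isMultiplicative_moebius.map_mul_of_coprime hmn, hfmul, wt_mul _ _ _ hm hn]
    push_cast; ring
  refine ⟨∑' n, h n, ?_, hsum.of_norm.hasSum.tendsto_sum_nat⟩
  refine (EulerProduct.eulerProduct h1 hmul hsum h0).congr ?_
  intro N
  refine prod_congr rfl fun p hp => ?_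
  have pp := Nat.prime_of_mem_primesBelow hp
  rw [tsum_eq_sum (s := range 2)]
  · simp only [sum_range_succ, sum_range_zero, pow_zero, pow_one, h1]
    simp only [hh, moebius_apply_prime pp]
    push_cast; ring
  · intro e he
    have he2 : 1 < e := by simpa using he
    simp only [hh]
    rw [moebius_apply_prime_pow pp (by omega), if_neg (by omega)]
    simp


/-- If `f` is completely multiplicative with values in `{-1, 1}`, `c ∈ [-1, 0)`, and
`∑_p (c - f p)/p` converges, then the partial sums of `μ·f` are unbounded. -/
theorem stmt_5 (f : ℕ → ℤ)
    (hf1 : f 1 = 1)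
    (hfmul : ∀ a b : ℕ, f (a * b) = f a * f b)
    (hfpm : ∀ n : ℕ, 1 ≤ n → f n = 1 ∨ f n = -1)
    (c : ℝ) (hc : c ∈ Set.Ico (-1 : ℝ) 0)
    (hconv : ∃ L : ℝ, Filter.Tendsto
      (fun N : ℕ => ∑ p ∈ N.primesBelow, (c - (f p : ℝ)) / p) Filter.atTop (nhds L)) :
    ∀ C : ℝ, ∃ N : ℕ,
      C < |((∑ n ∈ Finset.Icc 1 N, ArithmeticFunction.moebius n * f n : ℤ) : ℝ)| := by
  intro C
  by_contra! hC
  obtain ⟨L, hL⟩ := hconv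
  have sum_pb : ∀ (N : ℕ) (u : ℕ → ℝ), ∑ p ∈ N.primesBelow, u p
      = ∑ i ∈ range N, if i.Prime then u i else 0 := by
    intro N u
    rw [Nat.primesBelow, sum_filter]
  obtain ⟨B, hB⟩ : ∃ B : ℝ, ∀ N : ℕ, |∑ p ∈ N.primesBelow, (c - (f p : ℝ)) / p| ≤ B := by
    obtain ⟨B, hB⟩ := (Metric.isBounded_range_of_tendsto _ hL).exists_norm_le
    exact ⟨B, fun N => hB _ ⟨N, rfl⟩⟩
  have hsq : Summable (fun n : ℕ => ((n:ℝ)^2)⁻¹) := Real.summable_nat_pow_inv.2 (by norm_num)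
  set K : ℝ := ∑' n : ℕ, ((n:ℝ)^2)⁻¹ with hK
  -- main inequality
  have main : ∀ s : ℝ, 1 < s → ∀ M : ℕ, -c * ∑ p ∈ M.primesBelow, wt s p ≤ C + B + 2 * K := by
    intro s hs M
    obtain ⟨F, hF1, hF2⟩ := euler_limit f hf1 hfmul hfpm s hs
    have hFC : F ≤ C := by
      refine le_of_tendsto hF2 (Eventually.of_forall fun N => ?_)
      have := abel_bound_s5 (fun n => ((ArithmeticFunction.moebius n * f n : ℤ) : ℝ)) (wt s) C ?_
        (wt_anti s (by linarith)) (fun n => (wt_pos s n).le) N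
      · rw [wt_zero, mul_one] at this
        exact (le_abs_self _).trans this
      · intro N
        rcases N with _ | N
        · simpa using hC 0
        · have h2 := hC N
          rw [Int.cast_sum] at h2
          rw [range_eq_Ico, sum_eq_sum_Ico_succ_bot (by omega)]
          simpa [Finset.Ico_add_one_right_eq_Icc] using h2
    have hFe : Real.exp (-c * ∑ p ∈ M.primesBelow, wt s p - B - 2 * K) ≤ F := by
      refine ge_of_tendsto hF1 (eventually_atTop.2 ⟨M, fun N hN => ?_⟩)
      have step : ∏ p ∈ N.primesBelow,
          Real.exp (-((f p : ℝ) * wt s p) - 2 * ((f p : ℝ) * wt s p)^2)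
          ≤ ∏ p ∈ N.primesBelow, (1 - (f p : ℝ) * wt s p) := by
        refine prod_le_prod (fun _ _ => (Real.exp_pos _).le) fun p hp => ?_
        have pp := Nat.prime_of_mem_primesBelow hp
        apply exp_le_one_sub
        have hw := wt_le_inv s hs.le p pp.one_le
        have hw2 : (p:ℝ)⁻¹ ≤ 1/2 := by
          rw [one_div]
          exact inv_anti₀ (by norm_num) (by exact_mod_cast pp.two_le)
        have := wt_pos s p
        rcases hfpm p pp.one_le with h | h <;> rw [h] <;> push_cast <;> linarith
      refine le_trans ?_ step
      rw [← Real.exp_sum]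
      apply Real.exp_le_exp.2
      rw [sum_sub_distrib, ← mul_sum]
      have e1 : ∑ p ∈ N.primesBelow, ((f p : ℝ) * wt s p)^2 ≤ K := by
        refine le_trans ?_ (hsq.sum_le_tsum N.primesBelow (fun _ _ => by positivity))
        refine sum_le_sum fun p hp => ?_
        have pp := Nat.prime_of_mem_primesBelow hp
        have hw := wt_le_inv s hs.le p pp.one_le
        have h2 : ((f p : ℝ))^2 = 1 := by
          rcases hfpm p pp.one_le with h | h <;> rw [h] <;> norm_num
        rw [mul_pow, h2, one_mul, ← inv_pow]
        exact pow_le_pow_left₀ (wt_pos s p).le hw 2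
      have e2 : |∑ p ∈ N.primesBelow, (c - (f p : ℝ)) * wt s p| ≤ B := by
        have := abel_bound_s5 (fun p => if p.Prime then (c - (f p : ℝ)) / p else 0) (wt (s-1)) B ?_
          (wt_anti (s-1) (by linarith)) (fun n => (wt_pos _ n).le) N
        · rw [wt_zero, mul_one] at this
          refine le_of_eq_of_le ?_ this
          rw [sum_pb]
          congr 1
          refine sum_congr rfl fun p _ => ?_
          split_ifs with pp
          · rw [wt_split s p pp.one_le]; ring
          · simp
        · intro N
          rw [← sum_pb]; exact hB N
      have e3 : ∑ p ∈ M.primesBelow, wt s p ≤ ∑ p ∈ N.primesBelow, wt s p := by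
        refine sum_le_sum_of_subset_of_nonneg ?_ (fun _ _ _ => (wt_pos _ _).le)
        intro p hp
        rw [Nat.mem_primesBelow] at hp ⊢
        exact ⟨by omega, hp.2⟩
      have e4 : ∑ p ∈ N.primesBelow, -((f p : ℝ) * wt s p)
          = ∑ p ∈ N.primesBelow, (c - (f p : ℝ)) * wt s p
            + -c * ∑ p ∈ N.primesBelow, wt s p := by
        rw [mul_sum, ← sum_add_distrib]
        exact sum_congr rfl fun p _ => by ring
      rw [e4]
      have e5 := mul_le_mul_of_nonneg_left e3 (by linarith [hc.2] : 0 ≤ -c)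
      have e6 := (abs_le.1 e2).1
      linarith
    have := Real.add_one_le_exp (-c * ∑ p ∈ M.primesBelow, wt s p - B - 2 * K)
    linarith
  have lim : ∀ M : ℕ, -c * ∑ p ∈ M.primesBelow, wt 1 p ≤ C + B + 2 * K := by
    intro M
    have hcont : Continuous (fun s : ℝ => -c * ∑ p ∈ M.primesBelow, wt s p) := by
      refine continuous_const.mul (continuous_finsetSum _ fun p _ => ?_)
      unfold wt
      refine Continuous.rpow continuous_const continuous_neg (fun x => Or.inl ?_)
      exact_mod_cast (by omega : max p 1 ≠ 0)
    exact le_of_tendsto ((hcont.tendsto 1).mono_left nhdsWithin_le_nhds : Tendsto _ (𝓝[>] (1:ℝ)) _)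
      (eventually_nhdsWithin_of_forall fun s hs => main s hs M)
  apply not_summable_one_div_on_primes
  refine summable_of_sum_range_le (c := (C + B + 2 * K) / (-c)) ?_ ?_
  · intro n
    exact Set.indicator_nonneg (fun _ _ => by positivity) n
  · intro M
    rw [le_div_iff₀ (by linarith [hc.2]), mul_comm]
    refine le_of_eq_of_le ?_ (lim M)
    rw [sum_pb]
    congr 1
    refine sum_congr rfl fun p _ => ?_
    by_cases pp : p.Prime
    · rw [if_pos pp, Set.indicator_of_mem (by exact pp), wt_of_pos _ _ pp.one_le,
        Real.rpow_neg_one, one_div]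
    · rw [if_neg pp, Set.indicator_of_notMem (by exact pp)]
end

section
/- Let f : ℕ → ℤ be a completely multiplicative function taking values in {-1, 1}, and let c ∈ (0, 1] be a real number. If the series ∑_p (c - f(p))/p over primes p converges, then ∑_{n ≤ x} f(n)/n → ∞ as x → ∞. -/
open ArithmeticFunction Finset
open scoped ArithmeticFunction.zeta

/-- completely multiplicative with values `±1` -/
def CMpm (φ : ArithmeticFunction ℝ) : Prop :=
  φ 1 = 1 ∧ (∀ a b : ℕ, φ (a * b) = φ a * φ b) ∧ ∀ n : ℕ, 1 ≤ n → φ n = 1 ∨ φ n = -1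

lemma af_mul_nonneg {a b : ArithmeticFunction ℝ} (ha : ∀ n, 0 ≤ a n) (hb : ∀ n, 0 ≤ b n) (n : ℕ) :
    0 ≤ (a * b) n := by
  rw [ArithmeticFunction.mul_apply]
  exact Finset.sum_nonneg fun x _ => mul_nonneg (ha _) (hb _)

lemma D_mul (a b : ArithmeticFunction ℝ) :
    pmul log (a * b) = pmul log a * b + a * pmul log b := by
  ext n
  simp only [pmul_apply, ArithmeticFunction.mul_apply, ArithmeticFunction.add_apply]
  rw [Finset.mul_sum, ← Finset.sum_add_distrib]
  refine Finset.sum_congr rfl fun x hx => ?_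
  obtain ⟨h1, h2⟩ := Nat.mem_divisorsAntidiagonal.1 hx
  have hx1 : x.1 ≠ 0 := by rintro h; simp [h] at h1; omega
  have hx2 : x.2 ≠ 0 := by rintro h; simp [h] at h1; omega
  rw [← h1]
  simp only [log_apply]
  push_cast
  rw [Real.log_mul (by exact_mod_cast hx1) (by exact_mod_cast hx2)]
  ring

lemma phi_mul {φ : ArithmeticFunction ℝ} (h : CMpm φ) (a b : ArithmeticFunction ℝ) :
    pmul φ (a * b) = pmul φ a * pmul φ b := by
  ext n
  simp only [pmul_apply, ArithmeticFunction.mul_apply]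
  rw [Finset.mul_sum]
  refine Finset.sum_congr rfl fun x hx => ?_
  obtain ⟨h1, h2⟩ := Nat.mem_divisorsAntidiagonal.1 hx
  rw [← h1, h.2.1]
  ring

lemma phi_zeta (φ : ArithmeticFunction ℝ) : pmul φ (ζ : ArithmeticFunction ℝ) = φ := by
  ext n
  by_cases h : n = 0 <;> simp [pmul_apply, natCoe_apply, zeta_apply, h]

lemma log_zeta : pmul log (ζ : ArithmeticFunction ℝ) = log := by
  ext n
  by_cases h : n = 0 <;> simp [pmul_apply, natCoe_apply, zeta_apply, h]

lemma phi_bd {φ : ArithmeticFunction ℝ} (h : CMpm φ) (n : ℕ) : |φ n| ≤ 1 := by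
  rcases Nat.eq_zero_or_pos n with rfl | hn
  · simp
  · rcases h.2.2 n hn with h | h <;> simp [h]

lemma Dphi {φ : ArithmeticFunction ℝ} (h : CMpm φ) : pmul log φ = pmul φ Λ * φ := by
  have := phi_mul h Λ (ζ : ArithmeticFunction ℝ)
  rw [vonMangoldt_mul_zeta, phi_zeta] at this
  rw [← this, pmul_comm]

lemma Dg {φ : ArithmeticFunction ℝ} (h : CMpm φ) :
    pmul log ((ζ : ArithmeticFunction ℝ) * φ) = (Λ + pmul φ Λ) * ((ζ : ArithmeticFunction ℝ) * φ) := by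
  rw [D_mul, Dphi h, log_zeta, ← vonMangoldt_mul_zeta]
  ring

lemma Lp_nonneg {φ : ArithmeticFunction ℝ} (h : CMpm φ) (n : ℕ) : 0 ≤ (Λ + pmul φ Λ) n := by
  have := abs_le.1 (phi_bd h n)
  have h2 : 0 ≤ Λ n := vonMangoldt_nonneg
  simp only [ArithmeticFunction.add_apply, pmul_apply]
  nlinarith

lemma Lm_nonneg {φ : ArithmeticFunction ℝ} (h : CMpm φ) (n : ℕ) : 0 ≤ (Λ - pmul φ Λ) n := by
  have := abs_le.1 (phi_bd h n)
  have h2 : 0 ≤ Λ n := vonMangoldt_nonneg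
  simp only [sub_eq_add_neg, ArithmeticFunction.add_apply, ArithmeticFunction.neg_apply, pmul_apply]
  nlinarith

lemma g_nonneg {φ : ArithmeticFunction ℝ} (h : CMpm φ) (n : ℕ) :
    0 ≤ ((ζ : ArithmeticFunction ℝ) * φ) n := by
  induction n using Nat.strong_induction_on with
  | _ n ih =>
    rcases Nat.lt_or_ge n 2 with hn | hn
    · interval_cases n
      · simp
      · simp [ArithmeticFunction.mul_apply, h.1]
    · have h1 := congrArg (fun F : ArithmeticFunction ℝ => F n) (Dg h)
      simp only [pmul_apply] at h1
      have hlog : 0 < log n := by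
        rw [log_apply]; exact Real.log_pos (by exact_mod_cast hn)
      have : 0 ≤ ((Λ + pmul φ Λ) * ((ζ : ArithmeticFunction ℝ) * φ)) n := by
        rw [ArithmeticFunction.mul_apply]
        refine Finset.sum_nonneg fun x hx => ?_
        obtain ⟨h1, h2⟩ := Nat.mem_divisorsAntidiagonal.1 hx
        by_cases hx1 : x.1 = 1
        · simp [hx1, ArithmeticFunction.add_apply, pmul_apply]
        · refine mul_nonneg (Lp_nonneg h _) (ih _ ?_)
          have hx0 : x.1 ≠ 0 := by rintro h; simp [h] at h1; omega
          have hx2 : x.2 ≠ 0 := by rintro h; simp [h] at h1; omega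
          have : 2 ≤ x.1 := by omega
          nlinarith [Nat.pos_of_ne_zero hx2]
      rw [← h1] at this
      exact nonneg_of_mul_nonneg_right this hlog

/-- key pointwise inequality -/
lemma key_pt {φ : ArithmeticFunction ℝ} (h : CMpm φ) (n : ℕ) :
    4 * (pmul log φ * log) n ≤ Real.log n ^ 2 * ((ζ : ArithmeticFunction ℝ) * φ) n := by
  set g := (ζ : ArithmeticFunction ℝ) * φ with hg
  have e1 : pmul log (pmul log g) = (pmul log (Λ + pmul φ Λ) + (Λ + pmul φ Λ) * (Λ + pmul φ Λ)) * g := by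
    rw [hg, Dg h, D_mul, Dg h]; ring
  have e2 : pmul log φ * log = Λ * pmul φ Λ * g := by
    rw [Dphi h, ← vonMangoldt_mul_zeta, hg]; ring
  have e3 : pmul log (pmul log g) = (pmul log (Λ + pmul φ Λ) + (Λ - pmul φ Λ) * (Λ - pmul φ Λ)) * g
      + (pmul log φ * log + pmul log φ * log + pmul log φ * log + pmul log φ * log) := by
    rw [e1, e2]; ring
  have e4 := congrArg (fun F : ArithmeticFunction ℝ => F n) e3
  simp only [pmul_apply, ArithmeticFunction.add_apply, log_apply] at e4
  have : 0 ≤ ((pmul log (Λ + pmul φ Λ) + (Λ - pmul φ Λ) * (Λ - pmul φ Λ)) * g) n := by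
    refine af_mul_nonneg (fun m => ?_) (g_nonneg h) n
    rw [ArithmeticFunction.add_apply]
    refine add_nonneg ?_ (af_mul_nonneg (Lm_nonneg h) (Lm_nonneg h) m)
    rw [pmul_apply, log_apply]
    exact mul_nonneg (Real.log_natCast_nonneg m) (Lp_nonneg h m)
  nlinarith

lemma conv_div (a b : ArithmeticFunction ℝ) (N : ℕ) :
    ∑ n ∈ Ioc 0 N, (a * b) n / n = ∑ d ∈ Ioc 0 N, a d / d * ∑ e ∈ Ioc 0 (N / d), b e / e := by
  let i : ArithmeticFunction ℝ := ⟨fun n => (n : ℝ)⁻¹, by simp⟩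
  have hi : ∀ n, i n = (n : ℝ)⁻¹ := fun _ => rfl
  have : pmul i (a * b) = pmul i a * pmul i b := by
    ext n
    simp only [pmul_apply, ArithmeticFunction.mul_apply]
    rw [Finset.mul_sum]
    refine Finset.sum_congr rfl fun x hx => ?_
    obtain ⟨h1, h2⟩ := Nat.mem_divisorsAntidiagonal.1 hx
    rw [← h1, hi, hi, hi]
    push_cast
    rw [mul_inv]
    ring
  have h2 := sum_Ioc_mul_eq_sum_sum (pmul i a) (pmul i b) N
  rw [← this] at h2
  simp only [pmul_apply, hi] at h2
  simp only [div_eq_inv_mul]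
  exact h2

lemma harm_bd {n : ℕ} {y : ℝ} (hn : 1 ≤ n) (h1 : n ≤ y) (h2 : y < n + 1) :
    |∑ a ∈ Ioc 0 n, 1 / (a : ℝ) - Real.log y - Real.eulerMascheroniConstant| ≤ 2 / y := by
  have hn' : (1 : ℝ) ≤ n := by exact_mod_cast hn
  have e : ∑ a ∈ Ioc 0 n, 1 / (a : ℝ) = harmonic n := by
    rw [harmonic_eq_sum_Icc]
    push_cast
    simp only [one_div]
    rfl
  rw [e]
  have a1 := Real.eulerMascheroniSeq_lt_eulerMascheroniConstant n
  have a2 := Real.eulerMascheroniConstant_lt_eulerMascheroniSeq' n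
  rw [Real.eulerMascheroniSeq] at a1
  rw [Real.eulerMascheroniSeq', if_neg (by omega)] at a2
  have b1 : Real.log n ≤ Real.log y := Real.log_le_log (by linarith) h1
  have b2 : Real.log y ≤ Real.log (n + 1) := Real.log_le_log (by linarith) h2.le
  have b3 : Real.log (n + 1) - Real.log n ≤ 1 / n := by
    rw [← Real.log_div (by linarith) (by linarith)]
    have := Real.log_le_sub_one_of_pos (show (0 : ℝ) < (n + 1) / n by positivity)
    have e : ((n : ℝ) + 1) / n - 1 = 1 / n := by field_simp; ring
    linarith
  have b4 : 1 / (n : ℝ) ≤ 2 / y := by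
    rw [div_le_div_iff₀ (by linarith) (by linarith)]; linarith
  rw [abs_le]; constructor <;> linarith

lemma logfac_bd1 (n : ℕ) (hn : 1 ≤ n) : (n : ℝ) * Real.log n - n ≤ ∑ a ∈ Ioc 0 n, Real.log a ∧
    ∑ a ∈ Ioc 0 n, Real.log a ≤ (n : ℝ) * Real.log n - n + 1 + Real.log n := by
  induction n, hn using Nat.le_induction with
  | base => simp
  | succ n hn ih =>
    have hn' : (1 : ℝ) ≤ n := by exact_mod_cast hn
    rw [← Finset.insert_Ioc_right_eq_Ioc_add_one (by omega), Finset.sum_insert (by simp)]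
    push_cast
    have c1 : 1 / ((n : ℝ) + 1) ≤ Real.log (n + 1) - Real.log n := by
      rw [← Real.log_div (by linarith) (by linarith)]
      have := Real.one_sub_inv_le_log_of_pos (show (0 : ℝ) < (n + 1) / n by positivity)
      have e : 1 - (((n : ℝ) + 1) / n)⁻¹ = 1 / (n + 1) := by field_simp; ring
      linarith
    have b3 : Real.log (n + 1) - Real.log n ≤ 1 / n := by
      rw [← Real.log_div (by linarith) (by linarith)]
      have := Real.log_le_sub_one_of_pos (show (0 : ℝ) < (n + 1) / n by positivity)
      have e : ((n : ℝ) + 1) / n - 1 = 1 / n := by field_simp; ring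
      linarith
    have c2 : 1 ≤ ((n : ℝ) + 1) * (Real.log (n + 1) - Real.log n) := by
      rw [div_le_iff₀ (by linarith)] at c1; linarith
    have c3 : (n : ℝ) * (Real.log (n + 1) - Real.log n) ≤ 1 := by
      rw [le_div_iff₀ (by linarith)] at b3; linarith
    constructor <;> nlinarith [ih.1, ih.2]

lemma logfac_bd {n : ℕ} {y : ℝ} (hn : 1 ≤ n) (h1 : n ≤ y) (h2 : y < n + 1) :
    |∑ a ∈ Ioc 0 n, Real.log a - (y * Real.log y - y)| ≤ 1 + Real.log y := by
  have hn' : (1 : ℝ) ≤ n := by exact_mod_cast hn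
  have hy : 0 < y := by linarith
  obtain ⟨l1, l2⟩ := logfac_bd1 n hn
  have b1 : Real.log n ≤ Real.log y := Real.log_le_log (by linarith) h1
  have b0 : 0 ≤ Real.log n := Real.log_natCast_nonneg n
  have ly : Real.log y = Real.log n + Real.log (y / n) := by
    rw [Real.log_div (by linarith) (by linarith)]; ring
  have u1 : n * Real.log (y / n) ≤ y - n := by
    have := Real.log_le_sub_one_of_pos (show (0 : ℝ) < y / n by positivity)
    have e : (n : ℝ) * (y / n - 1) = y - n := by field_simp
    nlinarith
  have u2 : y - n ≤ y * Real.log (y / n) := by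
    have := Real.one_sub_inv_le_log_of_pos (show (0 : ℝ) < y / n by positivity)
    have e : y * (1 - (y / n)⁻¹) = y - n := by field_simp
    nlinarith
  have v1 : y * Real.log y - y - (n * Real.log n - n) ≤ Real.log y := by
    have : y * Real.log y - y - (n * Real.log n - n) = (y - n) * Real.log y + n * Real.log (y / n) - (y - n) := by
      rw [ly]; ring
    nlinarith
  have v2 : 0 ≤ y * Real.log y - y - (n * Real.log n - n) := by
    have : y * Real.log y - y - (n * Real.log n - n) = (y - n) * Real.log n + y * Real.log (y / n) - (y - n) := by
      rw [ly]; ring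
    nlinarith
  rw [abs_le]; constructor <;> linarith

lemma comb_bd {n : ℕ} {y : ℝ} (hn : 1 ≤ n) (h1 : n ≤ y) (h2 : y < n + 1) :
    |∑ a ∈ Ioc 0 n, Real.log a - y * (∑ a ∈ Ioc 0 n, 1 / (a : ℝ) - (1 + Real.eulerMascheroniConstant))|
      ≤ 3 + Real.log y := by
  have hn' : (1 : ℝ) ≤ n := by exact_mod_cast hn
  have hy : 0 < y := by linarith
  have a := abs_le.1 (logfac_bd hn h1 h2)
  have b := abs_le.1 (harm_bd hn h1 h2)
  have b1 := mul_le_mul_of_nonneg_left b.1 hy.le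
  have b2 := mul_le_mul_of_nonneg_left b.2 hy.le
  have e : y * (2 / y) = 2 := by field_simp
  rw [mul_neg] at b1
  rw [e] at b1 b2
  rw [abs_le]; constructor <;> nlinarith

lemma fl {N b : ℕ} (hb : b ∈ Ioc 0 N) : 1 ≤ N / b ∧ ((N / b : ℕ) : ℝ) ≤ (N : ℝ) / b ∧
    (N : ℝ) / b < ((N / b : ℕ) : ℝ) + 1 := by
  rw [Finset.mem_Ioc] at hb
  refine ⟨(Nat.one_le_div_iff hb.1).2 hb.2, Nat.cast_div_le, ?_⟩
  rw [div_lt_iff₀ (by exact_mod_cast hb.1)]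
  exact_mod_cast (Nat.div_lt_iff_lt_mul hb.1).1 (Nat.lt_succ_self (N / b))

lemma g_sum {φ : ArithmeticFunction ℝ} (h : CMpm φ) (N : ℕ) :
    ∑ n ∈ Ioc 0 N, ((ζ : ArithmeticFunction ℝ) * φ) n ≤ N * ∑ n ∈ Ioc 0 N, φ n / n + N := by
  rw [mul_comm, sum_Ioc_mul_zeta_eq_sum]
  have e : (N : ℝ) * ∑ n ∈ Ioc 0 N, φ n / n + N = ∑ n ∈ Ioc 0 N, (φ n * (N / n : ℝ) + 1) := by
    rw [Finset.sum_add_distrib, Finset.mul_sum]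
    simp only [Finset.sum_const, Nat.card_Ioc, nsmul_eq_mul]
    congr 1
    · exact Finset.sum_congr rfl fun n _ => by ring
    · simp
  rw [e]
  refine Finset.sum_le_sum fun b hb => ?_
  obtain ⟨_, h1, h2⟩ := fl hb
  have := abs_le.1 (phi_bd h b)
  nlinarith

lemma step_iii {φ : ArithmeticFunction ℝ} (h : CMpm φ) {N : ℕ} (hN : 1 ≤ N) :
    N * (∑ n ∈ Ioc 0 N, (pmul log φ * (ζ : ArithmeticFunction ℝ)) n / n
      - (1 + Real.eulerMascheroniConstant) * ∑ n ∈ Ioc 0 N, (pmul log φ) n / n) - 4 * N * Real.log N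
    ≤ ∑ n ∈ Ioc 0 N, (pmul log φ * log) n := by
  have hN' : (1 : ℝ) ≤ N := by exact_mod_cast hN
  rw [conv_div, sum_Ioc_mul_eq_sum_sum]
  have hz : ∀ n : ℕ, ∑ e ∈ Ioc 0 n, (ζ : ArithmeticFunction ℝ) e / e = ∑ a ∈ Ioc 0 n, 1 / (a : ℝ) := by
    intro n
    refine Finset.sum_congr rfl fun e he => ?_
    have : e ≠ 0 := by have := Finset.mem_Ioc.1 he; omega
    simp [natCoe_apply, zeta_apply, this]
  have e4 : 4 * N * Real.log N ≥ ∑ b ∈ Ioc 0 N, Real.log N * (3 + Real.log ((N : ℝ) / b)) := by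
    rw [← Finset.mul_sum, Finset.sum_add_distrib]
    have : ∑ b ∈ Ioc 0 N, Real.log ((N : ℝ) / b) = N * Real.log N - ∑ b ∈ Ioc 0 N, Real.log b := by
      rw [show (N : ℝ) * Real.log N = ∑ b ∈ Ioc 0 N, Real.log N by simp, ← Finset.sum_sub_distrib]
      refine Finset.sum_congr rfl fun e he => ?_
      have : e ≠ 0 := by have := Finset.mem_Ioc.1 he; omega
      rw [Real.log_div (by linarith) (by exact_mod_cast this)]
    rw [this]
    have l := (logfac_bd1 N hN).1
    have l0 : 0 ≤ Real.log N := Real.log_natCast_nonneg N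
    simp only [Finset.sum_const, Nat.card_Ioc, nsmul_eq_mul, Nat.sub_zero]
    nlinarith
  have main : ∑ b ∈ Ioc 0 N, ((N : ℝ) * ((pmul log φ) b / b * ∑ e ∈ Ioc 0 (N / b), (ζ : ArithmeticFunction ℝ) e / e)
      - N * (1 + Real.eulerMascheroniConstant) * ((pmul log φ) b / b) - Real.log N * (3 + Real.log ((N : ℝ) / b)))
      ≤ ∑ b ∈ Ioc 0 N, (pmul log φ) b * ∑ e ∈ Ioc 0 (N / b), log e := by
    refine Finset.sum_le_sum fun b hb => ?_
    rw [hz]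
    obtain ⟨h0, h1, h2⟩ := fl hb
    have c := comb_bd h0 h1 h2
    have hb0 := Finset.mem_Ioc.1 hb
    have hb1 : (1 : ℝ) ≤ b := by exact_mod_cast hb0.1
    have hb2 : (b : ℝ) ≤ N := by exact_mod_cast hb0.2
    simp only [pmul_apply, log_apply]
    set A := ∑ a ∈ Ioc 0 (N / b), Real.log a
    set H := ∑ a ∈ Ioc 0 (N / b), 1 / (a : ℝ)
    have k : |Real.log b * φ b| ≤ Real.log N := by
      rw [abs_mul, abs_of_nonneg (Real.log_nonneg hb1)]
      have := Real.log_le_log (by linarith) hb2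
      have := phi_bd h b
      have := Real.log_nonneg hb1
      nlinarith [abs_nonneg (φ b)]
    have k2 : |Real.log b * φ b * (A - (N : ℝ) / b * (H - (1 + Real.eulerMascheroniConstant)))|
        ≤ Real.log N * (3 + Real.log ((N : ℝ) / b)) := by
      rw [abs_mul]
      exact mul_le_mul k c (abs_nonneg _) (Real.log_natCast_nonneg N)
    have k3 := (abs_le.1 k2).1
    have e : (N : ℝ) * (Real.log b * φ b / b * H) - N * (1 + Real.eulerMascheroniConstant) * (Real.log b * φ b / b)
        = Real.log b * φ b * ((N : ℝ) / b * (H - (1 + Real.eulerMascheroniConstant))) := by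
      field_simp
    linarith
  rw [Finset.sum_sub_distrib, Finset.sum_sub_distrib, ← Finset.mul_sum, ← Finset.mul_sum] at main
  linarith

lemma step_iv {φ : ArithmeticFunction ℝ} (h : CMpm φ) {N : ℕ} (hN : 1 ≤ N) :
    ∑ n ∈ Ioc 0 N, (pmul log φ) n / n ≤
      (Real.log N + Real.eulerMascheroniConstant) * ∑ n ∈ Ioc 0 N, φ n / n + 2 := by
  have hN' : (1 : ℝ) ≤ N := by exact_mod_cast hN
  have hL : 0 ≤ ∑ n ∈ Ioc 0 N, (φ * (ζ : ArithmeticFunction ℝ)) n / n := by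
    rw [mul_comm φ]
    exact Finset.sum_nonneg fun n _ => div_nonneg (g_nonneg h n) (by positivity)
  rw [conv_div] at hL
  have hz : ∀ n : ℕ, ∑ e ∈ Ioc 0 n, (ζ : ArithmeticFunction ℝ) e / e = ∑ a ∈ Ioc 0 n, 1 / (a : ℝ) := by
    intro n
    refine Finset.sum_congr rfl fun e he => ?_
    have : e ≠ 0 := by have := Finset.mem_Ioc.1 he; omega
    simp [natCoe_apply, zeta_apply, this]
  have main : ∑ b ∈ Ioc 0 N, (φ b / b * ∑ e ∈ Ioc 0 (N / b), (ζ : ArithmeticFunction ℝ) e / e)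
      ≤ ∑ b ∈ Ioc 0 N, ((Real.log N + Real.eulerMascheroniConstant) * (φ b / b) - (pmul log φ) b / b + 2 / N) := by
    refine Finset.sum_le_sum fun b hb => ?_
    rw [hz]
    obtain ⟨h0, h1, h2⟩ := fl hb
    have c := harm_bd h0 h1 h2
    have hb0 := Finset.mem_Ioc.1 hb
    have hb1 : (1 : ℝ) ≤ b := by exact_mod_cast hb0.1
    simp only [pmul_apply, log_apply]
    set H := ∑ a ∈ Ioc 0 (N / b), 1 / (a : ℝ)
    rw [Real.log_div (by linarith) (by linarith)] at c
    have k : |φ b / b| ≤ 1 / b := by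
      rw [abs_div, abs_of_pos (show (0 : ℝ) < b by linarith)]
      gcongr
      exact phi_bd h b
    have k2 : |φ b / b * (H - (Real.log N - Real.log b) - Real.eulerMascheroniConstant)| ≤ 1 / b * (2 / ((N : ℝ) / b)) := by
      rw [abs_mul]
      exact mul_le_mul k c (abs_nonneg _) (by positivity)
    have k3 := (abs_le.1 k2).2
    have e : 1 / (b : ℝ) * (2 / ((N : ℝ) / b)) = 2 / N := by field_simp
    rw [e] at k3
    have e2 : Real.log b * φ b / b = φ b / b * Real.log b := by ring
    rw [e2]
    linarith
  rw [Finset.sum_add_distrib, Finset.sum_sub_distrib, ← Finset.mul_sum] at main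
  have : ∑ b ∈ Ioc 0 N, (2 : ℝ) / N = 2 := by
    simp only [Finset.sum_const, Nat.card_Ioc, nsmul_eq_mul, Nat.sub_zero]; field_simp
  linarith

lemma main_ineq {φ : ArithmeticFunction ℝ} (h : CMpm φ) {N : ℕ} (hN : 1 ≤ N) :
    4 * (∑ n ∈ Ioc 0 N, (pmul φ Λ * ((ζ : ArithmeticFunction ℝ) * φ)) n / n
      - 2 * ((Real.log N + 1) * |∑ n ∈ Ioc 0 N, φ n / n| + 2)
      - 4 * Real.log N) ≤ Real.log N ^ 2 * (∑ n ∈ Ioc 0 N, φ n / n + 1) := by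
  have hN' : (1 : ℝ) ≤ N := by exact_mod_cast hN
  have e : pmul φ Λ * ((ζ : ArithmeticFunction ℝ) * φ) = pmul log φ * (ζ : ArithmeticFunction ℝ) := by
    rw [Dphi h]; ring
  rw [e]
  have a1 := step_iii h hN
  have a2 := step_iv h hN
  have a3 := g_sum h N
  set S := ∑ n ∈ Ioc 0 N, φ n / n
  set R := ∑ n ∈ Ioc 0 N, (pmul log φ) n / n
  set Q := ∑ n ∈ Ioc 0 N, (pmul log φ * (ζ : ArithmeticFunction ℝ)) n / n
  have l0 : 0 ≤ Real.log N := Real.log_natCast_nonneg N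
  have a4 : 4 * ∑ n ∈ Ioc 0 N, (pmul log φ * log) n ≤
      Real.log N ^ 2 * ∑ n ∈ Ioc 0 N, ((ζ : ArithmeticFunction ℝ) * φ) n := by
    rw [Finset.mul_sum, Finset.mul_sum]
    refine Finset.sum_le_sum fun b hb => (key_pt h b).trans ?_
    have hb0 := Finset.mem_Ioc.1 hb
    have hb1 : (1 : ℝ) ≤ b := by exact_mod_cast hb0.1
    have hb2 : (b : ℝ) ≤ N := by exact_mod_cast hb0.2
    have := g_nonneg h b
    have := Real.log_nonneg hb1
    gcongr
  have g1 := Real.one_half_lt_eulerMascheroniConstant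
  have g2 := Real.eulerMascheroniConstant_lt_two_thirds
  set γ := Real.eulerMascheroniConstant
  have a5 : (1 + γ) * R ≤ 2 * ((Real.log N + 1) * |S| + 2) := by
    have i1 : (Real.log N + γ) * S + 2 ≤ (Real.log N + 1) * |S| + 2 := by
      have := le_abs_self S
      have := abs_nonneg S
      nlinarith
    have i2 : 0 ≤ (Real.log N + 1) * |S| + 2 := by positivity
    nlinarith
  have a6 : 4 * (N * (Q - (1 + γ) * R) - 4 * N * Real.log N) ≤ Real.log N ^ 2 * (N * S + N) := by
    refine le_trans ?_ (mul_le_mul_of_nonneg_left a3 (sq_nonneg _))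
    linarith
  have a7 : N * (4 * (Q - (1 + γ) * R - 4 * Real.log N)) ≤ N * (Real.log N ^ 2 * (S + 1)) := by
    linarith
  have a8 := le_of_mul_le_mul_left a7 (by linarith)
  linarith

lemma kron {t w T : ℕ → ℝ} {l : ℝ} (hT : ∀ N, T N = ∑ i ∈ range N, t i)
    (hl : Filter.Tendsto T Filter.atTop (nhds l)) (hw : Monotone w) (hw0 : ∀ n, 0 ≤ w n)
    {ε : ℝ} (hε : 0 < ε) : ∃ K, 0 ≤ K ∧ ∀ N, |∑ i ∈ range N, t i * w i| ≤ ε * w N + K := by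
  obtain ⟨n0, hn0⟩ := (Metric.tendsto_atTop.1 hl) (ε / 2) (by linarith)
  set D : ℕ → ℝ := fun N => ∑ i ∈ range N, t i * w i - (T N - l) * w N with hD
  have hDs : ∀ N, D (N + 1) = D N + (T (N + 1) - l) * (w N - w (N + 1)) := by
    intro N
    simp only [hD, hT, Finset.sum_range_succ]
    ring
  have hDb : ∀ N, n0 ≤ N → |D N| ≤ |D n0| + ε / 2 * (w N - w n0) := by
    intro N hN
    induction N, hN using Nat.le_induction with
    | base => simp
    | succ N hN ih =>
      rw [hDs]
      have h1 := (hn0 (N + 1) (by omega)).le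
      rw [Real.dist_eq] at h1
      have h2 := hw (Nat.le_succ N)
      have h3 : |(T (N + 1) - l) * (w N - w (N + 1))| ≤ ε / 2 * (w (N + 1) - w N) := by
        rw [abs_mul, abs_sub_comm (w N), abs_of_nonneg (sub_nonneg.2 h2)]
        exact mul_le_mul_of_nonneg_right h1 (sub_nonneg.2 h2)
      have := abs_add_le (D N) ((T (N + 1) - l) * (w N - w (N + 1)))
      linarith
  have hs : 0 ≤ ∑ i ∈ range n0, |t i * w i| := Finset.sum_nonneg fun _ _ => abs_nonneg _
  refine ⟨|D n0| + ∑ i ∈ range n0, |t i * w i|, by positivity, fun N => ?_⟩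
  rcases le_total n0 N with hN | hN
  · have e : ∑ i ∈ range N, t i * w i = D N + (T N - l) * w N := by simp [hD]
    rw [e]
    have h1 := (hn0 N hN).le
    rw [Real.dist_eq] at h1
    have h3 : |(T N - l) * w N| ≤ ε / 2 * w N := by
      rw [abs_mul, abs_of_nonneg (hw0 N)]
      exact mul_le_mul_of_nonneg_right h1 (hw0 N)
    have := abs_add_le (D N) ((T N - l) * w N)
    have := hDb N hN
    have := mul_nonneg hε.le (hw0 n0)
    linarith
  · have h1 : |∑ i ∈ range N, t i * w i| ≤ ∑ i ∈ range N, |t i * w i| := Finset.abs_sum_le_sum_abs _ _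
    have h2 : ∑ i ∈ range N, |t i * w i| ≤ ∑ i ∈ range n0, |t i * w i| :=
      Finset.sum_le_sum_of_subset_of_nonneg (Finset.range_mono hN) fun _ _ _ => abs_nonneg _
    have := mul_nonneg hε.le (hw0 N)
    have := abs_nonneg (D n0)
    linarith

lemma abel_bd {t w T : ℕ → ℝ} {C : ℝ} (hT : ∀ N, T N = ∑ i ∈ range N, t i)
    (hC : ∀ N, |T N| ≤ C) (hw : Antitone w) (hw0 : ∀ n, 0 ≤ w n) (N : ℕ) :
    |∑ i ∈ range N, t i * w i| ≤ C * w 0 := by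
  set D : ℕ → ℝ := fun N => ∑ i ∈ range N, t i * w i - T N * w N with hD
  have hDs : ∀ N, D (N + 1) = D N + T (N + 1) * (w N - w (N + 1)) := by
    intro N
    simp only [hD, hT, Finset.sum_range_succ]
    ring
  have hDb : ∀ N, |D N| ≤ C * (w 0 - w N) := by
    intro N
    induction N with
    | zero => simp [hD, hT]
    | succ N ih =>
      rw [hDs]
      have h2 := hw (Nat.le_succ N)
      have h3 : |T (N + 1) * (w N - w (N + 1))| ≤ C * (w N - w (N + 1)) := by
        rw [abs_mul, abs_of_nonneg (sub_nonneg.2 h2)]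
        exact mul_le_mul_of_nonneg_right (hC _) (sub_nonneg.2 h2)
      have := abs_add_le (D N) (T (N + 1) * (w N - w (N + 1)))
      linarith
  have e : ∑ i ∈ range N, t i * w i = D N + T N * w N := by simp [hD]
  rw [e]
  have h3 : |T N * w N| ≤ C * w N := by
    rw [abs_mul, abs_of_nonneg (hw0 N)]
    exact mul_le_mul_of_nonneg_right (hC _) (hw0 N)
  have := abs_add_le (D N) (T N * w N)
  have := hDb N
  linarith

lemma mertens_lower {n : ℕ} (hn : 1 ≤ n) : Real.log n - 1 ≤ ∑ e ∈ Ioc 0 n, Λ e / e := by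
  have hn' : (1 : ℝ) ≤ n := by exact_mod_cast hn
  have h1 := sum_Ioc_mul_zeta_eq_sum Λ n
  rw [vonMangoldt_mul_zeta] at h1
  have h2 := (logfac_bd1 n hn).1
  simp only [log_apply] at h1
  rw [h1] at h2
  have h3 : ∑ e ∈ Ioc 0 n, Λ e * ((n / e : ℕ) : ℝ) ≤ n * ∑ e ∈ Ioc 0 n, Λ e / e := by
    rw [Finset.mul_sum]
    refine Finset.sum_le_sum fun e he => ?_
    have := (fl he).2.1
    have h0 : 0 ≤ Λ e := vonMangoldt_nonneg
    calc Λ e * ((n / e : ℕ) : ℝ) ≤ Λ e * ((n : ℝ) / e) := mul_le_mul_of_nonneg_left this h0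
      _ = _ := by ring
  have h4 : (n : ℝ) * (Real.log n - 1) ≤ n * ∑ e ∈ Ioc 0 n, Λ e / e := by linarith
  exact le_of_mul_le_mul_left h4 (by linarith)

lemma nonprime_bd : ∃ K : ℝ, 0 ≤ K ∧ ∀ n : ℕ, ∑ e ∈ Ioc 0 n, (if e.Prime then 0 else Λ e) / (e : ℝ) ≤ K := by
  have h := ArithmeticFunction.vonMangoldt.summable_residueClass_non_primes_div (q := 1) 0
  have e : ∀ n : ℕ, vonMangoldt.residueClass (0 : ZMod 1) n = Λ n := by
    intro n
    simp [vonMangoldt.residueClass, Set.indicator_apply, Subsingleton.elim (n : ZMod 1) 0]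
  simp only [e] at h
  have h0 : ∀ n : ℕ, 0 ≤ (if n.Prime then 0 else Λ n) / (n : ℝ) := by
    intro n
    refine div_nonneg ?_ (by positivity)
    split_ifs
    · exact le_rfl
    · exact vonMangoldt_nonneg
  exact ⟨_, tsum_nonneg h0, fun n => h.sum_le_tsum _ fun i _ => h0 i⟩

/-- the convergent prime series as a series over the naturals -/
noncomputable def tt (φ : ArithmeticFunction ℝ) (c : ℝ) (n : ℕ) : ℝ :=
  if n.Prime then (c - φ n) / n else 0

lemma M_lower {φ : ArithmeticFunction ℝ} (h : CMpm φ) {c l : ℝ} (hc : 0 < c) (hc1 : c ≤ 1)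
    (hl : Filter.Tendsto (fun N => ∑ i ∈ range N, tt φ c i) Filter.atTop (nhds l)) :
    ∃ K, 0 ≤ K ∧ ∀ n : ℕ, 1 ≤ n → c / 2 * Real.log n - K ≤ ∑ e ∈ Ioc 0 n, (pmul φ Λ) e / e := by
  have hmono : Monotone (fun n : ℕ => Real.log n) := by
    intro a b hab
    rcases Nat.eq_zero_or_pos a with rfl | ha
    · simpa using Real.log_natCast_nonneg b
    · exact Real.log_le_log (by exact_mod_cast ha) (by exact_mod_cast hab)
  obtain ⟨K1, hK1, h1⟩ := kron (fun N => rfl) hl hmono (fun n => Real.log_natCast_nonneg n)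
    (show 0 < c / 2 by linarith)
  obtain ⟨K2, hK2, h2⟩ := nonprime_bd
  refine ⟨K1 + 2 * K2 + c + c / 2, by positivity, fun n hn => ?_⟩
  have hn' : (1 : ℝ) ≤ n := by exact_mod_cast hn
  have h3 := mertens_lower hn
  have h1' := (abs_le.1 (h1 (n + 1))).2
  have e : ∑ i ∈ range (n + 1), tt φ c i * Real.log i = ∑ i ∈ Ioc 0 n, tt φ c i * Real.log i := by
    rw [Finset.range_eq_Ico, Finset.sum_eq_sum_Ico_succ_bot (by omega)]
    simp [tt]
    rfl
  rw [e] at h1'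
  have hlog : Real.log ((n + 1 : ℕ) : ℝ) ≤ Real.log n + 1 := by
    have := Real.log_le_sub_one_of_pos (show (0 : ℝ) < (n + 1) / n by positivity)
    rw [Real.log_div (by linarith) (by linarith)] at this
    have e : ((n : ℝ) + 1) / n - 1 = 1 / n := by field_simp; ring
    have e2 : 1 / (n : ℝ) ≤ 1 := by rw [div_le_one (by linarith)]; exact hn'
    push_cast
    linarith
  have main : ∑ e ∈ Ioc 0 n, (c * (Λ e / e) - tt φ c e * Real.log e - 2 * ((if e.Prime then 0 else Λ e) / (e : ℝ)))
      ≤ ∑ e ∈ Ioc 0 n, (pmul φ Λ) e / e := by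
    refine Finset.sum_le_sum fun e he => ?_
    simp only [tt, pmul_apply]
    by_cases hp : e.Prime
    · simp only [hp, if_true]
      rw [vonMangoldt_apply_prime hp]
      apply le_of_eq
      ring
    · simp only [hp, if_false]
      have h0 : 0 ≤ Λ e / e := div_nonneg vonMangoldt_nonneg (by positivity)
      have := abs_le.1 (phi_bd h e)
      rw [mul_div_assoc]
      nlinarith
  rw [Finset.sum_sub_distrib, Finset.sum_sub_distrib, ← Finset.mul_sum, ← Finset.mul_sum] at main
  have := h2 n
  nlinarith

/-- real Dirichlet series -/
noncomputable def DS (a : ArithmeticFunction ℝ) (σ : ℝ) : ℝ := ∑' n : ℕ, a n * (n : ℝ) ^ (-σ)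

lemma zeta_CM : CMpm (ζ : ArithmeticFunction ℝ) := by
  refine ⟨by simp, fun a b => ?_, fun n hn => ?_⟩
  · by_cases ha : a = 0 <;> by_cases hb : b = 0 <;> simp [natCoe_apply, zeta_apply, ha, hb]
  · left
    simp [natCoe_apply, zeta_apply, show n ≠ 0 by omega]

lemma DS_summable_norm {φ : ArithmeticFunction ℝ} (h : CMpm φ) {σ : ℝ} (hσ : 1 < σ) :
    Summable (fun n : ℕ => ‖φ n * (n : ℝ) ^ (-σ)‖) := by
  refine Summable.of_nonneg_of_le (fun _ => norm_nonneg _) (fun n => ?_)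
    (Real.summable_nat_rpow.2 (show -σ < -1 by linarith))
  rw [norm_mul, Real.norm_eq_abs, Real.norm_eq_abs, abs_of_nonneg (Real.rpow_nonneg (Nat.cast_nonneg n) _)]
  have := Real.rpow_nonneg (Nat.cast_nonneg (α := ℝ) n) (-σ)
  nlinarith [phi_bd h n]

lemma term_eq (a : ArithmeticFunction ℝ) (σ : ℝ) (n : ℕ) :
    LSeries.term (fun n => (a n : ℂ)) σ n = ((a n * (n : ℝ) ^ (-σ) : ℝ) : ℂ) := by
  rcases eq_or_ne n 0 with rfl | hn
  · simp
  · rw [LSeries.term_of_ne_zero hn]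
    push_cast
    rw [Complex.ofReal_cpow (Nat.cast_nonneg n)]
    push_cast
    rw [Complex.cpow_neg, div_eq_mul_inv]

lemma DS_mul {a b : ArithmeticFunction ℝ} {σ : ℝ} (ha : Summable (fun n : ℕ => a n * (n : ℝ) ^ (-σ)))
    (hb : Summable (fun n : ℕ => b n * (n : ℝ) ^ (-σ))) :
    HasSum (fun n : ℕ => (a * b) n * (n : ℝ) ^ (-σ)) (DS a σ * DS b σ) := by
  have key : ∀ {a : ArithmeticFunction ℝ} {x : ℝ}, LSeriesHasSum (fun n => (a n : ℂ)) σ x ↔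
      HasSum (fun n : ℕ => a n * (n : ℝ) ^ (-σ)) x := by
    intro a x
    rw [LSeriesHasSum, ← Complex.hasSum_ofReal]
    exact iff_of_eq (congrArg (fun F => HasSum F (x : ℂ)) (funext fun n => term_eq a σ n))
  have h1 := LSeriesHasSum.convolution (key.2 ha.hasSum) (key.2 hb.hasSum)
  rw [← key]
  have e : (LSeries.convolution (fun n => (a n : ℂ)) (fun n => (b n : ℂ))) = fun n => (((a * b) n : ℝ) : ℂ) := by
    rw [LSeries.convolution_def]
    ext n
    rw [ArithmeticFunction.mul_apply]
    push_cast
    rfl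
  rw [e] at h1
  rw [DS, DS]
  push_cast at h1 ⊢
  exact h1

lemma euler {φ : ArithmeticFunction ℝ} (h : CMpm φ) {σ : ℝ} (hσ : 1 < σ) :
    Filter.Tendsto (fun n : ℕ => ∏ p ∈ n.primesBelow, (1 - φ p * (p : ℝ) ^ (-σ))⁻¹) Filter.atTop
      (nhds (DS φ σ)) := by
  let F : ℕ →*₀ ℝ :=
    { toFun := fun n => φ n * (n : ℝ) ^ (-σ)
      map_zero' := by simp
      map_one' := by simp [h.1]
      map_mul' := fun a b => by
        rw [h.2.1]
        push_cast
        rw [Real.mul_rpow (by positivity) (by positivity)]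
        ring }
  exact EulerProduct.eulerProduct_completely_multiplicative (f := F) (DS_summable_norm h hσ)

lemma q_bd {p : ℕ} (hp : p.Prime) {σ : ℝ} (hσ : 1 < σ) :
    0 < (p : ℝ) ^ (-σ) ∧ (p : ℝ) ^ (-σ) < 1 := by
  have : (1 : ℝ) < p := by exact_mod_cast hp.one_lt
  exact ⟨by positivity, Real.rpow_lt_one_of_one_lt_of_neg this (by linarith)⟩

lemma fac_pos {φ : ArithmeticFunction ℝ} (h : CMpm φ) {p : ℕ} (hp : p.Prime) {σ : ℝ} (hσ : 1 < σ) :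
    0 < 1 - φ p * (p : ℝ) ^ (-σ) := by
  have := q_bd hp hσ
  have := abs_le.1 (phi_bd h p)
  nlinarith

lemma ratio {φ : ArithmeticFunction ℝ} (h : CMpm φ) {σ τ : ℝ} (hσ : 1 < σ) (hτ : σ ≤ τ) :
    DS φ σ * DS (ζ : ArithmeticFunction ℝ) τ ≤ DS φ τ * DS (ζ : ArithmeticFunction ℝ) σ := by
  have hτ1 : 1 < τ := by linarith
  refine le_of_tendsto_of_tendsto ((euler h hσ).mul (euler zeta_CM hτ1))
    ((euler h hτ1).mul (euler zeta_CM hσ)) (Filter.Eventually.of_forall fun n => ?_)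
  simp only
  rw [← Finset.prod_mul_distrib, ← Finset.prod_mul_distrib]
  refine Finset.prod_le_prod (fun p hp => ?_) (fun p hp => ?_)
  · have hp := Nat.prime_of_mem_primesBelow hp
    have := fac_pos h hp hσ
    have := fac_pos zeta_CM hp hτ1
    positivity
  · have hp := Nat.prime_of_mem_primesBelow hp
    have a1 := fac_pos h hp hσ
    have a2 := fac_pos zeta_CM hp hτ1
    have a3 := fac_pos h hp hτ1
    have a4 := fac_pos zeta_CM hp hσ
    rw [← mul_inv, ← mul_inv]
    refine inv_anti₀ (by positivity) ?_
    have z : (ζ : ArithmeticFunction ℝ) p = 1 := by simp [natCoe_apply, zeta_apply, hp.ne_zero]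
    rw [z]
    have : (p : ℝ) ^ (-τ) ≤ (p : ℝ) ^ (-σ) :=
      Real.rpow_le_rpow_of_exponent_le (by exact_mod_cast hp.one_lt.le) (by linarith)
    rcases h.2.2 p hp.one_lt.le with e | e <;> rw [e] <;> nlinarith

lemma F_lower {φ : ArithmeticFunction ℝ} (h : CMpm φ) {c l : ℝ} (hc : 0 < c)
    (hl : Filter.Tendsto (fun N => ∑ i ∈ range N, tt φ c i) Filter.atTop (nhds l)) :
    ∃ K, ∀ σ : ℝ, 1 < σ → ∀ N : ℕ, Real.exp (c * ∑ p ∈ N.primesBelow, (p : ℝ) ^ (-σ) - K) ≤ DS φ σ := by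
  obtain ⟨C, hC⟩ := (Metric.isBounded_range_of_tendsto _ hl).exists_norm_le
  have hC' : ∀ N, |∑ i ∈ range N, tt φ c i| ≤ C := fun N => hC _ ⟨N, rfl⟩
  refine ⟨C, fun σ hσ N => ge_of_tendsto (euler h hσ) ?_⟩
  filter_upwards [Filter.eventually_ge_atTop N] with n hn
  have h1 : Real.exp (∑ p ∈ n.primesBelow, φ p * (p : ℝ) ^ (-σ)) ≤
      ∏ p ∈ n.primesBelow, (1 - φ p * (p : ℝ) ^ (-σ))⁻¹ := by
    rw [Real.exp_sum]
    refine Finset.prod_le_prod (fun _ _ => (Real.exp_pos _).le) fun p hp => ?_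
    have hp := Nat.prime_of_mem_primesBelow hp
    have a1 := fac_pos h hp hσ
    rw [le_inv_comm₀ (Real.exp_pos _) a1, ← Real.exp_neg]
    have := Real.add_one_le_exp (-(φ p * (p : ℝ) ^ (-σ)))
    linarith
  refine le_trans (Real.exp_le_exp.2 ?_) h1
  let w : ℕ → ℝ := fun i => if i = 0 then 1 else (i : ℝ) ^ (-(σ - 1))
  have hw : Antitone w := by
    refine antitone_nat_of_succ_le fun i => ?_
    rcases Nat.eq_zero_or_pos i with rfl | hi
    · simp [w]
    · simp only [w, show i ≠ 0 by omega, show i + 1 ≠ 0 by omega, if_false]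
      have hi' : (0 : ℝ) < i := by exact_mod_cast hi
      exact Real.rpow_le_rpow_of_nonpos hi' (by push_cast; linarith) (by linarith)
  have hw0 : ∀ i, 0 ≤ w i := by
    intro i; simp only [w]; split_ifs
    · exact zero_le_one
    · positivity
  have h2 := (abs_le.1 (abel_bd (t := tt φ c) (fun N => rfl) hC' hw hw0 n)).2
  have h3 : ∑ i ∈ range n, tt φ c i * w i = c * ∑ p ∈ n.primesBelow, (p : ℝ) ^ (-σ)
      - ∑ p ∈ n.primesBelow, φ p * (p : ℝ) ^ (-σ) := by
    rw [Finset.mul_sum, ← Finset.sum_sub_distrib, Nat.primesBelow, Finset.sum_filter]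
    refine Finset.sum_congr rfl fun p _ => ?_
    by_cases hp : p.Prime
    · simp only [tt, hp, if_true, w, hp.ne_zero, if_false]
      have hp0 : (0 : ℝ) < p := by exact_mod_cast hp.pos
      have : (p : ℝ) ^ (-σ) = (p : ℝ) ^ (-(σ - 1)) / p := by
        rw [show -σ = -(σ - 1) - 1 by ring, Real.rpow_sub_one hp0.ne']
      rw [this]
      ring
    · simp [tt, hp]
  rw [h3] at h2
  have h4 : ∑ p ∈ N.primesBelow, (p : ℝ) ^ (-σ) ≤ ∑ p ∈ n.primesBelow, (p : ℝ) ^ (-σ) := by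
    refine Finset.sum_le_sum_of_subset_of_nonneg ?_ fun _ _ _ => by positivity
    exact Finset.filter_subset_filter _ (Finset.range_mono hn)
  have h5 : w 0 = 1 := by simp [w]
  rw [h5] at h2
  nlinarith

lemma F_tendsto {φ : ArithmeticFunction ℝ} (h : CMpm φ) {c l : ℝ} (hc : 0 < c)
    (hl : Filter.Tendsto (fun N => ∑ i ∈ range N, tt φ c i) Filter.atTop (nhds l)) :
    Filter.Tendsto (DS φ) (nhdsWithin 1 (Set.Ioi 1)) Filter.atTop := by
  obtain ⟨K, hK⟩ := F_lower h hc hl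
  rw [Filter.tendsto_atTop]
  intro b
  -- choose N with large sum of reciprocals
  have hdiv : Filter.Tendsto (fun N : ℕ => ∑ p ∈ N.primesBelow, (p : ℝ) ^ (-1 : ℝ)) Filter.atTop Filter.atTop := by
    have h1 := not_summable_one_div_on_primes
    have h0 : ∀ n, 0 ≤ Set.indicator {p : ℕ | p.Prime} (fun n : ℕ => (1 : ℝ) / n) n := fun n =>
      Set.indicator_nonneg (fun _ _ => by positivity) n
    rw [not_summable_iff_tendsto_nat_atTop_of_nonneg h0] at h1
    refine h1.congr fun N => ?_
    rw [Nat.primesBelow, Finset.sum_filter]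
    refine Finset.sum_congr rfl fun p _ => ?_
    simp [Set.indicator_apply, Real.rpow_neg_one]
  obtain ⟨N, hN⟩ := (hdiv.eventually_ge_atTop ((|b| + K) / c + 1)).exists
  have hcont : Filter.Tendsto (fun σ : ℝ => ∑ p ∈ N.primesBelow, (p : ℝ) ^ (-σ)) (nhds 1)
      (nhds (∑ p ∈ N.primesBelow, (p : ℝ) ^ (-1 : ℝ))) := by
    refine tendsto_finsetSum _ fun p hp => ?_
    have hp := Nat.prime_of_mem_primesBelow hp
    have hp0 : (p : ℝ) ≠ 0 := by exact_mod_cast hp.ne_zero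
    exact ((Real.continuousAt_const_rpow hp0).tendsto).comp (Filter.tendsto_id.neg)
  have ev := hcont.eventually (eventually_ge_nhds (show (|b| + K) / c < ∑ p ∈ N.primesBelow, (p : ℝ) ^ (-1 : ℝ) by linarith))
  filter_upwards [ev.filter_mono nhdsWithin_le_nhds, self_mem_nhdsWithin] with σ hσ hσ1
  refine le_trans ?_ (hK σ hσ1 N)
  rw [div_le_iff₀ hc] at hσ
  have := Real.add_one_le_exp (c * ∑ p ∈ N.primesBelow, (p : ℝ) ^ (-σ) - K)
  have := le_abs_self b
  linarith

lemma Z_tendsto : Filter.Tendsto (fun s : ℝ => (s - 1) * DS (ζ : ArithmeticFunction ℝ) s)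
    (nhdsWithin 1 (Set.Ioi 1)) (nhds 1) := by
  refine tendsto_sub_mul_tsum_nat_rpow.congr' ?_
  filter_upwards [self_mem_nhdsWithin] with s hs
  have hs : (1 : ℝ) < s := hs
  rw [DS]
  congr 2
  ext n
  rcases eq_or_ne n 0 with rfl | hn
  · simp [Real.zero_rpow (show s ≠ 0 by linarith)]
  · simp [natCoe_apply, zeta_apply, hn, Real.rpow_neg]

/-- `L(N) = ∑_{n ≤ N} g(n)/n` -/
noncomputable def LL (φ : ArithmeticFunction ℝ) (N : ℕ) : ℝ :=
  ∑ n ∈ Ioc 0 N, ((ζ : ArithmeticFunction ℝ) * φ) n / n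

lemma LL_nonneg {φ : ArithmeticFunction ℝ} (h : CMpm φ) (N : ℕ) : 0 ≤ LL φ N :=
  Finset.sum_nonneg fun n _ => div_nonneg (g_nonneg h n) (by positivity)

lemma G_hasSum {φ : ArithmeticFunction ℝ} (h : CMpm φ) {σ : ℝ} (hσ : 1 < σ) :
    HasSum (fun n : ℕ => ((ζ : ArithmeticFunction ℝ) * φ) n * (n : ℝ) ^ (-σ))
      (DS (ζ : ArithmeticFunction ℝ) σ * DS φ σ) :=
  DS_mul (DS_summable_norm zeta_CM hσ).of_norm (DS_summable_norm h hσ).of_norm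

lemma rankin_lower {φ : ArithmeticFunction ℝ} (h : CMpm φ) {m : ℕ} {s : ℝ} (hs : 0 < s)
    (hm : 1 ≤ m) (hsm : s * Real.log m = 6) :
    DS (ζ : ArithmeticFunction ℝ) (1 + s) * DS φ (1 + s) ≤
      LL φ m + Real.exp (-3) * (DS (ζ : ArithmeticFunction ℝ) (1 + s / 2) * DS φ (1 + s / 2)) := by
  have hm0 : (0 : ℝ) < m := by exact_mod_cast hm
  have h1 := G_hasSum h (show 1 < 1 + s by linarith)
  have h2 := (G_hasSum h (show 1 < 1 + s / 2 by linarith)).mul_left (Real.exp (-3))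
  set g := (ζ : ArithmeticFunction ℝ) * φ with hg
  have h3 : HasSum (fun n : ℕ => if n ∈ Ioc 0 m then g n / n else 0) (LL φ m) := by
    have := hasSum_sum_of_ne_finset_zero (L := SummationFilter.unconditional ℕ) (f := fun n : ℕ => if n ∈ Ioc 0 m then g n / (n : ℝ) else 0)
      (s := Ioc 0 m) (fun n hn => if_neg hn)
    convert this using 1
    rw [LL]
    exact Finset.sum_congr rfl fun n hn => (if_pos hn).symm
  refine hasSum_le (fun n => ?_) h1 (h3.add h2)
  have hg0 := g_nonneg h n
  rw [← hg] at hg0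
  rcases Nat.eq_zero_or_pos n with rfl | hn
  · simp
  have hn0 : (0 : ℝ) < n := by exact_mod_cast hn
  have hn1 : (1 : ℝ) ≤ n := by exact_mod_cast hn
  by_cases hnm : n ≤ m
  · rw [if_pos (Finset.mem_Ioc.2 ⟨hn, hnm⟩)]
    have : (n : ℝ) ^ (-(1 + s)) ≤ (n : ℝ) ^ (-1 : ℝ) :=
      Real.rpow_le_rpow_of_exponent_le hn1 (by linarith)
    rw [Real.rpow_neg_one] at this
    have a1 := mul_le_mul_of_nonneg_left this hg0
    have a2 : 0 ≤ Real.exp (-3) * (g n * (n : ℝ) ^ (-(1 + s / 2))) := by positivity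
    rw [div_eq_mul_inv]
    linarith
  · rw [if_neg (fun hh => hnm (Finset.mem_Ioc.1 hh).2), zero_add]
    have e1 : (n : ℝ) ^ (-(1 + s)) = (n : ℝ) ^ (-(1 + s / 2)) * (n : ℝ) ^ (-(s / 2)) := by
      rw [← Real.rpow_add hn0]; congr 1; ring
    have e2 : (n : ℝ) ^ (-(s / 2)) ≤ Real.exp (-3) := by
      calc (n : ℝ) ^ (-(s / 2)) ≤ (m : ℝ) ^ (-(s / 2)) :=
            Real.rpow_le_rpow_of_nonpos hm0 (by exact_mod_cast (not_le.1 hnm).le) (by linarith)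
        _ = Real.exp (-3) := by
            rw [Real.rpow_def_of_pos hm0]; congr 1; linarith
    rw [e1]
    have a2 : 0 ≤ g n * (n : ℝ) ^ (-(1 + s / 2)) := by positivity
    nlinarith

lemma rankin_upper {φ : ArithmeticFunction ℝ} (h : CMpm φ) {m N : ℕ} {s : ℝ} (hs : 0 < s)
    (hm : 1 ≤ m) (hsm : s * Real.log m = 6) (hN : N ≤ m ^ 4) :
    LL φ N ≤ Real.exp 24 * (DS (ζ : ArithmeticFunction ℝ) (1 + s) * DS φ (1 + s)) := by
  have hm0 : (0 : ℝ) < m := by exact_mod_cast hm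
  have h1 := G_hasSum h (show 1 < 1 + s by linarith)
  set g := (ζ : ArithmeticFunction ℝ) * φ with hg
  have h2 := sum_le_hasSum (Ioc 0 N)
    (fun n _ => mul_nonneg (g_nonneg h n) (Real.rpow_nonneg (Nat.cast_nonneg n) _)) h1
  refine le_trans ?_ (mul_le_mul_of_nonneg_left h2 (Real.exp_pos 24).le)
  rw [LL, Finset.mul_sum]
  refine Finset.sum_le_sum fun n hn => ?_
  have hg0 := g_nonneg h n
  rw [← hg] at hg0 ⊢
  obtain ⟨hn, hnN⟩ := Finset.mem_Ioc.1 hn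
  have hn0 : (0 : ℝ) < n := by exact_mod_cast hn
  have e2 : (n : ℝ) ^ s ≤ Real.exp 24 := by
    calc (n : ℝ) ^ s ≤ ((m : ℝ) ^ 4) ^ s :=
          Real.rpow_le_rpow hn0.le (by exact_mod_cast hnN.trans hN) hs.le
      _ = Real.exp 24 := by
          rw [Real.rpow_def_of_pos (by positivity), Real.log_pow]; congr 1; push_cast; linarith
  have e1 : (n : ℝ)⁻¹ = (n : ℝ) ^ (-(1 + s)) * (n : ℝ) ^ s := by
    rw [← Real.rpow_add hn0, ← Real.rpow_neg_one]; congr 1; ring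
  rw [div_eq_mul_inv, e1]
  have a2 : 0 ≤ g n * (n : ℝ) ^ (-(1 + s)) := by positivity
  nlinarith

lemma LL_props {φ : ArithmeticFunction ℝ} (h : CMpm φ) {c l : ℝ} (hc : 0 < c)
    (hl : Filter.Tendsto (fun N => ∑ i ∈ range N, tt φ c i) Filter.atTop (nhds l)) (A : ℝ) :
    ∀ᶠ m : ℕ in Filter.atTop, A * Real.log m ≤ LL φ m ∧
      ∀ N ≤ m ^ 4, LL φ N ≤ 2 * Real.exp 24 * LL φ m := by
  have hlog : Filter.Tendsto (fun m : ℕ => Real.log m) Filter.atTop Filter.atTop :=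
    Real.tendsto_log_atTop.comp tendsto_natCast_atTop_atTop
  have ht : ∀ k : ℝ, 0 < k → Filter.Tendsto (fun m : ℕ => 1 + k / Real.log m) Filter.atTop
      (nhdsWithin 1 (Set.Ioi 1)) := by
    intro k hk
    refine tendsto_nhdsWithin_iff.2 ⟨?_, ?_⟩
    · have := (Filter.Tendsto.const_div_atTop hlog k).const_add 1
      simpa using this
    · filter_upwards [hlog.eventually_gt_atTop 0] with m hm
      have : 0 < k / Real.log m := by positivity
      simp only [Set.mem_Ioi]; linarith
  have z1 := Z_tendsto.eventually (Ioo_mem_nhds (show (0.9 : ℝ) < 1 by norm_num) (show (1 : ℝ) < 1.1 by norm_num))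
  have f1 := (F_tendsto h hc hl).eventually_ge_atTop (|A| * 100 + 1)
  filter_upwards [hlog.eventually_gt_atTop 0, (ht 6 (by norm_num)).eventually z1,
    (ht 3 (by norm_num)).eventually z1, (ht 6 (by norm_num)).eventually f1,
    (ht 3 (by norm_num)).eventually f1, Filter.eventually_ge_atTop 1] with m hm z6 z3 f6 f3 hm1
  set u := Real.log m with hu
  have hs : 0 < 6 / u := by positivity
  have hsm : 6 / u * Real.log m = 6 := by rw [← hu]; field_simp
  have e3 : 1 + 6 / u / 2 = 1 + 3 / u := by ring
  have r1 := rankin_lower h hs hm1 hsm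
  have r3 := ratio h (show 1 < 1 + 3 / u by have : 0 < 3 / u := by positivity
                                            linarith) (show 1 + 3 / u ≤ 1 + 6 / u by gcongr; norm_num)
  have r2 := fun N hN => rankin_upper (N := N) h hs hm1 hsm hN
  rw [e3] at r1
  set Z6 := DS (ζ : ArithmeticFunction ℝ) (1 + 6 / u)
  set Z3 := DS (ζ : ArithmeticFunction ℝ) (1 + 3 / u)
  set F6 := DS φ (1 + 6 / u)
  set F3 := DS φ (1 + 3 / u)
  have A0 := abs_nonneg A
  have F6p : 0 < F6 := by linarith
  have F3p : 0 < F3 := by linarith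
  have z6a : 0.9 * u < 6 * Z6 := by
    have := z6.1
    rw [add_sub_cancel_left, div_mul_eq_mul_div, lt_div_iff₀ hm] at this
    linarith
  have z3b : 3 * Z3 < 1.1 * u := by
    have := z3.2
    rw [add_sub_cancel_left, div_mul_eq_mul_div, div_lt_iff₀ hm] at this
    linarith
  have Z6p : 0 < Z6 := by nlinarith
  have Z36 : Z3 ≤ 3 * Z6 := by linarith
  have F36 : F3 ≤ 3 * F6 := by
    have : F3 * Z6 ≤ (3 * F6) * Z6 := by nlinarith
    exact le_of_mul_le_mul_right this Z6p
  have G36 : Z3 * F3 ≤ 9 * (Z6 * F6) := by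
    calc Z3 * F3 ≤ (3 * Z6) * (3 * F6) := mul_le_mul Z36 F36 F3p.le (by positivity)
      _ = _ := by ring
  have hexp : Real.exp (-3) ≤ 1 / 18 := by
    have h1 : (2.7 : ℝ) ≤ Real.exp 1 := by linarith [Real.exp_one_gt_d9]
    have h2 : Real.exp 3 = Real.exp 1 ^ 3 := by rw [← Real.exp_nat_mul]; norm_num
    have h3 : (18 : ℝ) ≤ Real.exp 3 := by
      rw [h2]
      calc (18 : ℝ) ≤ 2.7 ^ 3 := by norm_num
        _ ≤ _ := by gcongr
    rw [Real.exp_neg, ← one_div]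
    exact one_div_le_one_div_of_le (by norm_num) h3
  have G6p : 0 < Z6 * F6 := by positivity
  have low : Z6 * F6 ≤ 2 * LL φ m := by
    have : Real.exp (-3) * (Z3 * F3) ≤ 1 / 18 * (9 * (Z6 * F6)) :=
      mul_le_mul hexp G36 (by nlinarith) (by norm_num)
    linarith
  constructor
  · have a1 : 0.15 * u * (|A| * 100 + 1) ≤ Z6 * F6 :=
      mul_le_mul (by linarith) f6 (by positivity) Z6p.le
    have a2 : A * u ≤ |A| * u := mul_le_mul_of_nonneg_right (le_abs_self A) hm.le
    have a3 : 0 ≤ |A| * u := by positivity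
    nlinarith
  · intro N hN
    have := r2 N hN
    have := mul_le_mul_of_nonneg_left low (Real.exp_pos 24).le
    linarith

lemma Q_lower {φ : ArithmeticFunction ℝ} (h : CMpm φ) {c l : ℝ} (hc : 0 < c) (hc1 : c ≤ 1)
    (hl : Filter.Tendsto (fun N => ∑ i ∈ range N, tt φ c i) Filter.atTop (nhds l)) (A : ℝ) :
    ∀ᶠ N : ℕ in Filter.atTop, A * Real.log N ^ 2 ≤
      ∑ n ∈ Ioc 0 N, (pmul φ Λ * ((ζ : ArithmeticFunction ℝ) * φ)) n / n := by
  obtain ⟨K, hK, hM⟩ := M_lower h hc hc1 hl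
  have hlog : Filter.Tendsto (fun m : ℕ => Real.log m) Filter.atTop Filter.atTop :=
    Real.tendsto_log_atTop.comp tendsto_natCast_atTop_atTop
  have hsq : Filter.Tendsto Nat.sqrt Filter.atTop Filter.atTop := by
    refine Filter.tendsto_atTop.2 fun b => ?_
    filter_upwards [Filter.eventually_ge_atTop (b * b)] with n hn
    exact Nat.le_sqrt.2 hn
  have P := hsq.eventually (LL_props h hc hl (|A| * 32 / c))
  filter_upwards [P, hlog.eventually_ge_atTop ((K + 1) * (2 * Real.exp 24) * 8 / c),
    Filter.eventually_ge_atTop 4] with N hP hN1 hN4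
  set m := Nat.sqrt N with hm
  set u := Real.log N with hu
  have hm2 : 2 ≤ m := Nat.le_sqrt.2 (by omega)
  have hN0 : (4 : ℝ) ≤ N := by exact_mod_cast hN4
  have hNm : N ≤ m ^ 4 := by
    have h1 : N < (m + 1) * (m + 1) := Nat.lt_succ_sqrt N
    have h2 : m + 1 ≤ m * m := by nlinarith
    calc N ≤ (m + 1) * (m + 1) := h1.le
      _ ≤ (m * m) * (m * m) := Nat.mul_le_mul h2 h2
      _ = m ^ 4 := by ring
  have hmm : m * m ≤ N := Nat.sqrt_le N
  have hmN : m ≤ N := Nat.sqrt_le_self N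
  obtain ⟨p1, p2⟩ := hP
  have p3 := p2 N hNm
  have hm0 : (2 : ℝ) ≤ m := by exact_mod_cast hm2
  have hu4 : u ≤ 4 * Real.log m := by
    have : Real.log N ≤ Real.log ((m : ℝ) ^ 4) := Real.log_le_log (by linarith) (by exact_mod_cast hNm)
    rw [Real.log_pow] at this
    push_cast at this
    exact this
  have hu0 : 0 < u := Real.log_pos (by linarith)
  have hLm := LL_nonneg h m
  rw [mul_comm (pmul φ Λ), conv_div]
  have main : c / 4 * u * LL φ m - (K + 1) * LL φ N ≤
      ∑ d ∈ Ioc 0 N, ((ζ : ArithmeticFunction ℝ) * φ) d / d * ∑ e ∈ Ioc 0 (N / d), (pmul φ Λ) e / e := by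
    have a1 : c / 4 * u * LL φ m ≤ ∑ d ∈ Ioc 0 N, ((ζ : ArithmeticFunction ℝ) * φ) d / d * (c / 2 * Real.log ((N : ℝ) / d)) := by
      rw [LL, Finset.mul_sum]
      refine le_trans (Finset.sum_le_sum (g := fun d : ℕ => ((ζ : ArithmeticFunction ℝ) * φ) d / d * (c / 2 * Real.log ((N : ℝ) / d))) fun d hd => ?_)
        (Finset.sum_le_sum_of_subset_of_nonneg (Finset.Ioc_subset_Ioc_right hmN) fun d hd _ => ?_)
      · obtain ⟨d0, dm⟩ := Finset.mem_Ioc.1 hd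
        have d0' : (0 : ℝ) < d := by exact_mod_cast d0
        have gd : 0 ≤ ((ζ : ArithmeticFunction ℝ) * φ) d / d := div_nonneg (g_nonneg h d) d0'.le
        have : u ≤ 2 * Real.log ((N : ℝ) / d) := by
          have hdd : (d : ℝ) * d ≤ N := by exact_mod_cast (Nat.mul_le_mul dm dm).trans hmm
          have := Real.log_le_log (by positivity) hdd
          rw [Real.log_mul d0'.ne' d0'.ne'] at this
          rw [Real.log_div (by linarith) d0'.ne']
          linarith
        have h2 : c / 4 * u ≤ c / 2 * Real.log ((N : ℝ) / d) := by nlinarith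
        have := mul_le_mul_of_nonneg_left h2 gd
        linarith
      · obtain ⟨d0, dm⟩ := Finset.mem_Ioc.1 hd
        have d0' : (0 : ℝ) < d := by exact_mod_cast d0
        refine mul_nonneg (div_nonneg (g_nonneg h d) d0'.le) (mul_nonneg (by linarith) (Real.log_nonneg ?_))
        rw [le_div_iff₀ d0', one_mul]
        exact_mod_cast dm
    have a2 : ∑ d ∈ Ioc 0 N, (((ζ : ArithmeticFunction ℝ) * φ) d / d * (c / 2 * Real.log ((N : ℝ) / d)) - (K + 1) * (((ζ : ArithmeticFunction ℝ) * φ) d / d)) ≤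
        ∑ d ∈ Ioc 0 N, ((ζ : ArithmeticFunction ℝ) * φ) d / d * ∑ e ∈ Ioc 0 (N / d), (pmul φ Λ) e / e := by
      refine Finset.sum_le_sum fun d hd => ?_
      obtain ⟨k1, k2, k3⟩ := fl hd
      obtain ⟨d0, dm⟩ := Finset.mem_Ioc.1 hd
      have d0' : (0 : ℝ) < d := by exact_mod_cast d0
      have gd : 0 ≤ ((ζ : ArithmeticFunction ℝ) * φ) d / d := div_nonneg (g_nonneg h d) d0'.le
      have M := hM _ k1
      have k1' : (1 : ℝ) ≤ ((N / d : ℕ) : ℝ) := by exact_mod_cast k1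
      have lg : Real.log ((N : ℝ) / d) ≤ Real.log ((N / d : ℕ) : ℝ) + 1 := by
        have h1 : (N : ℝ) / d ≤ 2 * ((N / d : ℕ) : ℝ) := by linarith
        have h2 := Real.log_le_log (by positivity) h1
        rw [Real.log_mul (by norm_num) (by linarith)] at h2
        have := Real.log_two_lt_d9
        linarith
      have : c / 2 * Real.log ((N : ℝ) / d) - (K + 1) ≤ ∑ e ∈ Ioc 0 (N / d), (pmul φ Λ) e / e := by
        nlinarith
      have := mul_le_mul_of_nonneg_left this gd
      linarith
    rw [Finset.sum_sub_distrib, ← Finset.mul_sum] at a2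
    rw [LL] at a1 ⊢
    rw [LL]
    linarith
  refine le_trans ?_ main
  have b1 : (K + 1) * LL φ N ≤ c / 8 * u * LL φ m := by
    have : (K + 1) * (2 * Real.exp 24) ≤ c / 8 * u := by
      rw [div_le_iff₀ hc] at hN1; linarith
    calc (K + 1) * LL φ N ≤ (K + 1) * (2 * Real.exp 24 * LL φ m) := mul_le_mul_of_nonneg_left p3 (by linarith)
      _ = (K + 1) * (2 * Real.exp 24) * LL φ m := by ring
      _ ≤ _ := mul_le_mul_of_nonneg_right this hLm
  have b2 : |A| * 8 * u ≤ c * LL φ m := by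
    have h1 : |A| * 32 / c * (u / 4) ≤ LL φ m := by
      refine le_trans (mul_le_mul_of_nonneg_left ?_ (by positivity)) p1
      linarith
    calc |A| * 8 * u = c * (|A| * 32 / c * (u / 4)) := by field_simp; ring
      _ ≤ _ := mul_le_mul_of_nonneg_left h1 hc.le
  have b3 : A * u ^ 2 ≤ |A| * u ^ 2 := mul_le_mul_of_nonneg_right (le_abs_self A) (sq_nonneg u)
  nlinarith

theorem final {φ : ArithmeticFunction ℝ} (h : CMpm φ) {c l : ℝ} (hc : 0 < c) (hc1 : c ≤ 1)
    (hl : Filter.Tendsto (fun N => ∑ i ∈ range N, tt φ c i) Filter.atTop (nhds l)) :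
    Filter.Tendsto (fun N : ℕ => ∑ n ∈ Ioc 0 N, φ n / n) Filter.atTop Filter.atTop := by
  have hlog : Filter.Tendsto (fun m : ℕ => Real.log m) Filter.atTop Filter.atTop :=
    Real.tendsto_log_atTop.comp tendsto_natCast_atTop_atTop
  refine Filter.tendsto_atTop.2 fun b => ?_
  filter_upwards [Q_lower h hc hc1 hl (5 * |b| + 30), hlog.eventually_ge_atTop 1,
    Filter.eventually_ge_atTop 1] with N hQ hu hN
  have m := main_ineq h hN
  have hN' : (1 : ℝ) ≤ N := by exact_mod_cast hN
  have hS : -1 ≤ ∑ n ∈ Ioc 0 N, φ n / n := by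
    have h1 := g_sum h N
    have h2 : 0 ≤ ∑ n ∈ Ioc 0 N, ((ζ : ArithmeticFunction ℝ) * φ) n :=
      Finset.sum_nonneg fun n _ => g_nonneg h n
    by_contra hh
    push Not at hh
    nlinarith
  set S := ∑ n ∈ Ioc 0 N, φ n / n
  set u := Real.log N
  have hSa : |S| ≤ S + 2 := abs_le.2 ⟨by linarith, by linarith⟩
  have c1 : (u + 1) * |S| ≤ 2 * u ^ 2 * (S + 2) := by
    refine mul_le_mul ?_ hSa (abs_nonneg _) (by positivity)
    nlinarith
  have c2 : u ≤ u ^ 2 := by nlinarith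
  have c3 : u ^ 2 * (4 * (5 * |b| + 30)) ≤ u ^ 2 * (17 * (S + 2) + 32) := by nlinarith
  have c4 := le_of_mul_le_mul_left c3 (by positivity)
  have := le_abs_self b
  have := abs_nonneg b
  linarith

/-- If `f` is completely multiplicative with values in `{-1, 1}`, `c ∈ (0, 1]`, and
`∑_p (c - f p)/p` converges, then `∑_{n ≤ x} f n / n → ∞`. -/
theorem stmt_6 (f : ℕ → ℤ)
    (hf1 : f 1 = 1)
    (hfmul : ∀ a b : ℕ, f (a * b) = f a * f b)
    (hfpm : ∀ n : ℕ, 1 ≤ n → f n = 1 ∨ f n = -1)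
    (c : ℝ) (hc : c ∈ Set.Ioc (0 : ℝ) 1)
    (hconv : ∃ L : ℝ, Filter.Tendsto
      (fun N : ℕ => ∑ p ∈ N.primesBelow, (c - (f p : ℝ)) / p) Filter.atTop (nhds L)) :
    Filter.Tendsto (fun N : ℕ => ∑ n ∈ Finset.Icc 1 N, (f n : ℝ) / n)
      Filter.atTop Filter.atTop := by
  obtain ⟨l, hl⟩ := hconv
  let φ : ArithmeticFunction ℝ := ⟨fun n => if n = 0 then 0 else (f n : ℝ), by simp⟩
  have hφ : ∀ n, n ≠ 0 → φ n = f n := fun n hn => if_neg hn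
  have h : CMpm φ := by
    refine ⟨by rw [hφ 1 (by norm_num), hf1]; simp, fun a b => ?_, fun n hn => ?_⟩
    · rcases eq_or_ne a 0 with rfl | ha
      · simp
      rcases eq_or_ne b 0 with rfl | hb
      · simp
      rw [hφ _ (mul_ne_zero ha hb), hφ _ ha, hφ _ hb, hfmul]
      push_cast
      rfl
    · rw [hφ _ (by omega)]
      rcases hfpm n hn with e | e <;> simp [e]
  have hl' : Filter.Tendsto (fun N => ∑ i ∈ range N, tt φ c i) Filter.atTop (nhds l) := by
    refine hl.congr fun N => ?_
    rw [Nat.primesBelow, Finset.sum_filter]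
    refine Finset.sum_congr rfl fun p _ => ?_
    by_cases hp : p.Prime
    · simp [tt, hp, hφ p hp.ne_zero]
    · simp [tt, hp]
  refine (final h hc.1 hc.2 hl').congr fun N => ?_
  refine Finset.sum_congr rfl fun n hn => ?_
  rw [hφ n (by have := Finset.mem_Ioc.1 hn; omega)]
end
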